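/- For ρ a reduced word whose descent tableau 𝔻(ρ) is an increasing Young tableau, the reduced word lift(ρ) obtained by the canonical lifting algorithm is Yamanouchi. -/

import Mathlib

open List

namespace EG

/-! ## Words, permutations, and reduced words.

A word is a list of positive natural numbers `(ρ_ℓ, …, ρ_1)`, read left to right,
representing the product of simple transpositions `s_{ρ_ℓ} ⋯ s_{ρ_1}`. -/

/-- The permutation of `ℕ` represented by a word. -/
def toPerm (ρ : List ℕ) : Equiv.Perm ℕ :=
  (ρ.map fun i => Equiv.swap i (i + 1)).prod

/-- `ρ` is a reduced word: its letters are positive, and no shorter word represents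
the same permutation. -/
def IsReducedWord (ρ : List ℕ) : Prop :=
  (∀ i ∈ ρ, 1 ≤ i) ∧
    ∀ σ : List ℕ, (∀ i ∈ σ, 1 ≤ i) → toPerm σ = toPerm ρ → ρ.length ≤ σ.length

/-- `ρ` is a reduced word for the permutation `w`. -/
def ReducedWordFor (ρ : List ℕ) (w : Equiv.Perm ℕ) : Prop :=
  IsReducedWord ρ ∧ toPerm ρ = w

/-! ## Elementary Coxeter–Knuth relations. -/

/-- The elementary Coxeter–Knuth move on a consecutive triple
`(a, b, c) = (ρ_{i+1}, ρ_i, ρ_{i−1})`. -/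
def ckTriple (a b c : ℕ) : ℕ × ℕ × ℕ :=
  if a = c then (b, a, b)
  else if (c > a ∧ a > b) ∨ (c < a ∧ a < b) then (a, c, b)
  else if (a > c ∧ c > b) ∨ (a < c ∧ c < b) then (b, a, c)
  else (a, b, c)

/-- The elementary Coxeter–Knuth relation `𝔡_i`, acting on the letters
`ρ_{i+1} ρ_i ρ_{i−1}` of a word `ρ = (ρ_ℓ, …, ρ_1)` (indexed from the right). -/
def ckMove (i : ℕ) (ρ : List ℕ) : List ℕ :=
  if 2 ≤ i ∧ i + 1 ≤ ρ.length then
    let p := ρ.length - i - 1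
    let t := ckTriple (ρ.getD p 0) (ρ.getD (p + 1) 0) (ρ.getD (p + 2) 0)
    ((ρ.set p t.1).set (p + 1) t.2.1).set (p + 2) t.2.2
  else ρ

/-- Two words are Coxeter–Knuth equivalent if one is obtained from the other by a
finite sequence of elementary Coxeter–Knuth relations. -/
def CKEquiv (ρ σ : List ℕ) : Prop :=
  ∃ ms : List ℕ, σ = ms.foldl (fun w i => ckMove i w) ρ

/-! ## Run decompositions and descent tableaux. -/

/-- Split a list into maximal blocks, breaking between consecutive letters `a`, `b`
whenever `brk a b` holds. -/
def splitWhen (brk : ℕ → ℕ → Bool) : List ℕ → List (List ℕ)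
  | [] => []
  | [a] => [[a]]
  | a :: b :: rest =>
    match splitWhen brk (b :: rest) with
    | r :: rs => if brk a b then [a] :: r :: rs else (a :: r) :: rs
    | [] => [[a]]

/-- The run decomposition of a word into maximal strictly increasing runs, listed
left to right (so the list is `[ρ⁽ᵏ⁾, …, ρ⁽¹⁾]`, with `ρ⁽¹⁾` the final run). -/
def runs (ρ : List ℕ) : List (List ℕ) := splitWhen (fun a b => decide (b ≤ a)) ρ

/-- The rows of the descent tableau `𝔻(ρ)`, listed bottom to top:
`[ρ⁽¹⁾, …, ρ⁽ᵏ⁾]`. -/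
def rowsOf (ρ : List ℕ) : List (List ℕ) := (runs ρ).reverse

/-- The row reading word of a tableau whose rows are listed bottom to top:
read rows left to right, starting with the top row. -/
def wordOf (R : List (List ℕ)) : List ℕ := R.reverse.flatten

/-- The descent composition `Des(ρ) = (|ρ⁽¹⁾|, …, |ρ⁽ᵏ⁾|)`. -/
def DesComp (ρ : List ℕ) : List ℕ := (rowsOf ρ).map List.length

/-- A list of rows (bottom to top) is an increasing Young tableau of partition shape:
rows strictly increase left to right, shape is a partition, and columns strictly
increase bottom to top. -/
def IsIncreasingYoungRows (R : List (List ℕ)) : Prop :=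
  (∀ r ∈ R, r.Chain' (· < ·)) ∧
    R.Chain' (fun lo hi => hi.length ≤ lo.length ∧
      ∀ j < hi.length, lo.getD j 0 < hi.getD j 0)

/-! ## The drop map on a pair of increasing rows. -/

/-- Increment the first `n` letters of a list by `1`. -/
def incFirst : ℕ → List ℕ → List ℕ
  | 0, l => l
  | _ + 1, [] => []
  | n + 1, a :: l => (a + 1) :: incFirst n l

/-- Decrement the first `n` letters of a list by `1`. -/
def decFirst : ℕ → List ℕ → List ℕ
  | 0, l => l
  | _ + 1, [] => []
  | n + 1, a :: l => (a - 1) :: decFirst n l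

/-- `bCount t1 i [s_i, s_{i+1}, …]` is the largest `b` with `t1 = s_j + j` for all
`i ≤ j < i + b`. -/
def bCount (t1 : ℕ) : ℕ → List ℕ → ℕ
  | _, [] => 0
  | i, s :: rest => if t1 = s + i then bCount t1 (i + 1) rest + 1 else 0

/-- Index of the first failure `τ_j ≤ σ_j` in the drop alignment of `σ` below `τ`. -/
def failIdx (τ σ : List ℕ) : Option ℕ :=
  (τ.zip σ).findIdx? (fun p => decide (p.1 ≤ p.2))

/-- Fueled computation of the drop of the row `σ` below the row `τ`, returning the
new pair (top row, bottom row). -/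
def dropPairAux : ℕ → List ℕ → List ℕ → List ℕ × List ℕ
  | 0, τ, σ => (τ, σ)
  | fuel + 1, τ, σ =>
    match failIdx τ σ with
    | none =>
      if σ.length < τ.length then (τ.take σ.length, σ ++ τ.drop σ.length)
      else (τ, σ)
    | some j =>
      let x := τ.getD j 0
      let τr := τ.drop (j + 1)
      let σr := σ.drop j
      let res := dropPairAux fuel τr σr
      let l1 := (failIdx τr σr).getD τr.length
      let b := if l1 = 0 then 0
               else if x + 1 = τr.headD 0 then bCount (τr.headD 0) 1 (σr.take l1) else 0
      (τ.take j ++ res.1, σ.take j ++ x :: incFirst b res.2)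

/-- The drop of the row `σ` below the row `τ`: the pair (new top row, new bottom row). -/
def dropPair (τ σ : List ℕ) : List ℕ × List ℕ := dropPairAux (τ.length + 1) τ σ

/-- The word `drop(τσ)`. -/
def dropW (τ σ : List ℕ) : List ℕ := (dropPair τ σ).1 ++ (dropPair τ σ).2

/-- Apply `drop` to rows `i` and `i+1` (1-indexed from the bottom) of a list of rows. -/
def dropAt : ℕ → List (List ℕ) → List (List ℕ)
  | 1, σr :: τr :: rest => (dropPair τr σr).2 :: (dropPair τr σr).1 :: rest
  | n + 2, r :: R => r :: dropAt (n + 1) R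
  | _, R => R

/-- The map `drop_i` on words: replace the runs `ρ⁽ⁱ⁺¹⁾ ρ⁽ⁱ⁾` of the run
decomposition by `drop(ρ⁽ⁱ⁺¹⁾ ρ⁽ⁱ⁾)`. -/
def dropWordAt (i : ℕ) (ρ : List ℕ) : List ℕ := wordOf (dropAt i (rowsOf ρ))

/-- One sweep of all the maps `drop_i`. -/
def sweepDrop (ρ : List ℕ) : List ℕ :=
  (List.range (runs ρ).length).foldl (fun w i => dropWordAt (i + 1) w) ρ

/-- The drop `drop(ρ)` of a word: repeatedly apply the maps `drop_i` until reaching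
the fixed point (an increasing Young tableau). -/
def dropFull (ρ : List ℕ) : List ℕ := sweepDrop^[ρ.length * ρ.length + 1] ρ

/-! ## The lift map on a pair of increasing rows. -/

/-- `bCount2 x i τblk σblk` is the largest `b` with `τ_j = σ_j = x + j` for all
`i ≤ j < i + b`. -/
def bCount2 (x : ℕ) : ℕ → List ℕ → List ℕ → ℕ
  | i, t :: ts, s :: ss =>
      if t = x + i ∧ s = x + i then bCount2 x (i + 1) ts ss + 1 else 0
  | _, _, _ => 0

/-- Index of the first failure (from the right) in the lift alignment of `τ` above
`σ`: here both rows are given reversed. -/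
def liftFailIdx (τR σR : List ℕ) : Option ℕ :=
  (τR.zip σR).findIdx? (fun p => decide (p.1 < p.2))

/-- Fueled computation of the lift of the row `τ` above the row `σ`, on reversed
rows; returns the new (top row, bottom row), reversed. -/
def liftPairAuxR : ℕ → List ℕ → List ℕ → List ℕ × List ℕ
  | 0, τR, σR => (τR, σR)
  | fuel + 1, τR, σR =>
    match liftFailIdx τR σR with
    | none => (τR, σR)
    | some j =>
      let x := σR.getD j 0
      let τr := τR.drop j
      let σr := σR.drop (j + 1)
      let res := liftPairAuxR fuel τr σr
      let τblk := (τR.take j).reverse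
      let σblk := (σR.take j).reverse
      let b := if σblk.headD 0 = x + 1 then bCount2 x 1 τblk σblk else 0
      (τR.take j ++ x :: res.1, (decFirst b σblk).reverse ++ res.2)

/-- Check that the lift alignment leaves no unmatched letters of `σ` (no letter of
`σ` other than the `x_j`'s lacks a letter of `τ` above it); when some letter is
left over, the lift acts trivially. -/
def liftOkAux : ℕ → List ℕ → List ℕ → Bool
  | 0, _, _ => true
  | fuel + 1, τR, σR =>
    match liftFailIdx τR σR with
    | none => σR.length ≤ τR.length
    | some j => liftOkAux fuel (τR.drop j) (σR.drop (j + 1))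

/-- The lift of the row `τ` above the row `σ`: the pair (new top row, new bottom row). -/
def liftPair (τ σ : List ℕ) : List ℕ × List ℕ :=
  if liftOkAux (σ.length + 1) τ.reverse σ.reverse then
    let r := liftPairAuxR (σ.length + 1) τ.reverse σ.reverse
    (r.1.reverse, r.2.reverse)
  else (τ, σ)

/-- The word `lift(τσ)`. -/
def liftW (τ σ : List ℕ) : List ℕ := (liftPair τ σ).1 ++ (liftPair τ σ).2

/-- Apply `lift` to rows `i` and `i+1` (1-indexed from the bottom) of a list of rows. -/
def liftAt : ℕ → List (List ℕ) → List (List ℕ)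
  | 1, σr :: τr :: rest => (liftPair τr σr).2 :: (liftPair τr σr).1 :: rest
  | n + 2, r :: R => r :: liftAt (n + 1) R
  | _, R => R

/-- The lifting sequence `lift_{[i,j]} = lift_j ∘ ⋯ ∘ lift_i`. -/
def liftSeq (i j : ℕ) (T : List (List ℕ)) : List (List ℕ) :=
  (List.range' i (j + 1 - i)).foldl (fun t k => liftAt k t) T

/-- Fueled check that `lift_i, lift_{i+1}, …` all act faithfully, for `n` steps. -/
def faithfulAux : ℕ → ℕ → List (List ℕ) → Bool
  | 0, _, _ => false
  | n + 1, i, T =>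
    let T' := liftAt i T
    if T' = T then false
    else if n = 0 then true
    else faithfulAux n (i + 1) T'

/-- The lifting sequence `lift_{[i,j]}` acts faithfully on `T`. -/
def faithfulSeq (i j : ℕ) (T : List (List ℕ)) : Bool :=
  if i ≤ j then faithfulAux (j + 1 - i) i T else false

/-- Find the canonical move: the maximal `j` admitting some `i ≤ j` with
`lift_{[i,j]}` faithful, together with the minimal such `i`. -/
def findMove (T : List (List ℕ)) : Option (ℕ × ℕ) :=
  (List.range (T.length + 1)).reverse.findSome? (fun j =>
    ((List.range' 1 j).find? (fun i => faithfulSeq i j T)).map (fun i => (i, j)))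

/-- Fueled canonical lifting loop. -/
def liftCanonAux : ℕ → List (List ℕ) → List (List ℕ)
  | 0, T => T
  | fuel + 1, T =>
    match findMove T with
    | none => T
    | some ij => liftCanonAux fuel (liftSeq ij.1 ij.2 T)

/-- The canonical lifting algorithm applied to a tableau (rows bottom to top). -/
def liftCanon (T : List (List ℕ)) : List (List ℕ) :=
  liftCanonAux (T.flatten.length * T.length + 1) T

/-- The word `lift(ρ)`: the row reading word of the canonical lift of `𝔻(ρ)`. -/
def liftWord (ρ : List ℕ) : List ℕ := wordOf (liftCanon (rowsOf ρ))

/-! ## Weak descent compositions. -/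

/-- From the list of minima `[r_k, …, r_1]` of the runs (topmost first), compute
`[r̂_k, …, r̂_1]` where `r̂_k = r_k` and `r̂_i = min (r_i, r̂_{i+1} − 1)`. -/
def hatMins (L : List ℤ) : List ℤ :=
  (L.foldl (fun (acc : List ℤ × Option ℤ) r =>
    let v := match acc.2 with
      | none => r
      | some p => min r (p - 1)
    (acc.1 ++ [v], some v)) ([], none)).1

/-- Build the weak composition with value `lens_i` in position `hs_i` and `0`
elsewhere. -/
def buildWeakComp (hs : List ℤ) (lens : List ℕ) : List ℕ :=
  (List.range (hs.headD 0).toNat).map (fun p =>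
    match (hs.zip lens).find? (fun q => decide (q.1 = (p : ℤ) + 1)) with
    | some q => q.2
    | none => 0)

/-- The weak descent composition determined by the minima and lengths of the runs
(topmost run first); `none` means virtual. -/
def desFromBlocks (mins : List ℤ) (lens : List ℕ) : Option (List ℕ) :=
  let hs := hatMins mins
  if hs = [] then some []
  else if hs.getLastD 0 ≤ 0 then none
  else some (buildWeakComp hs lens)

/-- The weak descent composition `des(ρ)` of a word; `none` means `ρ` is virtual. -/
def desWord (ρ : List ℕ) : Option (List ℕ) :=
  desFromBlocks ((runs ρ).map (fun r => ((r.headD 0 : ℕ) : ℤ)))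
    ((runs ρ).map List.length)

/-- Prefix-sum dominance of weak compositions: `domLe a b` means
`a_1 + ⋯ + a_k ≤ b_1 + ⋯ + b_k` for all `k` (i.e. `b ≥ a`). -/
def domLe (a b : List ℕ) : Prop := ∀ k, ((a.take k).sum ≤ (b.take k).sum)

/-- A reduced word is Yamanouchi if it is non-virtual and its weak descent
composition is dominated by that of every non-virtual Coxeter–Knuth equivalent word. -/
def IsYam (ρ : List ℕ) : Prop :=
  IsReducedWord ρ ∧ ∃ d, desWord ρ = some d ∧
    ∀ σ e, CKEquiv ρ σ → desWord σ = some e → domLe d e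

/-! ## Quasisymmetric functions, slide polynomials, and generating functions.

We model formal power series in variables `x_1, x_2, …` (indexed by `ℕ`, with
variable `i` standing for `x_{i+1}`) as functions `(ℕ →₀ ℕ) → ℤ` recording
coefficients of monomials. -/

/-- `β` refines `α`: `β` splits into consecutive blocks with sums the parts of `α`. -/
def Refines (β α : List ℕ) : Prop :=
  ∃ blocks : List (List ℕ), blocks.flatten = β ∧
    List.Forall₂ (fun blk a => blk.sum = a) blocks α

/-- The flattening of a weak composition given as a finitely supported exponent
vector: the list of its nonzero values, in order. -/
def flatOf (b : ℕ →₀ ℕ) : List ℕ :=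
  ((List.range (b.support.sup id + 1)).map b).filter (fun x => decide (x ≠ 0))

open Classical in
/-- The fundamental quasisymmetric function `F_α`. -/
noncomputable def Fqs (α : List ℕ) : (ℕ →₀ ℕ) → ℤ :=
  fun b => if Refines (flatOf b) α then 1 else 0

open Classical in
/-- The fundamental slide polynomial `𝔉_a` of a weak composition `a`. -/
noncomputable def FSlide (a : List ℕ) : (ℕ →₀ ℕ) → ℤ :=
  fun b =>
    if (∀ i, a.length ≤ i → b i = 0) ∧
       (∀ k, (a.take k).sum ≤ ∑ i ∈ Finset.range k, b i) ∧
       Refines (flatOf b) (a.filter (fun x => decide (x ≠ 0))) then 1 else 0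

/-- `𝔉` extended to virtual indices by `𝔉_∅ = 0`. -/
noncomputable def FSlideO : Option (List ℕ) → (ℕ →₀ ℕ) → ℤ
  | none => 0
  | some a => FSlide a

/-- The Stanley symmetric function `S_w`. -/
noncomputable def StanleySym (w : Equiv.Perm ℕ) : (ℕ →₀ ℕ) → ℤ :=
  ∑ᶠ ρ ∈ {ρ : List ℕ | ReducedWordFor ρ w}, Fqs (DesComp ρ)

/-- The Schubert polynomial `𝔖_w`. -/
noncomputable def Schubert (w : Equiv.Perm ℕ) : (ℕ →₀ ℕ) → ℤ :=
  ∑ᶠ ρ ∈ {ρ : List ℕ | ReducedWordFor ρ w}, FSlideO (desWord ρ)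

/-! ## Standard Young tableaux and Schur functions. -/

/-- The (bottom-to-top) row index of the row of `T` containing the entry `e`. -/
def rowOf (T : List (List ℕ)) (e : ℕ) : ℕ := T.findIdx (fun r => r.contains e)

/-- The column index of the entry `e` in `T`. -/
def colOf (T : List (List ℕ)) (e : ℕ) : ℕ :=
  (T.getD (rowOf T e) []).findIdx (fun z => z == e)

/-- `T` (rows listed bottom to top) is a standard Young tableau. -/
def IsSYT (T : List (List ℕ)) : Prop :=
  (∀ r ∈ T, r.Chain' (· < ·)) ∧
    T.Chain' (fun lo hi => hi.length ≤ lo.length ∧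
      ∀ j < hi.length, lo.getD j 0 < hi.getD j 0) ∧
    [] ∉ T ∧
    T.flatten.Perm (List.range' 1 T.flatten.length)

/-- The descent composition of a standard Young tableau: `i` is a descent when
`i+1` lies weakly left of `i`. -/
def sytDes (T : List (List ℕ)) : List ℕ :=
  (splitWhen (fun a _ => decide (colOf T (a + 1) ≤ colOf T a))
    (List.range' 1 T.flatten.length)).map List.length

/-- The Schur function `s_λ`, for a partition `λ` given as the list of row lengths
bottom to top. -/
noncomputable def Schur (lam : List ℕ) : (ℕ →₀ ℕ) → ℤ :=
  ∑ᶠ T ∈ {T : List (List ℕ) | IsSYT T ∧ T.map List.length = lam}, Fqs (sytDes T)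

/-! ## Standard key tableaux and Demazure characters. -/

/-- `T` is a standard key tableau of shape the weak composition `a`: rows (listed
bottom to top, with row `i` of length `a_i`, possibly `0`) strictly decrease left to
right, the entries are `1, …, |a|`, and whenever an entry `i` lies above an entry
`k` in the same column with `i < k`, some entry `j` right of `k` satisfies `i < j`. -/
def IsSKT (a : List ℕ) (T : List (List ℕ)) : Prop :=
  T.map List.length = a ∧
    (∀ r ∈ T, r.Chain' (· > ·)) ∧
    T.flatten.Perm (List.range' 1 a.sum) ∧
    ∀ lo hi, lo < hi → hi < T.length →
      ∀ c, c < (T.getD hi []).length → c < (T.getD lo []).length →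
        (T.getD hi []).getD c 0 < (T.getD lo []).getD c 0 →
        ∃ c', c < c' ∧ c' < (T.getD lo []).length ∧
          (T.getD hi []).getD c 0 < (T.getD lo []).getD c' 0

/-- The runs of the word `n ⋯ 2 1` determined by the descents of a standard key
tableau `T` (where `i` is a descent when `i+1` lies weakly right of `i`). -/
def sktRuns (T : List (List ℕ)) : List (List ℕ) :=
  splitWhen (fun _ b => decide (colOf T b ≤ colOf T (b + 1)))
    ((List.range' 1 T.flatten.length).reverse)

/-- The minimal row (1-indexed from the bottom) among the cells of the entries of
`r` in `T`. -/
def minRow (T : List (List ℕ)) (r : List ℕ) : ℕ :=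
  ((r.map (fun e => rowOf T e + 1)).min?).getD 0

/-- The weak descent composition `des(T)` of a standard key tableau; `none` means
`T` is virtual. -/
def desSKT (T : List (List ℕ)) : Option (List ℕ) :=
  (desFromBlocks ((sktRuns T).map (fun r => ((minRow T r : ℕ) : ℤ)))
    ((sktRuns T).map List.length)).map
      (fun d => d ++ List.replicate (T.length - d.length) 0)

/-- The Demazure character (key polynomial) `κ_a`. -/
noncomputable def KeyPoly (a : List ℕ) : (ℕ →₀ ℕ) → ℤ :=
  ∑ᶠ T ∈ {T : List (List ℕ) | IsSKT a T}, FSlideO (desSKT T)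

/-- `κ` extended to virtual indices by `κ_∅ = 0`. -/
noncomputable def KeyPolyO : Option (List ℕ) → (ℕ →₀ ℕ) → ℤ
  | none => 0
  | some a => KeyPoly a

/-! ## Edelman–Greene insertion and weak insertion. -/

/-- Edelman–Greene insertion of `x` into a single row: either append `x`, or bump
the smallest entry exceeding `x` (suppressing the replacement when that entry is
`x+1` and `x` already occurs in the row). -/
def eginsRow (x : ℕ) (row : List ℕ) : List ℕ × Option ℕ :=
  match row.findIdx? (fun z => decide (x < z)) with
  | none => (row ++ [x], none)
  | some j =>
    let y := row.getD j 0
    (if y = x + 1 ∧ row.contains x then row else row.set j x, some y)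

/-- Edelman–Greene insertion of `x` into a tableau (rows bottom to top). -/
def egins : ℕ → List (List ℕ) → List (List ℕ)
  | x, [] => [[x]]
  | x, row :: rest =>
    match eginsRow x row with
    | (r, none) => r :: rest
    | (r, some y) => r :: egins y rest

/-- The Edelman–Greene insertion tableau `P(ρ)` of a word. -/
def PEG (ρ : List ℕ) : List (List ℕ) := ρ.foldl (fun P x => egins x P) []

/-- One sweep of all the maps `drop_i` on a tableau (rows bottom to top). -/
def sweepDropT (T : List (List ℕ)) : List (List ℕ) :=
  (List.range T.length).foldl (fun t i => dropAt (i + 1) t) T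

/-- The drop of a tableau: repeatedly drop until reaching the increasing Young
tableau of the class. -/
def dropCanon (T : List (List ℕ)) : List (List ℕ) :=
  sweepDropT^[T.flatten.length * T.length + 1] T

/-- Weak insertion of the letter `x` into a Yamanouchi key tableau `P`:
`lift (drop P ← x)`. -/
def winsert (x : ℕ) (P : List (List ℕ)) : List (List ℕ) :=
  liftCanon (egins x (dropCanon P))

/-- The weak insertion tableau `P̃(ρ)` (rows bottom to top). -/
def Pweak (ρ : List ℕ) : List (List ℕ) := ρ.foldl (fun P x => winsert x P) []

/-- The Yamanouchi word of the Coxeter–Knuth class of `ρ`: the row reading word of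
`P̃(ρ)`. -/
def yamWord (ρ : List ℕ) : List ℕ := wordOf (Pweak ρ)

/-- The shape (weak composition) of the weak insertion tableau of the first `m`
letters of `ρ`. -/
def shapeAt (ρ : List ℕ) (m : ℕ) : List ℕ :=
  (desWord (wordOf (Pweak (ρ.take m)))).getD []

/-- Append the entry `e` at the end of row `j` (0-indexed from the bottom),
extending with empty rows as needed. -/
def placeEntry (Q : List (List ℕ)) (j e : ℕ) : List (List ℕ) :=
  let Q' := Q ++ List.replicate (j + 1 - Q.length) []
  Q'.set j (Q'.getD j [] ++ [e])

/-- The (0-indexed) row in which the shape grows from `aold` to `anew`. -/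
def growRow (aold anew : List ℕ) : ℕ :=
  ((List.range anew.length).find?
    (fun j => decide (aold.getD j 0 ≠ anew.getD j 0))).getD 0

/-- The weak recording tableau `Q̃(ρ)`: entry `i` is placed in the cell where the
shape grows at the step inserting `ρ_i` (entries are placed in decreasing order). -/
def Qweak (ρ : List ℕ) : List (List ℕ) :=
  (List.range ρ.length).foldl (fun Q m =>
    placeEntry Q (growRow (shapeAt ρ m) (shapeAt ρ (m + 1))) (ρ.length - m)) []

/-! ## Elementary weak dual equivalence involutions. -/

/-- Column reading order on entries: by column, and bottom to top within a column. -/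
def colKeyLe (T : List (List ℕ)) (x y : ℕ) : Bool :=
  decide (colOf T x < colOf T y ∨ (colOf T x = colOf T y ∧ rowOf T x ≤ rowOf T y))

/-- Sort three values by a boolean order. -/
def sort3 (le : ℕ → ℕ → Bool) (a b c : ℕ) : ℕ × ℕ × ℕ :=
  if le a b then
    if le b c then (a, b, c) else if le a c then (a, c, b) else (c, a, b)
  else
    if le a c then (b, a, c) else if le b c then (b, c, a) else (c, b, a)

/-- Relabel the entries `x, y, z` of `T` as `x', y', z'` respectively. -/
def relabel3 (T : List (List ℕ)) (x y z x' y' z' : ℕ) : List (List ℕ) :=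
  T.map (List.map (fun t =>
    if t = x then x' else if t = y then y' else if t = z then z' else t))

/-- The elementary weak dual equivalence involution `d̃_i` on standard key tableaux:
with `u, v, w` the cells of `i−1, i, i+1` in column reading order, if `u` and `w`
share a row and `v` does not, cycle the three entries so that `i` shares a row with
`i ± 1`; else if `v` holds `i+1` swap `i−1, i`; else if `v` holds `i−1` swap
`i, i+1`; otherwise fix `T`. -/
def wde (i : ℕ) (T : List (List ℕ)) : List (List ℕ) :=
  let s := sort3 (colKeyLe T) (i - 1) i (i + 1)
  let u := s.1
  let v := s.2.1
  let w := s.2.2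
  if rowOf T u = rowOf T w ∧ rowOf T v ≠ rowOf T u then
    let T1 := relabel3 T u v w w u v
    let T2 := relabel3 T u v w v w u
    if rowOf T1 i = rowOf T1 (i - 1) ∨ rowOf T1 i = rowOf T1 (i + 1) then T1 else T2
  else if v = i + 1 then relabel3 T (i - 1) i (i + 1) i (i - 1) (i + 1)
  else if v = i - 1 then relabel3 T (i - 1) i (i + 1) (i - 1) (i + 1) i
  else T

/-- Remove trailing zero parts of a weak composition (two weak compositions are
identified when they differ only in trailing zeros). -/
def trimZeros (a : List ℕ) : List ℕ :=
  (a.reverse.dropWhile (fun x => x == 0)).reverse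

/-- The transposition `s_i` acting on compositions by interchanging the parts in
positions `i` and `i+1` (1-indexed). -/
def swapParts (i : ℕ) (c : List ℕ) : List ℕ :=
  if 1 ≤ i ∧ i < c.length then
    (c.set (i - 1) (c.getD i 0)).set i (c.getD (i - 1) 0)
  else c

end EG

namespace EG

theorem toPerm_cons (a : ℕ) (w : List ℕ) :
    toPerm (a :: w) = Equiv.swap a (a+1) * toPerm w := by simp [toPerm]
theorem toPerm_append (u v : List ℕ) : toPerm (u ++ v) = toPerm u * toPerm v := by
  simp [toPerm]

theorem swap_comm_far {i j : ℕ} (h : i + 1 < j) :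
    Equiv.swap i (i+1) * Equiv.swap j (j+1) = Equiv.swap j (j+1) * Equiv.swap i (i+1) := by
  ext n
  simp only [Equiv.Perm.mul_apply, Equiv.swap_apply_def]
  split_ifs <;> omega

theorem swap_braid (i : ℕ) :
    Equiv.swap i (i+1) * (Equiv.swap (i+1) (i+1+1) * Equiv.swap i (i+1)) =
    Equiv.swap (i+1) (i+1+1) * (Equiv.swap i (i+1) * Equiv.swap (i+1) (i+1+1)) := by
  ext n
  simp only [Equiv.Perm.mul_apply, Equiv.swap_apply_def]
  split_ifs <;> omega

theorem Red.factor {u b v : List ℕ} (h : IsReducedWord (u ++ b ++ v)) : IsReducedWord b := by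
  obtain ⟨h1, h2⟩ := h
  refine ⟨fun i hi => h1 i (by simp [hi]), fun σ hσ hp => ?_⟩
  have := h2 (u ++ σ ++ v) (by
    intro i hi
    simp only [mem_append] at hi
    rcases hi with (hi | hi) | hi
    · exact h1 i (by simp [hi])
    · exact hσ i hi
    · exact h1 i (by simp [hi])) (by simp [toPerm_append, hp])
  simp at this; omega

theorem Red.left {u v : List ℕ} (h : IsReducedWord (u ++ v)) : IsReducedWord u :=
  Red.factor (u := []) (v := v) (by simpa using h)
theorem Red.right {u v : List ℕ} (h : IsReducedWord (u ++ v)) : IsReducedWord v :=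
  Red.factor (u := u) (v := []) (by simpa using h)
theorem Red.tail {a : ℕ} {v : List ℕ} (h : IsReducedWord (a :: v)) : IsReducedWord v :=
  Red.right (u := [a]) h

theorem Red.of_eq {w w' : List ℕ} (h : IsReducedWord w) (hp : toPerm w' = toPerm w)
    (hl : w'.length = w.length) (hpos : ∀ i ∈ w', 1 ≤ i) : IsReducedWord w' :=
  ⟨hpos, fun σ hσ e => by rw [hl]; exact h.2 σ hσ (e.trans hp)⟩

theorem Red.not_lt {w w' : List ℕ} (h : IsReducedWord w) (hp : toPerm w' = toPerm w)
    (hpos : ∀ i ∈ w', 1 ≤ i) : w.length ≤ w'.length := h.2 _ hpos hp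

theorem Red.not_aa {a : ℕ} (h : IsReducedWord [a, a]) : False := by
  have := h.2 [] (by simp) (by simp [toPerm])
  simp at this

theorem Red.not_bgb {b g : ℕ} (h : IsReducedWord [b, g, b]) : g = b + 1 ∨ b = g + 1 := by
  by_contra hc
  have hne : g ≠ b := by
    rintro rfl
    exact Red.not_aa (Red.left (u := [g,g]) (v := [g]) h)
  have := h.2 [g] (fun i hi => h.1 i (by simp at hi; simp [hi])) (by
    simp only [toPerm, map_cons, prod_cons, map_nil, prod_nil, mul_one]
    rcases lt_or_gt_of_ne hne with hl | hl
    · rw [swap_comm_far (show g + 1 < b by omega)]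
      simp [← mul_assoc]
    · rw [← swap_comm_far (show b + 1 < g by omega)]
      simp [← mul_assoc])
  simp at this

/-- Coxeter–Knuth equivalence as a congruence. -/
inductive K : List ℕ → List ℕ → Prop
  | refl (w) : K w w
  | symm {w w'} : K w w' → K w' w
  | trans {w w' w''} : K w w' → K w' w'' → K w w''
  | r1 (u v : List ℕ) {x y z : ℕ} : x < y → y < z →
      K (u ++ y :: x :: z :: v) (u ++ y :: z :: x :: v)
  | r2 (u v : List ℕ) {x y z : ℕ} : x < y → y < z →
      K (u ++ x :: z :: y :: v) (u ++ z :: x :: y :: v)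
  | r3 (u v : List ℕ) (x : ℕ) :
      K (u ++ x :: (x+1) :: x :: v) (u ++ (x+1) :: x :: (x+1) :: v)

theorem K.append {a b : List ℕ} (h : K a b) (u v : List ℕ) : K (u ++ a ++ v) (u ++ b ++ v) := by
  induction h with
  | refl w => exact K.refl _
  | symm _ ih => exact ih.symm
  | trans _ _ i1 i2 => exact i1.trans i2
  | r1 u' v' h1 h2 => simpa using K.r1 (u ++ u') (v' ++ v) h1 h2
  | r2 u' v' h1 h2 => simpa using K.r2 (u ++ u') (v' ++ v) h1 h2
  | r3 u' v' x => simpa using K.r3 (u ++ u') (v' ++ v) x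

theorem K.left {a b : List ℕ} (h : K a b) (u : List ℕ) : K (u ++ a) (u ++ b) := by
  simpa using h.append u []
theorem K.right {a b : List ℕ} (h : K a b) (v : List ℕ) : K (a ++ v) (b ++ v) := by
  simpa using h.append [] v

theorem K.inv {a b : List ℕ} (h : K a b) : toPerm a = toPerm b ∧ a.length = b.length ∧
    ((∀ i ∈ a, 1 ≤ i) ↔ (∀ i ∈ b, 1 ≤ i)) := by
  induction h with
  | refl w => simp
  | symm _ ih => exact ⟨ih.1.symm, ih.2.1.symm, ih.2.2.symm⟩
  | trans _ _ i1 i2 => exact ⟨i1.1.trans i2.1, i1.2.1.trans i2.2.1, i1.2.2.trans i2.2.2⟩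
  | @r1 u v x y z h1 h2 =>
    refine ⟨?_, by simp, ?_⟩
    · simp only [toPerm_append, toPerm_cons]
      rw [← mul_assoc (Equiv.swap x (x+1)), swap_comm_far (show x + 1 < z by omega), mul_assoc]
    · simp only [mem_append, mem_cons]; constructor <;> intro h i hi <;> exact h i (by tauto)
  | @r2 u v x y z h1 h2 =>
    refine ⟨?_, by simp, ?_⟩
    · simp only [toPerm_append, toPerm_cons]
      rw [← mul_assoc (Equiv.swap x (x+1)), swap_comm_far (show x + 1 < z by omega), mul_assoc]
    · simp only [mem_append, mem_cons]; constructor <;> intro h i hi <;> exact h i (by tauto)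
  | r3 u v x =>
    refine ⟨?_, by simp, ?_⟩
    · simp only [toPerm_append, toPerm_cons]
      have := congrArg (· * toPerm v) (swap_braid x)
      simp only [mul_assoc] at this
      rw [this]
    · simp only [mem_append, mem_cons]; constructor <;> intro h i hi <;> exact h i (by tauto)

theorem K.red {a b : List ℕ} (h : K a b) (ha : IsReducedWord a) : IsReducedWord b :=
  Red.of_eq ha h.inv.1.symm h.inv.2.1.symm (h.inv.2.2.1 ha.1)

theorem ckMove_K (i : ℕ) {ρ : List ℕ} (h : IsReducedWord ρ) : K ρ (ckMove i ρ) := by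
  unfold ckMove
  split_ifs with hi
  · obtain ⟨u, w, hu, hw, rfl⟩ : ∃ u w, u.length = ρ.length - i - 1 ∧ 3 ≤ w.length ∧ ρ = u ++ w :=
      ⟨ρ.take (ρ.length - i - 1), ρ.drop (ρ.length - i - 1), by simp; omega, by simp; omega, by simp⟩
    match w, hw with
    | a :: b :: c :: v, _ =>
      simp only [← hu]
      have e0 : (u ++ a :: b :: c :: v).getD u.length 0 = a := by simp
      have e1 : (u ++ a :: b :: c :: v).getD (u.length+1) 0 = b := by
        rw [List.getD_append_right _ _ _ _ (by omega)]; simp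
      have e2 : (u ++ a :: b :: c :: v).getD (u.length+2) 0 = c := by
        rw [List.getD_append_right _ _ _ _ (by omega)]; simp
      rw [e0, e1, e2]
      have es : ∀ p q r, (((u ++ a :: b :: c :: v).set u.length p).set (u.length+1) q).set (u.length+2) r
          = u ++ p :: q :: r :: v := by
        intro p q r
        simp
      rw [es]
      have hr : IsReducedWord [a,b,c] := Red.factor (u := u) (v := v) (by simpa using h)
      unfold ckTriple
      split_ifs with h1 h2 h3
      · subst h1
        rcases Red.not_bgb hr with rfl | rfl
        · exact K.r3 u v a
        · exact (K.r3 u v b).symm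
      · rcases h2 with ⟨h2, h3⟩ | ⟨h2, h3⟩
        · exact K.r1 u v h3 h2
        · exact (K.r1 u v h2 h3).symm
      · rcases h3 with ⟨h2, h3⟩ | ⟨h2, h3⟩
        · exact (K.r2 u v h3 h2).symm
        · exact (K.r2 u v h2 h3)
      · exact K.refl _
  · exact K.refl _

theorem CKEquiv.toK {ρ σ : List ℕ} (h : IsReducedWord ρ) (hc : CKEquiv ρ σ) : K ρ σ := by
  obtain ⟨ms, rfl⟩ := hc
  induction ms generalizing ρ with
  | nil => exact K.refl _
  | cons m ms ih =>
    have h1 := ckMove_K m h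
    exact h1.trans (ih (h1.red h))

/-- smallest entry of `A` above `x` -/
def nx (A : Finset ℕ) (x : ℕ) : Option ℕ :=
  if h : (A.filter (x < ·)).Nonempty then some ((A.filter (x < ·)).min' h) else none

theorem nx_none {A : Finset ℕ} {x : ℕ} : nx A x = none ↔ ∀ z ∈ A, z ≤ x := by
  unfold nx
  split_ifs with h
  · obtain ⟨z, hz⟩ := h
    simp only [Finset.mem_filter] at hz
    simp only [false_iff]
    intro h; have := h z hz.1; omega
  · simp only [true_iff]
    intro z hz
    by_contra hc
    exact h ⟨z, by simp only [Finset.mem_filter]; exact ⟨hz, by omega⟩⟩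

theorem nx_some {A : Finset ℕ} {x y : ℕ} :
    nx A x = some y ↔ y ∈ A ∧ x < y ∧ ∀ z ∈ A, x < z → y ≤ z := by
  unfold nx
  split_ifs with h
  · rw [Option.some_inj]
    have h1 := Finset.min'_mem _ h
    simp only [Finset.mem_filter] at h1
    constructor
    · rintro rfl
      exact ⟨h1.1, h1.2, fun z hz hl => Finset.min'_le _ _ (by simp [hz, hl])⟩
    · rintro ⟨a, b, c⟩
      refine le_antisymm (Finset.min'_le _ _ (by simp [a, b])) (c _ h1.1 h1.2)
  · simp only [false_iff]
    rintro ⟨a, b, c⟩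
    exact h ⟨y, by simp [a, b]⟩

/-- new column after inserting `x` in column `A` -/
def col (A : Finset ℕ) (x : ℕ) : Finset ℕ :=
  if x ∈ A then A else
    match nx A x with
    | none => insert x A
    | some y => insert x (A.erase y)

theorem col_mem {A : Finset ℕ} {x : ℕ} (h : x ∈ A) : col A x = A := by simp [col, h]
theorem col_none {A : Finset ℕ} {x : ℕ} (h : x ∉ A) (h2 : nx A x = none) :
    col A x = insert x A := by simp [col, h, h2]
theorem col_some {A : Finset ℕ} {x y : ℕ} (h : x ∉ A) (h2 : nx A x = some y) :
    col A x = insert x (A.erase y) := by simp [col, h, h2]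

theorem mem_col {A : Finset ℕ} {x z : ℕ} :
    z ∈ col A x ↔ z = x ∨ (z ∈ A ∧ (x ∈ A ∨ nx A x ≠ some z)) := by
  by_cases h : x ∈ A
  · rw [col_mem h]
    constructor
    · intro hz; right; exact ⟨hz, Or.inl h⟩
    · rintro (rfl | h1)
      · exact h
      · exact h1.1
  · rcases h2 : nx A x with _ | y
    · rw [col_none h h2]; simp
    · rw [col_some h h2]; simp [h]
      constructor
      · rintro (h | h)
        · simp [h]
        · right; exact ⟨h.2, fun e => h.1 e.symm⟩
      · rintro (h | h)
        · simp [h]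
        · right; exact ⟨fun e => h.2 e.symm, h.1⟩

/-- column insertion of one letter -/
def ins : ℕ → List (Finset ℕ) → List (Finset ℕ)
  | x, [] => [{x}]
  | x, A :: R => col A x :: match nx A x with
    | none => R
    | some y => ins y R

theorem ins_none {A : Finset ℕ} {x : ℕ} {R} (h : nx A x = none) :
    ins x (A :: R) = col A x :: R := by simp [ins, h]
theorem ins_some {A : Finset ℕ} {x y : ℕ} {R} (h : nx A x = some y) :
    ins x (A :: R) = col A x :: ins y R := by simp [ins, h]

/-- insertion of a word, right to left -/
def insW (w : List ℕ) (T : List (Finset ℕ)) : List (Finset ℕ) := w.foldr ins T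
def Pc (w : List ℕ) : List (Finset ℕ) := insW w []

theorem insW_append (u v : List ℕ) (T) : insW (u ++ v) T = insW u (insW v T) := by
  simp [insW]
theorem Pc_append (u v : List ℕ) : Pc (u ++ v) = insW u (Pc v) := insW_append u v []
theorem insW_cons (x : ℕ) (w : List ℕ) (T) : insW (x :: w) T = ins x (insW w T) := rfl

def bumpW : List ℕ → Finset ℕ → Finset ℕ × List ℕ
  | [], A => (A, [])
  | x :: w, A => (col (bumpW w A).1 x, (nx (bumpW w A).1 x).toList ++ (bumpW w A).2)

theorem insW_col (w : List ℕ) (A : Finset ℕ) (R) :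
    insW w (A :: R) = (bumpW w A).1 :: insW (bumpW w A).2 R := by
  induction w with
  | nil => simp [insW, bumpW]
  | cons x w ih =>
    rw [insW_cons, ih, bumpW]
    rcases h : nx (bumpW w A).1 x with _ | y
    · rw [ins_none h]; simp
    · rw [ins_some h]; simp [insW_cons]

theorem insW_nil (w : List ℕ) (hw : w ≠ []) :
    insW w [] = (bumpW w ∅).1 :: insW (bumpW w ∅).2 [] := by
  induction w with
  | nil => exact absurd rfl hw
  | cons x w ih =>
    by_cases h0 : w = []
    · subst h0
      have h : nx ∅ x = none := nx_none.2 (by simp)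
      simp [insW, bumpW, h, ins, col]
    rw [insW_cons, ih h0, bumpW]
    rcases h : nx (bumpW w ∅).1 x with _ | y
    · rw [ins_none h]; simp
    · rw [ins_some h]; simp [insW_cons]

/-! column word -/
def cdesc (A : Finset ℕ) : List ℕ := A.sort (· ≥ ·)
def cw (T : List (Finset ℕ)) : List ℕ := (T.map cdesc).flatten

theorem cdesc_empty : cdesc ∅ = [] := by simp [cdesc]
theorem cdesc_insert {A : Finset ℕ} {m : ℕ} (h : ∀ z ∈ A, z < m) :
    cdesc (insert m A) = m :: cdesc A := by
  unfold cdesc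
  exact Finset.sort_insert _ (fun b hb => (h b hb).le) (fun hm => lt_irrefl _ (h m hm))
theorem mem_cdesc {A : Finset ℕ} {z : ℕ} : z ∈ cdesc A ↔ z ∈ A := by simp [cdesc]

theorem toPerm_pass {m : ℕ} {l : List ℕ} (h : ∀ a ∈ l, a + 1 < m) :
    toPerm (m :: l) = toPerm (l ++ [m]) := by
  induction l with
  | nil => rfl
  | cons a l ih =>
    have := ih (fun b hb => h b (by simp [hb]))
    rw [toPerm_cons, toPerm_cons, cons_append, toPerm_cons, ← this, toPerm_cons, ← mul_assoc,
      ← swap_comm_far (h a (by simp)), mul_assoc]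

theorem col_step (A : Finset ℕ) : ∀ x : ℕ, IsReducedWord (x :: cdesc A) →
    (x ∈ A → x + 1 ∈ A) ∧ toPerm (x :: cdesc A) = toPerm (cdesc (col A x) ++ (nx A x).toList) ∧
    (x :: cdesc A).length = (cdesc (col A x) ++ (nx A x).toList).length := by
  induction A using Finset.induction_on_max with
  | empty =>
    intro x _
    have h : nx ∅ x = none := nx_none.2 (by simp)
    have := cdesc_insert (A := ∅) (m := x) (by simp)
    rw [col_none (by simp) h, this, h, cdesc_empty]; simp
  | insert m A hm ih =>
    intro x hr
    rw [cdesc_insert hm] at hr ⊢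
    rcases lt_trichotomy x m with hx | rfl | hx
    · rcases h : nx A x with _ | y
      · have hA := nx_none.1 h
        have hn : nx (insert m A) x = some m := by
          rw [nx_some]; refine ⟨by simp, hx, ?_⟩
          intro z hz hl
          rcases Finset.mem_insert.1 hz with rfl | hz
          · rfl
          · have := hA z hz; omega
        rw [hn]
        by_cases hxA : x ∈ A
        · have : A = insert x (A.erase x) := (Finset.insert_erase hxA).symm
          have hlt : ∀ z ∈ A.erase x, z < x := by
            intro z hz
            have := hA z (Finset.mem_of_mem_erase hz)
            have := Finset.ne_of_mem_erase hz
            omega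
          have hc : cdesc A = x :: cdesc (A.erase x) := by
            rw [← cdesc_insert hlt, ← this]
          rw [hc] at hr ⊢
          have : IsReducedWord [x, m, x] := Red.left (u := [x,m,x]) (v := cdesc (A.erase x)) hr
          have hmx : m = x + 1 := by
            rcases Red.not_bgb this with h | h <;> omega
          subst hmx
          refine ⟨by simp, ?_, ?_⟩
          · rw [col_mem (by simp [hxA]), cdesc_insert hm, hc]
            have hp := toPerm_pass (m := x+1) (l := cdesc (A.erase x)) (by
              intro a ha; have := hlt a (mem_cdesc.1 ha); omega)
            simp only [Option.toList_some, cons_append, toPerm_cons x, toPerm_cons (x+1) (x :: _), ← hp]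
            simp only [toPerm_cons]
            have := congrArg (· * toPerm (cdesc (A.erase x))) (swap_braid x)
            simpa only [mul_assoc] using this
          · rw [col_mem (by simp [hxA]), cdesc_insert hm, hc]; simp
        · have hlt : ∀ z ∈ A, z < x := by
            intro z hz
            have := hA z hz
            have : z ≠ x := by rintro rfl; exact hxA hz
            omega
          have hcol : col (insert m A) x = insert x A := by
            rw [col_some (by simp [hxA]; omega) hn, Finset.erase_insert (fun h => lt_irrefl _ (hm m h))]
          rw [hcol, cdesc_insert hlt]
          refine ⟨?_, ?_, by simp⟩
          · intro hx'
            rcases Finset.mem_insert.1 hx' with h | h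
            · omega
            · exact absurd h hxA
          · have hp := toPerm_pass (m := m) (l := cdesc A) (by
              intro a ha; have := hlt a (mem_cdesc.1 ha); omega)
            rw [toPerm_cons, hp]
            simp [toPerm_cons]
      · have hy := nx_some.1 h
        have hym := hm y hy.1
        have hn : nx (insert m A) x = some y := by
          rw [nx_some]; refine ⟨by simp [hy.1], hy.2.1, ?_⟩
          intro z hz hl
          rcases Finset.mem_insert.1 hz with rfl | hz
          · omega
          · exact hy.2.2 z hz hl
        have hp : toPerm (x :: m :: cdesc A) = toPerm (m :: x :: cdesc A) := by
          simp only [toPerm_cons, ← mul_assoc]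
          rw [swap_comm_far (show x + 1 < m by omega)]
        have hr2 : IsReducedWord (m :: x :: cdesc A) :=
          Red.of_eq hr hp.symm (by simp) (by intro i hi; exact hr.1 i (by simp at hi ⊢; tauto))
        have IH := ih x (Red.tail hr2)
        have hcol : col (insert m A) x = insert m (col A x) := by
          ext z
          have hmA : m ∉ A := fun h => lt_irrefl _ (hm m h)
          simp only [mem_col, hn, h, Finset.mem_insert]
          grind
        have hm2 : ∀ z ∈ col A x, z < m := by
          intro z hz
          rw [mem_col] at hz
          rcases hz with rfl | hz
          · exact hx
          · exact hm z hz.1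
        refine ⟨?_, ?_, ?_⟩
        · intro h1
          rcases Finset.mem_insert.1 h1 with h1 | h1
          · omega
          · simp [IH.1 h1]
        · rw [hcol, cdesc_insert hm2, hp, toPerm_cons, IH.2.1, hn, h, cons_append, toPerm_cons]
        · rw [hcol, cdesc_insert hm2, hn]
          have := IH.2.2
          rw [h] at this
          simp at this ⊢; omega
    · exact (Red.not_aa (Red.left (u := [x,x]) (v := cdesc A) hr)).elim
    · have hn : nx (insert m A) x = none := by
        rw [nx_none]; intro z hz
        rcases Finset.mem_insert.1 hz with rfl | hz
        · omega
        · have := hm z hz; omega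
      have hnot : x ∉ insert m A := by
        intro h
        rcases Finset.mem_insert.1 h with h | h
        · omega
        · have := hm x h; omega
      refine ⟨fun h => absurd h hnot, ?_, ?_⟩
      · rw [col_none hnot hn, cdesc_insert (m := x), cdesc_insert hm, hn]
        · simp
        · intro z hz
          rcases Finset.mem_insert.1 hz with rfl | hz
          · omega
          · have := hm z hz; omega
      · rw [col_none hnot hn, cdesc_insert (m := x), cdesc_insert hm, hn]
        · simp
        · intro z hz
          rcases Finset.mem_insert.1 hz with rfl | hz
          · omega
          · have := hm z hz; omega

/-- goodness of inserting a word in a column -/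
def GoodW : List ℕ → Finset ℕ → Prop
  | [], _ => True
  | x :: w, A => (x ∈ (bumpW w A).1 → x + 1 ∈ (bumpW w A).1) ∧ GoodW w A

theorem mem_col_pos {A : Finset ℕ} {x : ℕ} (hx : 1 ≤ x) (hA : ∀ a ∈ A, 1 ≤ a) :
    (∀ a ∈ col A x, 1 ≤ a) ∧ ∀ a ∈ (nx A x).toList, 1 ≤ a := by
  constructor
  · intro a ha
    rw [mem_col] at ha
    rcases ha with rfl | h
    · exact hx
    · exact hA a h.1
  · intro a ha
    rcases h : nx A x with _ | y
    · rw [h] at ha; simp at ha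
    · rw [h] at ha; simp at ha; subst ha; exact hA a (nx_some.1 h).1

theorem bumpW_red (w : List ℕ) (A : Finset ℕ) (v : List ℕ)
    (h : IsReducedWord (w ++ cdesc A ++ v)) :
    GoodW w A ∧ IsReducedWord (cdesc (bumpW w A).1 ++ (bumpW w A).2 ++ v) ∧
    toPerm (w ++ cdesc A ++ v) = toPerm (cdesc (bumpW w A).1 ++ (bumpW w A).2 ++ v) ∧
    (w ++ cdesc A ++ v).length = (cdesc (bumpW w A).1 ++ (bumpW w A).2 ++ v).length := by
  induction w with
  | nil => simpa [GoodW, bumpW] using h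
  | cons x w ih =>
    have IH := ih (Red.tail h)
    set B := (bumpW w A).1 with hB
    set o := (bumpW w A).2 with ho
    have e1 : toPerm (x :: (cdesc B ++ o ++ v)) = toPerm ((x :: w) ++ cdesc A ++ v) := by
      rw [toPerm_cons, ← IH.2.2.1]; simp [toPerm_cons]
    have h2 : IsReducedWord ((x :: cdesc B) ++ (o ++ v)) := by
      refine Red.of_eq h ?_ ?_ ?_
      · rw [← e1]; simp
      · have := IH.2.2.2; simp at this ⊢; omega
      · intro i hi
        have hx : 1 ≤ x := h.1 x (by simp)
        have h3 := IH.2.1.1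
        simp at hi h3
        rcases hi with rfl | hi
        · exact hx
        · exact h3 i (by tauto)
    have h3 := col_step B x (Red.left h2)
    have e2 : toPerm ((x :: cdesc B) ++ (o ++ v)) =
        toPerm (cdesc (col B x) ++ ((nx B x).toList ++ o) ++ v) := by
      rw [toPerm_append, h3.2.1]; simp [toPerm_append, mul_assoc]
    have l2 : ((x :: cdesc B) ++ (o ++ v)).length =
        (cdesc (col B x) ++ ((nx B x).toList ++ o) ++ v).length := by
      have := h3.2.2; simp at this ⊢; omega
    refine ⟨⟨h3.1, IH.1⟩, ?_, ?_, ?_⟩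
    · refine Red.of_eq h2 e2.symm l2.symm ?_
      have hp := mem_col_pos (A := B) (x := x) (h.1 x (by simp))
        (fun a ha => h2.1 a (by simp [mem_cdesc, ha]))
      intro i hi
      simp only [bumpW, mem_append, mem_cdesc, ← hB, ← ho] at hi
      rcases hi with (hi | (hi | hi)) | hi
      · exact hp.1 i hi
      · exact hp.2 i hi
      · exact h2.1 i (by simp [hi])
      · exact h2.1 i (by simp [hi])
    · rw [← e1]
      rw [show x :: (cdesc B ++ o ++ v) = (x :: cdesc B) ++ (o ++ v) by simp, e2]; rfl
    · have := IH.2.2.2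
      simp only [bumpW, ← hB, ← ho]
      rw [← l2]; simp at this ⊢; omega

inductive Tri : List ℕ → List ℕ → Prop
  | r1 {x y z : ℕ} : x < y → y < z → Tri [y, x, z] [y, z, x]
  | r2 {x y z : ℕ} : x < y → y < z → Tri [x, z, y] [z, x, y]
  | r3 (x : ℕ) : Tri [x, x+1, x] [x+1, x, x+1]

def TriE (w w' : List ℕ) : Prop := w = w' ∨ Tri w w' ∨ Tri w' w

theorem TriE.symm {w w' : List ℕ} (h : TriE w w') : TriE w' w := by
  rcases h with h | h | h
  · exact Or.inl h.symm
  · exact Or.inr (Or.inr h)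
  · exact Or.inr (Or.inl h)

theorem bumpW3 (a b c : ℕ) (A : Finset ℕ) : bumpW [a, b, c] A =
    (col (col (col A c) b) a,
     (nx (col (col A c) b) a).toList ++ ((nx (col A c) b).toList ++ (nx A c).toList)) := by
  simp [bumpW]

theorem nx_cases (A : Finset ℕ) (x : ℕ) : (nx A x = none ∧ ∀ z ∈ A, z ≤ x) ∨
    ∃ y, nx A x = some y ∧ y ∈ A ∧ x < y ∧ ∀ z ∈ A, x < z → y ≤ z := by
  rcases h : nx A x with _ | y
  · exact Or.inl ⟨rfl, nx_none.1 h⟩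
  · exact Or.inr ⟨y, rfl, nx_some.1 h⟩

theorem tri_r2 {x y z : ℕ} (hxy : x < y) (hyz : y < z) (A : Finset ℕ)
    (gy : y ∈ A → y + 1 ∈ A) :
    (bumpW [x,z,y] A).1 = (bumpW [z,x,y] A).1 ∧
    TriE (bumpW [x,z,y] A).2 (bumpW [z,x,y] A).2 := by
  simp only [bumpW3]
  have hyB : y ∈ col A y := by simp [mem_col]
  have hB : ∀ r, nx A y = some r → ∀ q, q ∈ col A y → z < q → r < q := by
    intro r hr q hq hzq
    have h1 := nx_some.1 hr
    rw [mem_col] at hq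
    grind
  have hB2 : nx A y = none → ∀ q ∈ col A y, q ≤ y := by
    intro h q hq
    have := nx_none.1 h
    rw [mem_col] at hq
    grind
  have hry : ∀ r, nx A y = some r → y < r := fun r hr => (nx_some.1 hr).2.1
  generalize nx A y = o at *
  generalize col A y = B at *
  obtain ⟨p, hp⟩ : ∃ p, nx B x = some p := by
    rcases nx_cases B x with h | h
    · have := h.2 y hyB; omega
    · exact ⟨h.choose, h.choose_spec.1⟩
  have hp' := nx_some.1 hp
  have hpy : p ≤ y := hp'.2.2 y hyB hxy
  have n1 : nx (col B x) z = nx B z := by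
    rcases nx_cases B z with h | ⟨q, h⟩
    · rw [h.1, nx_none]
      intro t ht
      rw [mem_col] at ht
      grind
    · rw [h.1, nx_some]
      simp only [mem_col]
      grind
  have n2 : nx (col B z) x = some p := by
    rw [nx_some]
    simp only [mem_col]
    rcases nx_cases B z with h | ⟨q, h⟩ <;> grind
  have hz1 : z ∈ col B x ↔ z ∈ B := by
    rw [mem_col, hp]; grind
  have hx1 : x ∈ col B z ↔ x ∈ B := by
    rw [mem_col]
    rcases nx_cases B z with h | ⟨q, h⟩ <;> grind
  rw [n1, n2, hp]
  constructor
  · ext t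
    rw [mem_col, mem_col, n2, hx1, mem_col, mem_col, n1, hz1, hp]
    rcases nx_cases B z with h | ⟨q, h⟩ <;> grind
  · rcases nx_cases B z with h | ⟨q, h⟩
    · left; simp [h.1]
    · rcases o with _ | r
      · have := hB2 rfl q h.2.1; omega
      · right; left
        simp only [h.1, Option.toList_some, cons_append, nil_append]
        exact Tri.r2 (by have := hry r rfl; omega) (hB r rfl q h.2.1 h.2.2.1)

theorem tri_r1 {x y z : ℕ} (hxy : x < y) (hyz : y < z) (A : Finset ℕ)
    (g1 : GoodW [y,x,z] A) (g2 : GoodW [y,z,x] A) :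
    (bumpW [y,x,z] A).1 = (bumpW [y,z,x] A).1 ∧
    TriE (bumpW [y,x,z] A).2 (bumpW [y,z,x] A).2 := by
  simp only [bumpW3]
  simp only [GoodW, bumpW, and_true] at g1 g2
  obtain ⟨gy1, gx1, gz1⟩ := g1
  obtain ⟨gy2, gz2, gx2⟩ := g2
  by_cases hA : ∃ a ∈ A, x < a ∧ a ≤ z
  · obtain ⟨p, hp⟩ : ∃ p, nx A x = some p := by
      obtain ⟨a, ha⟩ := hA
      rcases nx_cases A x with h | h
      · have := h.2 a ha.1; omega
      · exact ⟨h.choose, h.choose_spec.1⟩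
    have hp' := nx_some.1 hp
    have hpz : p ≤ z := by obtain ⟨a, ha⟩ := hA; have := hp'.2.2 a ha.1 ha.2.1; omega
    by_cases hpz2 : p = z
    · subst hpz2
      have hpp : nx A p = some (p+1) := by
        rw [nx_some]; exact ⟨gz1 hp'.1, by omega, by intro t _ h; omega⟩
      have hxA : x ∉ A := by
        intro h
        have := hp'.2.2 (x+1) (gx2 h) (by omega); omega
      have c1 : col A p = A := col_mem hp'.1
      rw [c1] at *
      have c2 : col A x = insert x (A.erase p) := col_some hxA hp
      have hyc : y ∉ A := by intro h; have := hp'.2.2 y h hxy; omega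
      have n1 : nx (col A x) y = some (p+1) := by
        rw [nx_some, c2]; simp only [Finset.mem_insert, Finset.mem_erase]
        have := gz1 hp'.1
        grind
      have n2 : nx (col A x) p = some (p+1) := by
        rw [nx_some, c2]; simp only [Finset.mem_insert, Finset.mem_erase]
        have := gz1 hp'.1
        grind
      have c3 : col (col A x) p = insert p ((col A x).erase (p+1)) := by
        apply col_some _ n2
        rw [c2]; simp; omega
      have n3 : nx (col (col A x) p) y = some p := by
        rw [nx_some, c3]; simp only [Finset.mem_insert, Finset.mem_erase]
        rw [c2]; simp only [Finset.mem_insert, Finset.mem_erase]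
        grind
      rw [n1, n2, n3, hpp, hp]
      constructor
      · ext t
        rw [mem_col (A := col A x) (x := y), mem_col (A := col (col A x) p), n1, n3, c3, c2]
        simp only [Finset.mem_insert, Finset.mem_erase]
        grind
      · right; right
        exact Tri.r3 p
    · have hpz3 : p < z := by omega
      have n1 : nx (col A x) z = nx A z := by
        rcases nx_cases A z with h | ⟨q, h⟩
        · rw [h.1, nx_none]
          intro t ht
          rw [mem_col] at ht
          grind
        · rw [h.1, nx_some]
          simp only [mem_col]
          grind
      have n2 : nx (col A z) x = some p := by
        rw [nx_some]
        simp only [mem_col]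
        rcases nx_cases A z with h | ⟨q, h⟩ <;> grind
      have hz1 : z ∈ col A x ↔ z ∈ A := by
        rw [mem_col, hp]; grind
      have hx1 : x ∈ col A z ↔ x ∈ A := by
        rw [mem_col]
        rcases nx_cases A z with h | ⟨q, h⟩ <;> grind
      have hc : col (col A z) x = col (col A x) z := by
        ext t
        rw [mem_col, mem_col, n2, hx1, mem_col, mem_col, n1, hz1, hp]
        rcases nx_cases A z with h | ⟨q, h⟩ <;> grind
      rw [hc, n1, n2, hp]
      refine ⟨rfl, ?_⟩
      rcases nx_cases A z with h | ⟨q, h⟩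
      · left; simp [h.1]
      · obtain ⟨o, ho, h1, h2⟩ : ∃ o, nx (col (col A x) z) y = some o ∧ p < o ∧ o < q := by
          have hzc : z ∈ col (col A x) z := by rw [mem_col]; simp
          rcases nx_cases (col (col A x) z) y with h' | ⟨o, h'⟩
          · have := h'.2 z hzc; omega
          · refine ⟨o, h'.1, ?_, ?_⟩
            · have h3 := h'.2.1
              rw [hc] at gy1
              simp only [mem_col, n1, h.1, hz1, hp] at h3 gy1
              grind
            · have := h'.2.2.2 z hzc hyz; omega
        rw [ho, h.1]
        right; left
        exact Tri.r1 h1 h2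
  · push Not at hA
    have hxA : x ∉ A := fun h => by have := hA _ (gx2 h) (by omega); omega
    have hyA : y ∉ A := fun h => by have := hA _ h (by omega); omega
    have hzA : z ∉ A := fun h => by have := hA _ h (by omega); omega
    have hzx : nx A z = nx A x := by
      rcases nx_cases A x with h | ⟨q, h⟩
      · rw [h.1, nx_none]; intro t ht; have := h.2 t ht; omega
      · rw [h.1, nx_some]; have := hA q h.2.1 h.2.2.1
        exact ⟨h.2.1, this, fun t ht h4 => h.2.2.2 t ht (by omega)⟩
    have n1 : nx (col A z) x = some z := by
      rw [nx_some]; simp only [mem_col]; grind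
    have n3 : nx (col (col A z) x) y = nx (col A x) z := by
      rcases nx_cases (col A x) z with h | ⟨q, h⟩
      · rw [h.1, nx_none]; intro t ht
        have h2 := h.2 t
        simp only [mem_col, n1, hzx] at ht h2
        grind
      · rw [h.1, nx_some]
        simp only [mem_col, n1, hzx] at h ⊢
        grind
    have n4 : nx (col (col A x) z) y = some z := by
      rw [nx_some]
      have : ∀ t ∈ col A x, t ≤ x ∨ z < t := by
        intro t ht
        rw [mem_col] at ht
        grind
      refine ⟨by simp [mem_col], hyz, ?_⟩
      intro t ht hl
      rw [mem_col] at ht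
      grind
    rw [n1, n3, n4, hzx]
    have hzc : z ∉ col A x := by rw [mem_col]; grind
    have hxc : x ∉ col A z := by rw [mem_col]; grind
    have hyc : y ∉ col A x := by rw [mem_col]; grind
    constructor
    · ext t
      rw [mem_col, n3, mem_col (A := col (col A x) z), n4]
      have e1 : y ∉ col (col A z) x := by
        simp only [mem_col]; grind
      have e2 : y ∉ col (col A x) z := by
        rw [mem_col]; grind
      simp only [e1, e2, false_or, ne_eq]
      rw [mem_col, n1, mem_col (A := col A x) (x := z)]
      simp only [hzc, hxc, false_or]
      rcases nx_cases (col A x) z with h | ⟨q, h⟩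
      · have h2 := h.2 t
        simp only [mem_col, hzx, h.1] at h2 ⊢
        grind
      · have h2 := h.2
        simp only [mem_col, hzx, h.1] at h2 ⊢
        grind
    · rcases nx_cases A x with h | ⟨w, h⟩
      · have : nx (col A x) z = none := by
          rw [nx_none]; intro t ht
          rw [mem_col] at ht
          rcases ht with rfl | ht
          · omega
          · have := h.2 t ht.1; omega
        left; simp [h.1, this]
      · rcases nx_cases (col A x) z with h' | ⟨w2, h'⟩
        · left; simp [h.1, h'.1]
        · right; right
          simp only [h.1, h'.1]
          have h3 := h'.2.1
          rw [mem_col, h.1] at h3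
          apply Tri.r2
          · have := hA w h.2.1 h.2.2.1; exact this
          · grind

theorem tri_r3 (x : ℕ) (A : Finset ℕ)
    (g1 : GoodW [x,x+1,x] A) (g2 : GoodW [x+1,x,x+1] A) :
    (bumpW [x,x+1,x] A).1 = (bumpW [x+1,x,x+1] A).1 ∧
    TriE (bumpW [x,x+1,x] A).2 (bumpW [x+1,x,x+1] A).2 := by
  simp only [bumpW3]
  simp only [GoodW, bumpW, and_true] at g1 g2
  obtain ⟨ga1, gb1, gc1⟩ := g1
  obtain ⟨ga2, gb2, gc2⟩ := g2
  by_cases hx : x ∈ A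
  · have c1 := col_mem hx
    have c2 := col_mem (gc1 hx)
    simp only [c1, c2] at *
    have n1 : nx A x = some (x+1) := by
      rw [nx_some]; exact ⟨gc1 hx, by omega, by intro t _ h; omega⟩
    have n2 : nx A (x+1) = some (x+1+1) := by
      rw [nx_some]; exact ⟨gc2 (gc1 hx), by omega, by intro t _ h; omega⟩
    rw [n1, n2]
    exact ⟨trivial, Or.inr (Or.inl (Tri.r3 (x+1)))⟩
  · by_cases hz : x + 1 ∈ A
    · have hz2 := gc2 hz
      have n1 : nx A x = some (x+1) := by
        rw [nx_some]; exact ⟨hz, by omega, by intro t _ h; omega⟩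
      have n2 : nx A (x+1) = some (x+1+1) := by
        rw [nx_some]; exact ⟨hz2, by omega, by intro t _ h; omega⟩
      have c1 := col_mem hz
      have c2 := col_some hx n1
      rw [c1, c2, n1, n2] at *
      have n3 : nx (insert x (A.erase (x+1))) (x+1) = some (x+1+1) := by
        rw [nx_some]; simp only [Finset.mem_insert, Finset.mem_erase]; grind
      have c3 := col_some (by simp) n3
      rw [n3, c3] at *
      have n4 : nx (insert (x+1) ((insert x (A.erase (x+1))).erase (x+1+1))) x = some (x+1) := by
        rw [nx_some]; simp only [Finset.mem_insert, Finset.mem_erase]; grind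
      rw [n4]
      have c4 : col (insert (x+1) ((insert x (A.erase (x+1))).erase (x+1+1))) x = _ :=
        col_mem (by simp; omega)
      rw [c4]
      exact ⟨rfl, Or.inr (Or.inl (Tri.r3 (x+1)))⟩
    · have hzx : nx A (x+1) = nx A x := by
        rcases nx_cases A x with h | ⟨q, h⟩
        · rw [h.1, nx_none]; intro t ht; have := h.2 t ht; omega
        · rw [h.1, nx_some]
          refine ⟨h.2.1, ?_, fun t ht h4 => h.2.2.2 t ht (by omega)⟩
          by_contra hc
          have : q = x + 1 := by omega
          exact hz (this ▸ h.2.1)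
      have n1 : nx (col A (x+1)) x = some (x+1) := by
        rw [nx_some]; simp only [mem_col]; grind
      have n3 : nx (col (col A (x+1)) x) (x+1) = nx (col A x) (x+1) := by
        rcases nx_cases (col A x) (x+1) with h | ⟨q, h⟩
        · rw [h.1, nx_none]; intro t ht
          have h2 := h.2 t
          simp only [mem_col, n1, hzx] at ht h2
          grind
        · rw [h.1, nx_some]
          simp only [mem_col, n1, hzx] at h ⊢
          grind
      have n4 : nx (col (col A x) (x+1)) x = some (x+1) := by
        rw [nx_some]
        refine ⟨by simp [mem_col], by omega, ?_⟩
        intro t ht hl; omega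
      rw [n1, n3, n4, hzx]
      have hzc : x+1 ∉ col A x := by rw [mem_col]; grind
      have hxc : x ∉ col A (x+1) := by rw [mem_col]; grind
      constructor
      · have e1 : x ∈ col (col A x) (x+1) := by
          rw [mem_col]
          have : x ∈ col A x := by simp [mem_col]
          rcases nx_cases (col A x) (x+1) with h | ⟨q, h⟩
          · simp [h.1, this]
          · simp [h.1, this]; omega
        rw [col_mem e1]
        ext t
        rw [mem_col (A := col (col A (x+1)) x), n3]
        have e2 : x + 1 ∉ col (col A (x+1)) x := by rw [mem_col]; grind
        simp only [e2, false_or, ne_eq]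
        rw [mem_col, mem_col (A := col A (x+1)), n1]
        simp only [hzc, hxc, false_or]
        rcases nx_cases (col A x) (x+1) with h | ⟨q, h⟩
        · have h2 := h.2 t
          simp only [mem_col, hzx, h.1] at h2 ⊢
          grind
        · have h2 := h.2
          simp only [mem_col, hzx, h.1] at h2 ⊢
          grind
      · rcases nx_cases A x with h | ⟨w, h⟩
        · have : nx (col A x) (x+1) = none := by
            rw [nx_none]; intro t ht
            rw [mem_col] at ht
            rcases ht with rfl | ht
            · omega
            · have := h.2 t ht.1; omega
          left; simp [h.1, this]
        · rcases nx_cases (col A x) (x+1) with h' | ⟨w2, h'⟩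
          · left; simp [h.1, h'.1]
          · right; left
            simp only [h.1, h'.1]
            have h3 := h'.2.1
            rw [mem_col, h.1] at h3
            apply Tri.r2
            · grind
            · grind

theorem tri_col {w w' : List ℕ} (h : TriE w w') (A : Finset ℕ)
    (g1 : GoodW w A) (g2 : GoodW w' A) :
    (bumpW w A).1 = (bumpW w' A).1 ∧ TriE (bumpW w A).2 (bumpW w' A).2 := by
  have key : ∀ w w' : List ℕ, Tri w w' → GoodW w A → GoodW w' A →
      (bumpW w A).1 = (bumpW w' A).1 ∧ TriE (bumpW w A).2 (bumpW w' A).2 := by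
    intro w w' h g1 g2
    cases h with
    | r1 a b => exact tri_r1 a b A g1 g2
    | r2 a b => exact tri_r2 a b A (by simpa [GoodW, bumpW] using g1.2.2.1)
    | r3 x => exact tri_r3 x A g1 g2
  rcases h with rfl | h | h
  · exact ⟨rfl, Or.inl rfl⟩
  · exact key _ _ h g1 g2
  · have := key _ _ h g2 g1
    exact ⟨this.1.symm, this.2.symm⟩

theorem bumpW_empty_len (w : List ℕ) (hw : w ≠ []) : (bumpW w ∅).2.length < w.length := by
  induction w with
  | nil => exact absurd rfl hw
  | cons x w ih =>
    by_cases h0 : w = []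
    · subst h0
      have h : nx ∅ x = none := nx_none.2 (by simp)
      simp [bumpW, h]
    · have := ih h0
      simp only [bumpW, length_append, length_cons]
      have : (nx (bumpW w ∅).1 x).toList.length ≤ 1 := by cases nx (bumpW w ∅).1 x <;> simp
      omega

theorem Tri.len {w w' : List ℕ} (h : Tri w w') : w.length = 3 ∧ w'.length = 3 := by
  cases h <;> simp

theorem tri_insW (T : List (Finset ℕ)) : ∀ {w w' : List ℕ}, TriE w w' →
    IsReducedWord (w ++ cw T) → IsReducedWord (w' ++ cw T) → insW w T = insW w' T := by
  induction T with
  | nil =>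
    intro w w' h r1 r2
    rcases h with rfl | h
    · rfl
    have hl : w.length = 3 ∧ w'.length = 3 := by
      rcases h with h | h
      · exact h.len
      · exact h.len.symm
    have hw : w ≠ [] := by rintro rfl; simp at hl
    have hw' : w' ≠ [] := by rintro rfl; simp at hl
    rw [insW_nil w hw, insW_nil w' hw']
    have b1 := bumpW_red w ∅ [] (by simpa [cdesc_empty, cw] using r1)
    have b2 := bumpW_red w' ∅ [] (by simpa [cdesc_empty, cw] using r2)
    have := tri_col (Or.inr h) ∅ b1.1 b2.1
    rw [this.1]
    have l1 := bumpW_empty_len w hw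
    rcases this.2 with e | e | e
    · rw [e]
    · have := e.len; omega
    · have := e.len; omega
  | cons A R ih =>
    intro w w' h r1 r2
    rw [insW_col, insW_col]
    have b1 := bumpW_red w A (cw R) (by simpa [cw] using r1)
    have b2 := bumpW_red w' A (cw R) (by simpa [cw] using r2)
    have := tri_col h A b1.1 b2.1
    rw [this.1]
    congr 1
    refine ih this.2 ?_ ?_
    · exact Red.right (u := cdesc (bumpW w A).1) (by simpa using b1.2.1)
    · exact Red.right (u := cdesc (bumpW w' A).1) (by simpa using b2.2.1)

/-- inserting into a tableau keeps the permutation. -/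
theorem insW_red (T : List (Finset ℕ)) : ∀ (w v : List ℕ), IsReducedWord (w ++ cw T ++ v) →
    IsReducedWord (cw (insW w T) ++ v) ∧ toPerm (w ++ cw T) = toPerm (cw (insW w T)) ∧
    (w ++ cw T).length = (cw (insW w T)).length := by
  induction T with
  | nil =>
    intro w
    generalize hn : w.length = n
    induction n using Nat.strong_induction_on generalizing w with
    | _ n ih =>
      intro v h
      by_cases hw : w = []
      · subst hw
        simpa [insW, cw] using h
      rw [insW_nil w hw]
      have b1 := bumpW_red w ∅ [] (by simpa [cdesc_empty, cw] using Red.left h)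
      have l1 := bumpW_empty_len w hw
      have b2 := ih (bumpW w ∅).2.length (by omega) (bumpW w ∅).2 rfl [] (by simpa [cw] using Red.right (u := cdesc (bumpW w ∅).1) (by simpa using b1.2.1))
      set B := (bumpW w ∅).1
      set o := (bumpW w ∅).2
      have e1 : toPerm (w ++ cw []) = toPerm (cw (B :: insW o [])) := by
        have := b1.2.2.1
        have h2 := b2.2.1
        simp [cdesc_empty, cw, toPerm_append] at this h2 ⊢
        rw [this, h2]
      have l1 : (w ++ cw []).length = (cw (B :: insW o [])).length := by
        have := b1.2.2.2
        have h2 := b2.2.2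
        simp [cdesc_empty, cw] at this h2 ⊢
        omega
      refine ⟨?_, e1, l1⟩
      refine Red.of_eq h ?_ ?_ ?_
      · rw [toPerm_append, toPerm_append, e1]
      · rw [length_append, length_append (as := w ++ _), l1]
      · intro i hi
        have p1 := b1.2.1.1
        have p2 := b2.1.1
        have p3 := h.1
        simp [cw] at hi p1 p2 p3
        rcases hi with hi | hi | hi
        · exact p1 i (Or.inl hi)
        · obtain ⟨a, ha, hi⟩ := hi; exact p2 i a ha hi
        · exact p3 i (Or.inr hi)
  | cons A R ih =>
    intro w v h
    rw [insW_col]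
    have b1 := bumpW_red w A (cw R) (by simpa [cw] using Red.left h)
    have b2 := ih (bumpW w A).2 [] (by rw [append_nil]; exact Red.right (u := cdesc (bumpW w A).1) (by simpa using b1.2.1))
    set B := (bumpW w A).1
    set o := (bumpW w A).2
    have e1 : toPerm (w ++ cw (A :: R)) = toPerm (cw (B :: insW o R)) := by
      have := b1.2.2.1
      have h2 := b2.2.1
      simp [cw, toPerm_append, mul_assoc] at this h2 ⊢
      rw [this, h2]
    have l1 : (w ++ cw (A :: R)).length = (cw (B :: insW o R)).length := by
      have := b1.2.2.2
      have h2 := b2.2.2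
      simp [cw] at this h2 ⊢
      omega
    refine ⟨?_, e1, l1⟩
    refine Red.of_eq h ?_ ?_ ?_
    · rw [toPerm_append, toPerm_append, e1]
    · rw [length_append, length_append (as := w ++ _), l1]
    · intro i hi
      have p1 := b1.2.1.1
      have p2 := b2.1.1
      have p3 := h.1
      simp [cw] at hi p1 p2 p3
      rcases hi with hi | hi | hi
      · exact p1 i (Or.inl hi)
      · obtain ⟨a, ha, hi⟩ := hi; exact p2 i a ha hi
      · exact p3 i (Or.inr (Or.inr (Or.inr hi)))

theorem Pc_red {u v : List ℕ} (h : IsReducedWord (u ++ v)) : IsReducedWord (u ++ cw (Pc v)) := by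
  have h1 := insW_red [] v [] (by simpa [cw] using Red.right h)
  refine Red.of_eq h ?_ ?_ ?_
  · have := h1.2.1
    simp only [cw, map_nil, flatten_nil, append_nil] at this
    rw [toPerm_append, toPerm_append, this]; rfl
  · have := h1.2.2
    simp only [cw, map_nil, flatten_nil, append_nil] at this
    rw [length_append, length_append, this]; rfl
  · intro i hi
    simp only [mem_append] at hi
    rcases hi with hi | hi
    · exact h.1 i (by simp [hi])
    · exact h1.1.1 i (by simp; exact hi)

theorem Pc_K {w w' : List ℕ} (h : K w w') (hr : IsReducedWord w) : Pc w = Pc w' := by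
  have key : ∀ (u v a b : List ℕ), Tri a b → K (u ++ a ++ v) (u ++ b ++ v) →
      IsReducedWord (u ++ a ++ v) → Pc (u ++ a ++ v) = Pc (u ++ b ++ v) := by
    intro u v a b ht hk hr
    have hr2 := hk.red hr
    rw [append_assoc] at *
    rw [append_assoc u b v] at *
    rw [Pc_append, Pc_append, Pc_append u, Pc_append b]
    rw [tri_insW (Pc v) (Or.inr (Or.inl ht)) (Pc_red (Red.right hr)) (Pc_red (Red.right hr2))]
  induction h with
  | refl w => rfl
  | symm h ih => exact (ih (h.symm.red hr)).symm
  | trans h1 h2 i1 i2 => exact (i1 hr).trans (i2 (h1.red hr))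
  | r1 u v a b => simpa using key u v _ _ (Tri.r1 a b) (by simpa using K.r1 u v a b) (by simpa using hr)
  | r2 u v a b => simpa using key u v _ _ (Tri.r2 a b) (by simpa using K.r2 u v a b) (by simpa using hr)
  | r3 u v x => simpa using key u v _ _ (Tri.r3 x) (by simpa using K.r3 u v x) (by simpa using hr)

def cnt (A : Finset ℕ) (k t : ℕ) : ℕ := (A.filter (fun a => k < a ∧ a ≤ t)).card
def cntT (A : Finset ℕ) (k : ℕ) : ℕ := (A.filter (fun a => k < a)).card
def ind (k a t : ℕ) : ℕ := if k < a ∧ a ≤ t then 1 else 0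
def indT (k a : ℕ) : ℕ := if k < a then 1 else 0

theorem cnt_insert {A : Finset ℕ} {x : ℕ} (h : x ∉ A) (k t : ℕ) :
    cnt (insert x A) k t = cnt A k t + ind k x t := by
  unfold cnt ind
  rw [Finset.filter_insert]
  split_ifs with hc
  · rw [Finset.card_insert_of_notMem (by simp [h])]
  · rfl

theorem cntT_insert {A : Finset ℕ} {x : ℕ} (h : x ∉ A) (k : ℕ) :
    cntT (insert x A) k = cntT A k + indT k x := by
  unfold cntT indT
  rw [Finset.filter_insert]
  split_ifs with hc
  · rw [Finset.card_insert_of_notMem (by simp [h])]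
  · rfl

theorem cnt_erase {A : Finset ℕ} {y : ℕ} (h : y ∈ A) (k t : ℕ) :
    cnt (A.erase y) k t + ind k y t = cnt A k t := by
  conv_rhs => rw [← Finset.insert_erase h, cnt_insert (by simp)]

theorem cntT_erase {A : Finset ℕ} {y : ℕ} (h : y ∈ A) (k : ℕ) :
    cntT (A.erase y) k + indT k y = cntT A k := by
  conv_rhs => rw [← Finset.insert_erase h, cntT_insert (by simp)]

theorem cnt_swap {A : Finset ℕ} {x y : ℕ} (hx : x ∉ A) (h : nx A x = some y) (k t : ℕ) :
    cnt (col A x) k t + ind k y t = cnt A k t + ind k x t := by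
  rw [col_some hx h, cnt_insert (by simp [hx]), ← cnt_erase (nx_some.1 h).1 k t]; omega

theorem cntT_swap {A : Finset ℕ} {x y : ℕ} (hx : x ∉ A) (h : nx A x = some y) (k : ℕ) :
    cntT (col A x) k + indT k y = cntT A k + indT k x := by
  rw [col_some hx h, cntT_insert (by simp [hx]), ← cntT_erase (nx_some.1 h).1 k]; omega

theorem cnt_split (A : Finset ℕ) {k s t : ℕ} (h1 : k ≤ s) (h2 : s ≤ t) :
    cnt A k t = cnt A k s + cnt A s t := by
  unfold cnt
  rw [← Finset.card_union_of_disjoint, ← Finset.filter_or]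
  · congr 1; ext a; simp only [Finset.mem_filter]
    constructor
    · rintro ⟨h, h3⟩; exact ⟨h, by omega⟩
    · rintro ⟨h, h3⟩; exact ⟨h, by omega⟩
  · rw [Finset.disjoint_left]; intro a; simp only [Finset.mem_filter]; omega

theorem cntT_split (A : Finset ℕ) {k s : ℕ} (h1 : k ≤ s) :
    cntT A k = cnt A k s + cntT A s := by
  unfold cnt cntT
  rw [← Finset.card_union_of_disjoint, ← Finset.filter_or]
  · congr 1; ext a; simp only [Finset.mem_filter]
    constructor
    · rintro ⟨h, h3⟩; exact ⟨h, by omega⟩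
    · rintro ⟨h, h3⟩; exact ⟨h, by omega⟩
  · rw [Finset.disjoint_left]; intro a; simp only [Finset.mem_filter]; omega

theorem cnt_zero {A : Finset ℕ} {k t : ℕ} (h : ∀ a ∈ A, a ≤ k ∨ t < a) : cnt A k t = 0 := by
  unfold cnt
  rw [Finset.card_eq_zero, Finset.filter_eq_empty_iff]
  intro a ha; have := h a ha; omega

theorem cntT_zero {A : Finset ℕ} {k : ℕ} (h : ∀ a ∈ A, a ≤ k) : cntT A k = 0 := by
  unfold cntT
  rw [Finset.card_eq_zero, Finset.filter_eq_empty_iff]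
  intro a ha; have := h a ha; omega

theorem cnt_pos {A : Finset ℕ} {k t a : ℕ} (ha : a ∈ A) (h1 : k < a) (h2 : a ≤ t) :
    1 ≤ cnt A k t := by
  unfold cnt
  exact Finset.card_pos.2 ⟨a, by simp [ha, h1, h2]⟩

theorem cntT_pos {A : Finset ℕ} {k a : ℕ} (ha : a ∈ A) (h1 : k < a) :
    1 ≤ cntT A k := by
  unfold cntT
  exact Finset.card_pos.2 ⟨a, by simp [ha, h1]⟩

theorem cnt_one (A : Finset ℕ) (k : ℕ) : cnt A k (k+1) ≤ 1 := by
  unfold cnt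
  rw [Finset.card_le_one]
  intro a ha b hb
  simp only [Finset.mem_filter] at ha hb
  omega

theorem cnt_self (A : Finset ℕ) (k : ℕ) : cnt A k k = 0 := cnt_zero (by intro a _; omega)

theorem cnt_gap {A : Finset ℕ} {x y k t : ℕ} (h : nx A x = some y) (h1 : x ≤ k) (h2 : t < y) :
    cnt A k t = 0 := by
  apply cnt_zero
  intro a ha
  have := (nx_some.1 h).2.2 a ha
  omega

/-- the rank function -/
noncomputable def F : ℕ → List (Finset ℕ) → ℕ → ℕ
  | _, [], _ => 0
  | 0, A :: _, k => cntT A k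
  | j + 1, A :: R, k => ⨅ d : ℕ, (cnt A k (k + d) + F j R (k + d + 1))

theorem F_nil (j k : ℕ) : F j [] k = 0 := by cases j <;> simp [F]
theorem F_zero (A : Finset ℕ) (R) (k : ℕ) : F 0 (A :: R) k = cntT A k := by simp [F]

theorem F_le {j : ℕ} {A : Finset ℕ} {R} {k t : ℕ} (h : k ≤ t) :
    F (j+1) (A :: R) k ≤ cnt A k t + F j R (t+1) := by
  obtain ⟨d, rfl⟩ := Nat.exists_eq_add_of_le h
  rw [F]
  exact ciInf_le' (fun d => cnt A k (k + d) + F j R (k + d + 1)) d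

theorem F_ex (j : ℕ) (A : Finset ℕ) (R) (k : ℕ) :
    ∃ t, k ≤ t ∧ F (j+1) (A :: R) k = cnt A k t + F j R (t+1) := by
  rw [F]
  obtain ⟨d, hd⟩ := ciInf_mem (fun d => cnt A k (k + d) + F j R (k + d + 1))
  exact ⟨k + d, by omega, hd.symm⟩

theorem F_anti1 (T : List (Finset ℕ)) : ∀ (j k : ℕ), F j T (k+1) ≤ F j T k := by
  induction T with
  | nil => intro j k; simp [F_nil]
  | cons A R ih =>
    intro j k
    cases j with
    | zero => simp only [F_zero]; rw [cntT_split A (show k ≤ k+1 by omega)]; omega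
    | succ j =>
      obtain ⟨t, ht, e⟩ := F_ex j A R k
      rw [e]
      by_cases h : k + 1 ≤ t
      · refine (F_le h).trans ?_
        rw [cnt_split A (show k ≤ k+1 by omega) h]; omega
      · have : t = k := by omega
        subst this
        refine (F_le (le_refl _)).trans ?_
        have := ih j (t+1)
        rw [cnt_self]; omega

theorem F_anti {T : List (Finset ℕ)} {j k k' : ℕ} (h : k ≤ k') : F j T k' ≤ F j T k :=
  antitone_nat_of_succ_le (f := F j T) (F_anti1 T j) h

theorem F_lip (T : List (Finset ℕ)) (j k : ℕ) : F j T k ≤ F j T (k+1) + 1 := by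
  cases T with
  | nil => simp [F_nil]
  | cons A R =>
    have := cnt_one A k
    cases j with
    | zero => simp only [F_zero]; rw [cntT_split A (show k ≤ k+1 by omega)]; omega
    | succ j =>
      obtain ⟨t, ht, e⟩ := F_ex j A R (k+1)
      rw [e]
      refine (F_le (show k ≤ t by omega)).trans ?_
      rw [cnt_split A (show k ≤ k+1 by omega) ht]; omega

theorem F_large (T : List (Finset ℕ)) : ∃ M, ∀ k, M ≤ k → ∀ j, F j T k = 0 := by
  induction T with
  | nil => exact ⟨0, fun k _ j => F_nil j k⟩
  | cons A R ih =>
    obtain ⟨M, hM⟩ := ih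
    refine ⟨max M (A.sup id), fun k hk j => ?_⟩
    cases j with
    | zero =>
      rw [F_zero]; apply cntT_zero; intro a ha
      have : a ≤ A.sup id := Finset.le_sup (f := id) ha
      omega
    | succ j =>
      have := F_le (j := j) (A := A) (R := R) (le_refl k)
      rw [cnt_self, hM (k+1) (by omega)] at this
      omega

theorem F_le_cntT (A : Finset ℕ) (R) (j k : ℕ) : F j (A :: R) k ≤ cntT A k := by
  cases j with
  | zero => rw [F_zero]
  | succ j =>
    obtain ⟨M, hM⟩ := F_large R
    have := F_le (j := j) (A := A) (R := R) (show k ≤ max k M by omega)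
    rw [hM _ (by omega)] at this
    rw [cntT_split A (show k ≤ max k M by omega)]; omega

theorem F_mono1 (T : List (Finset ℕ)) : ∀ (j k : ℕ), F (j+1) T k ≤ F j T k := by
  induction T with
  | nil => intro j k; simp [F_nil]
  | cons A R ih =>
    intro j k
    cases j with
    | zero => rw [F_zero]; exact F_le_cntT _ _ _ _
    | succ j =>
      obtain ⟨t, ht, e⟩ := F_ex j A R k
      rw [e]
      refine (F_le ht).trans ?_
      have := ih j (t+1)
      omega

theorem F_mono {T : List (Finset ℕ)} {j j' k : ℕ} (h : j ≤ j') : F j' T k ≤ F j T k :=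
  antitone_nat_of_succ_le (f := fun j => F j T k) (fun j => F_mono1 T j k) h

theorem F_short (T : List (Finset ℕ)) : ∀ (j k : ℕ), T.length ≤ j → F j T k = 0 := by
  induction T with
  | nil => intro j k _; exact F_nil j k
  | cons A R ih =>
    intro j k h
    cases j with
    | zero => simp at h
    | succ j =>
      have := F_le (j := j) (A := A) (R := R) (le_refl k)
      rw [cnt_self, ih j _ (by simpa using h)] at this
      omega

theorem F_chain (T : List (Finset ℕ)) : ∀ (j k : ℕ), 1 ≤ F j T k →
    ∃ a : ℕ → ℕ, nx (T.getD 0 ∅) k = some (a 0) ∧ (∀ r ≤ j, a r ∈ T.getD r ∅) ∧ ∀ r < j, a r < a (r+1) := by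
  induction T with
  | nil => intro j k h; rw [F_nil] at h; omega
  | cons A R ih =>
    intro j k h
    have hA := F_le_cntT A R j k
    obtain ⟨m, hm⟩ : ∃ m, nx A k = some m := by
      rcases nx_cases A k with h' | h'
      · rw [cntT_zero h'.2] at hA; omega
      · exact ⟨h'.choose, h'.choose_spec.1⟩
    have hm' := nx_some.1 hm
    cases j with
    | zero =>
      exact ⟨fun _ => m, by simpa using hm, by intro r hr; simp at hr; subst hr; simpa using hm'.1, by simp⟩
    | succ j =>
      have := F_le (j := j) (A := A) (R := R) (show k ≤ m - 1 by omega)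
      rw [cnt_gap hm (le_refl _) (by omega), show m - 1 + 1 = m by omega] at this
      obtain ⟨a, h1, h2, h3⟩ := ih j m (by omega)
      refine ⟨fun r => if r = 0 then m else a (r-1), by simpa using hm, ?_, ?_⟩
      · intro r hr
        cases r with
        | zero => simpa using hm'.1
        | succ r => simpa using h2 r (by omega)
      · intro r hr
        cases r with
        | zero => simpa using (nx_some.1 h1).2.1
        | succ r => simpa using h3 r (by omega)

/-- goodness of an insertion -/
def Good : ℕ → List (Finset ℕ) → Prop
  | _, [] => True
  | x, A :: R => (x ∈ A → x + 1 ∈ A) ∧ ∀ y, nx A x = some y → Good y R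

theorem Good_of_red (T : List (Finset ℕ)) : ∀ x, IsReducedWord (x :: cw T) → Good x T := by
  induction T with
  | nil => intro x _; trivial
  | cons A R ih =>
    intro x h
    have b := bumpW_red [x] A (cw R) (by simpa [cw] using h)
    refine ⟨by simpa [GoodW, bumpW] using b.1, ?_⟩
    intro y hy
    apply ih
    have := b.2.1
    simp only [bumpW, hy] at this
    exact Red.right (u := cdesc (col A x)) (by simpa using this)

theorem ins_F12 (T : List (Finset ℕ)) : ∀ (x j k : ℕ), Good x T →
    (k < x → F j T k ≤ F j (ins x T) k) ∧
    (x ≤ k → F j T k ≤ F j (ins x T) k ∨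
      (F j T k ≤ F j (ins x T) k + 1 ∧ F j (ins x T) x ≤ F j (ins x T) k)) := by
  induction T with
  | nil => intro x j k _; simp [F_nil]
  | cons A R ih =>
    intro x j k hg
    rcases nx_cases A x with ⟨hn, hA⟩ | ⟨y, hy, hyA, hxy, hmin⟩
    · have hxA : x ∉ A := by
        intro h; have := hA _ (hg.1 h); omega
      have : F j (A :: R) k ≤ F j (ins x (A :: R)) k := by
        rw [ins_none hn, col_none hxA hn]
        cases j with
        | zero => rw [F_zero, F_zero, cntT_insert hxA]; omega
        | succ j =>
          obtain ⟨t, ht, e⟩ := F_ex j (insert x A) R k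
          rw [e, cnt_insert hxA]
          have := F_le (j := j) (A := A) (R := R) ht
          omega
      exact ⟨fun _ => this, fun _ => Or.inl this⟩
    · have hgR := hg.2 y hy
      rw [ins_some hy]
      have hcol : x ∉ A ∧ (∀ k t, cnt (col A x) k t + ind k y t = cnt A k t + ind k x t) ∧
          (∀ k, cntT (col A x) k + indT k y = cntT A k + indT k x) ∨
          y = x + 1 ∧ x ∈ A ∧ col A x = A := by
        by_cases hxA : x ∈ A
        · right; exact ⟨by have := hmin _ (hg.1 hxA); omega, hxA, col_mem hxA⟩
        · left; exact ⟨hxA, cnt_swap hxA hy, cntT_swap hxA hy⟩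
      have gap : ∀ s t, x ≤ s → t < y → cnt A s t = 0 := fun s t h1 h2 => cnt_gap hy h1 h2
      have gap' : ∀ s t, x ≤ s → t < y → cnt (col A x) s t = 0 := by
        intro s t h1 h2
        rcases hcol with ⟨_, h, _⟩ | ⟨_, _, h⟩
        · have := h s t; have := gap s t h1 h2; simp only [ind] at *; split_ifs at * <;> omega
        · rw [h]; exact gap s t h1 h2
      cases j with
      | zero =>
        simp only [F_zero]
        rcases hcol with ⟨_, _, h⟩ | ⟨_, _, h⟩
        · constructor
          · intro hk; have := h k; simp only [indT] at this; split_ifs at this <;> omega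
          · intro hk
            by_cases hky : k < y
            · right
              have := h k
              rw [cntT_split (col A x) hk, gap' x k (le_refl _) hky]
              simp only [indT] at this; split_ifs at this <;> omega
            · left; have := h k; simp only [indT] at this; split_ifs at this <;> omega
        · rw [h]; exact ⟨fun _ => le_refl _, fun _ => Or.inl (le_refl _)⟩
      | succ j =>
        have IH := fun k => ih y j k hgR
        set A' := col A x with hA'
        set R' := ins y R with hR'
        obtain ⟨t, ht, e⟩ := F_ex j A' R' k
        have iy := (IH y).2 (le_refl _)
        constructor
        · intro hk
          -- the case `t = y - 1`
          have mid : F (j+1) (A :: R) k ≤ cnt A' k (y-1) + F j R' y := by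
            rcases hcol with ⟨_, h, _⟩ | ⟨h1, h2, h⟩
            · have := F_le (j := j) (A := A) (R := R) (show k ≤ y - 1 by omega)
              have h2 := h k (y-1)
              rw [show y - 1 + 1 = y by omega] at this
              simp only [ind] at h2
              rw [if_neg (by omega), if_pos (by omega)] at h2
              omega
            · have := F_le (j := j) (A := A) (R := R) (show k ≤ x - 1 by omega)
              rw [show x - 1 + 1 = x by omega] at this
              have i1 := (IH x).1 (by omega)
              have i2 := F_lip R' j x
              rw [h, show y - 1 = x by omega, cnt_split A (show k ≤ x - 1 by omega) (show x - 1 ≤ x by omega)]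
              have := cnt_pos h2 (show x - 1 < x by omega) (le_refl x)
              rw [h1]
              omega
          rw [e]
          rcases lt_trichotomy (t+1) y with h1 | h1 | h1
          · have := F_le (j := j) (A := A) (R := R) ht
            have i1 := (IH (t+1)).1 h1
            have : cnt A k t ≤ cnt A' k t := by
              rcases hcol with ⟨_, h, _⟩ | ⟨_, h2, h⟩
              · have := h k t
                simp only [ind] at this
                rw [if_neg (by omega)] at this; omega
              · rw [h]
            omega
          · rw [show y - 1 = t by omega, ← h1] at mid; exact mid
          · rcases (IH (t+1)).2 (by omega) with i1 | i1
            · have := F_le (j := j) (A := A) (R := R) ht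
              have : cnt A k t ≤ cnt A' k t := by
                rcases hcol with ⟨_, h, _⟩ | ⟨_, h2, h⟩
                · have := h k t
                  simp only [ind] at this
                  rw [if_pos (by omega), if_pos (by omega)] at this; omega
                · rw [h]
              omega
            · rw [cnt_split A' (show k ≤ y - 1 by omega) (show y - 1 ≤ t by omega)]
              omega
        · intro hk
          have fx : F (j+1) (A' :: R') x ≤ F j R' y := by
            have := F_le (j := j) (A := A') (R := R') (show x ≤ y - 1 by omega)
            rw [gap' x (y-1) (le_refl _) (by omega), show y - 1 + 1 = y by omega] at this
            omega
          by_cases hky : k < y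
          · have fk : F (j+1) (A :: R) k ≤ F j R y := by
              have := F_le (j := j) (A := A) (R := R) (show k ≤ y - 1 by omega)
              rw [gap k (y-1) (by omega) (by omega), show y - 1 + 1 = y by omega] at this
              omega
            by_cases hty : t < y
            · rw [gap' k t hk hty] at e
              have := F_anti (T := R') (j := j) (show t + 1 ≤ y by omega)
              right; omega
            · have i2 := (IH (t+1)).2 (by omega)
              rcases i2 with i2 | i2
              · have := F_le (j := j) (A := A) (R := R) ht
                have h5 := F_le (j := j) (A := A') (R := R') (show x ≤ t by omega)
                have h6 := cnt_split A' (show x ≤ k by omega) ht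
                rw [gap' x k (le_refl _) hky] at h6
                have : cnt A k t ≤ cnt A' k t + 1 := by
                  rcases hcol with ⟨_, h, _⟩ | ⟨_, h2, h⟩
                  · have := h k t
                    simp only [ind] at this
                    rw [if_pos (by omega), if_neg (by omega)] at this; omega
                  · rw [h]; omega
                right; omega
              · right; omega
          · have hc : cnt A k t = cnt A' k t := by
              rcases hcol with ⟨_, h, _⟩ | ⟨_, h2, h⟩
              · have := h k t
                simp only [ind] at this
                rw [if_neg (by omega), if_neg (by omega)] at this; omega
              · rw [h]
            have := F_le (j := j) (A := A) (R := R) ht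
            rcases (IH (t+1)).2 (by omega) with i1 | i1
            · left; omega
            · right; omega

/-- column index of the new cell -/
def enew : ℕ → List (Finset ℕ) → ℕ
  | _, [] => 0
  | x, A :: R => match nx A x with
    | none => 0
    | some y => enew y R + 1

theorem enew_none {A : Finset ℕ} {x : ℕ} {R} (h : nx A x = none) :
    enew x (A :: R) = 0 := by simp [enew, h]
theorem enew_some {A : Finset ℕ} {x y : ℕ} {R} (h : nx A x = some y) :
    enew x (A :: R) = enew y R + 1 := by simp [enew, h]

theorem ins_Fe (T : List (Finset ℕ)) : ∀ (x : ℕ), Good x T →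
    F (enew x T) (ins x T) x = 0 ∧
    ∀ k < x, F (enew x T) (ins x T) k = F (enew x T) T k + 1 := by
  induction T with
  | nil =>
    intro x _
    simp only [enew, ins, F_zero, F_nil]
    have h := cntT_insert (A := ∅) (x := x) (by simp)
    have h0 : ∀ k, cntT ∅ k = 0 := fun k => cntT_zero (by simp)
    simp only [insert_empty_eq] at h
    constructor
    · rw [h, h0]; simp [indT]
    · intro k hk; rw [h, h0]; simp [indT, hk]
  | cons A R ih =>
    intro x hg
    rcases nx_cases A x with ⟨hn, hA⟩ | ⟨y, hy, hyA, hxy, hmin⟩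
    · have hxA : x ∉ A := by
        intro h; have := hA _ (hg.1 h); omega
      rw [ins_none hn, col_none hxA hn, enew_none hn]
      simp only [F_zero, cntT_insert hxA, cntT_zero hA, indT]
      refine ⟨by simp, fun k hk => by simp [hk]⟩
    · have hgR := hg.2 y hy
      obtain ⟨i1, i2⟩ := ih y hgR
      rw [ins_some hy, enew_some hy]
      have hcol : x ∉ A ∧ (∀ k t, cnt (col A x) k t + ind k y t = cnt A k t + ind k x t) ∨
          y = x + 1 ∧ x ∈ A ∧ col A x = A := by
        by_cases hxA : x ∈ A
        · right; exact ⟨by have := hmin _ (hg.1 hxA); omega, hxA, col_mem hxA⟩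
        · left; exact ⟨hxA, cnt_swap hxA hy⟩
      have gap : ∀ s t, x ≤ s → t < y → cnt A s t = 0 := fun s t h1 h2 => cnt_gap hy h1 h2
      have gap' : ∀ s t, x ≤ s → t < y → cnt (col A x) s t = 0 := by
        intro s t h1 h2
        rcases hcol with ⟨_, h⟩ | ⟨_, _, h⟩
        · have := h s t; have := gap s t h1 h2; simp only [ind] at *; split_ifs at * <;> omega
        · rw [h]; exact gap s t h1 h2
      set e := enew y R
      set A' := col A x with hA'
      set R' := ins y R with hR'
      have i3 : F e R (y-1) = 0 := by
        have := i2 (y-1) (by omega)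
        have h2 := F_lip R' e (y-1)
        rw [show y - 1 + 1 = y by omega] at h2
        omega
      have hcx : ∀ k t, t < x → cnt A' k t = cnt A k t := by
        intro k t ht
        rcases hcol with ⟨_, h⟩ | ⟨_, _, h⟩
        · have := h k t
          simp only [ind] at this
          rw [if_neg (by omega), if_neg (by omega)] at this; omega
        · rw [h]
      constructor
      · have := F_le (j := e) (A := A') (R := R') (show x ≤ y - 1 by omega)
        rw [gap' x (y-1) (le_refl _) (by omega), show y - 1 + 1 = y by omega] at this
        omega
      · intro k hk
        apply le_antisymm
        · obtain ⟨t, ht, e1⟩ := F_ex e A R k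
          rw [e1]
          by_cases htx : t < x
          · have := F_le (j := e) (A := A') (R := R') ht
            rw [hcx k t htx] at this
            have := i2 (t+1) (by omega)
            omega
          · have := F_le (j := e) (A := A') (R := R') (show k ≤ y - 1 by omega)
            rw [show y - 1 + 1 = y by omega, i1] at this
            have h3 := cnt_split A (show k ≤ x by omega) (show x ≤ t by omega)
            have h4 := cnt_split A (show k ≤ x by omega) (show x ≤ y - 1 by omega)
            rw [gap x (y-1) (by omega) (by omega)] at h4
            have : cnt A' k (y-1) ≤ cnt A k (y-1) + 1 := by
              rcases hcol with ⟨_, h⟩ | ⟨_, _, h⟩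
              · have := h k (y-1)
                simp only [ind] at this
                split_ifs at this <;> omega
              · rw [h]; omega
            omega
        · obtain ⟨t, ht, e1⟩ := F_ex e A' R' k
          rw [e1]
          by_cases htx : t < x
          · have := F_le (j := e) (A := A) (R := R) ht
            rw [hcx k t htx]
            have := i2 (t+1) (by omega)
            omega
          · rcases hcol with ⟨_, h⟩ | ⟨hyx, hxA, h⟩
            · have := F_le (j := e) (A := A) (R := R) (show k ≤ y - 1 by omega)
              have h2 : F e R y = 0 := by
                have := F_anti (T := R) (j := e) (show y - 1 ≤ y by omega); omega
              rw [show y - 1 + 1 = y by omega, h2] at this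
              have h3 := cnt_split A' (show k ≤ x by omega) (show x ≤ t by omega)
              have h4 := cnt_split A (show k ≤ x by omega) (show x ≤ y - 1 by omega)
              rw [gap x (y-1) (by omega) (by omega)] at h4
              have := h k x
              simp only [ind] at this
              rw [if_neg (by omega), if_pos (by omega)] at this
              omega
            · have := F_le (j := e) (A := A) (R := R) (show k ≤ x - 1 by omega)
              rw [show x - 1 + 1 = y - 1 by omega, i3] at this
              rw [h]
              have h3 := cnt_split A (show k ≤ x - 1 by omega) (show x - 1 ≤ t by omega)
              have := cnt_pos hxA (show x - 1 < x by omega) (show x ≤ t by omega)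
              omega

theorem ins_FU (T : List (Finset ℕ)) : ∀ (x j : ℕ), Good x T → j < enew x T →
    (∀ k, F j (ins x T) k ≤ F j T k) ∧ F j (ins x T) (x+1) + 1 ≤ F j T x := by
  induction T with
  | nil => intro x j _ h; simp [enew] at h
  | cons A R ih =>
    intro x j hg hj
    rcases nx_cases A x with ⟨hn, hA⟩ | ⟨y, hy, hyA, hxy, hmin⟩
    · rw [enew_none hn] at hj; omega
    rw [enew_some hy] at hj
    rw [ins_some hy]
    have hcol : x ∉ A ∧ (∀ k t, cnt (col A x) k t + ind k y t = cnt A k t + ind k x t) ∧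
        (∀ k, cntT (col A x) k + indT k y = cntT A k + indT k x) ∨
        y = x + 1 ∧ x ∈ A ∧ col A x = A := by
      by_cases hxA : x ∈ A
      · right; exact ⟨by have := hmin _ (hg.1 hxA); omega, hxA, col_mem hxA⟩
      · left; exact ⟨hxA, cnt_swap hxA hy, cntT_swap hxA hy⟩
    have gap : ∀ s t, x ≤ s → t < y → cnt A s t = 0 := fun s t h1 h2 => cnt_gap hy h1 h2
    have gap' : ∀ s t, x ≤ s → t < y → cnt (col A x) s t = 0 := by
      intro s t h1 h2
      rcases hcol with ⟨_, h, _⟩ | ⟨_, _, h⟩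
      · have := h s t; have := gap s t h1 h2; simp only [ind] at *; split_ifs at * <;> omega
      · rw [h]; exact gap s t h1 h2
    cases j with
    | zero =>
      simp only [F_zero]
      have h0 := cntT_split A (show x ≤ x + 1 by omega)
      rcases hcol with ⟨_, _, h⟩ | ⟨hyx, _, h⟩
      · constructor
        · intro k
          have := h k
          simp only [indT] at this
          split_ifs at this <;> omega
        · have h1 := h (x+1)
          have h2 := h x
          have h3 := cntT_split (col A x) (show x ≤ x + 1 by omega)
          simp only [indT] at h2
          rw [if_pos (by omega), if_neg (by omega)] at h2
          omega
      · rw [h]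
        refine ⟨fun k => le_refl _, ?_⟩
        have := cnt_pos hyA (show x < y by omega) (show y ≤ x + 1 by omega)
        omega
    | succ j =>
      obtain ⟨i1, i2⟩ := ih y j (hg.2 y hy) (by omega)
      set A' := col A x with hA'
      set R' := ins y R with hR'
      constructor
      · intro k
        obtain ⟨t, ht, e1⟩ := F_ex j A R k
        rw [e1]
        have hi := i1 (t+1)
        have hle := F_le (j := j) (A := A') (R := R') ht
        rcases hcol with ⟨_, h, _⟩ | ⟨hyx, _, h⟩
        · by_cases hc : k < x ∧ x ≤ t ∧ t < y
          · have h1 := F_le (j := j) (A := A') (R := R') (show k ≤ y by omega)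
            have h2 := h k y
            simp only [ind] at h2
            rw [if_pos (by omega), if_pos (by omega)] at h2
            have h3 := cnt_split A (show k ≤ t by omega) (show t ≤ y - 1 by omega)
            have h4 := cnt_split A (show k ≤ y - 1 by omega) (show y - 1 ≤ y by omega)
            have h5 := cnt_one A (y-1)
            rw [show y - 1 + 1 = y by omega] at h5
            rw [gap t (y-1) (by omega) (by omega)] at h3
            have := F_anti (T := R) (j := j) (show t + 1 ≤ y by omega)
            omega
          · have := h k t
            simp only [ind] at this
            split_ifs at this <;> omega
        · rw [h] at hle ⊢; omega
      · obtain ⟨t, ht, e1⟩ := F_ex j A R x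
        rw [e1]
        by_cases hty : t < y
        · have := F_anti (T := R) (j := j) (show t + 1 ≤ y by omega)
          have h1 := F_le (j := j) (A := A') (R := R') (show x + 1 ≤ y by omega)
          have : cnt A' (x+1) y = 0 := by
            rcases hcol with ⟨hxA, h, _⟩ | ⟨hyx, _, h⟩
            · have h2 := h x y
              simp only [ind] at h2
              rw [if_pos (by omega), if_neg (by omega)] at h2
              have h4 := cnt_split A (show x ≤ y - 1 by omega) (show y - 1 ≤ y by omega)
              have h5 := cnt_one A (y-1)
              rw [show y - 1 + 1 = y by omega] at h5
              have h6 := cnt_split A' (show x ≤ x + 1 by omega) (show x + 1 ≤ y by omega)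
              rw [gap x (y-1) (le_refl _) (by omega)] at h4
              omega
            · rw [hyx]; exact cnt_self _ _
          omega
        · have h1 := F_le (j := j) (A := A') (R := R') (show x + 1 ≤ t by omega)
          have h2 := i1 (t+1)
          have h6 := cnt_split A' (show x ≤ x + 1 by omega) (show x + 1 ≤ t by omega)
          have : cnt A' (x+1) t + 1 ≤ cnt A x t := by
            rcases hcol with ⟨hxA, h, _⟩ | ⟨hyx, _, h⟩
            · have h2 := h x t
              simp only [ind] at h2
              rw [if_pos (by omega), if_neg (by omega)] at h2
              omega
            · rw [h] at h6 ⊢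
              have := cnt_pos hyA (show x < y by omega) (show y ≤ x + 1 by omega)
              omega
          omega

theorem ins_FU' (T : List (Finset ℕ)) : ∀ (x j : ℕ), Good x T → 1 ≤ x →
    F j (ins x T) (x-1) = 0 → ∀ k < x, F j (ins x T) k ≤ F j T k := by
  induction T with
  | nil =>
    intro x j _ hx h0 k hk
    cases j with
    | zero =>
      simp only [ins, F_zero] at h0
      have := cntT_pos (A := {x}) (Finset.mem_singleton_self x) (show x - 1 < x by omega)
      omega
    | succ j =>
      have := F_le (j := j) (A := {x}) (R := []) (le_refl k)
      rw [cnt_self, F_nil] at this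
      simp only [ins, F_nil]; exact this
  | cons A R ih =>
    intro x j hg hx h0 k hk
    have hxc : x ∈ col A x := by simp [mem_col]
    obtain ⟨R', hR', hins⟩ : ∃ R', ins x (A :: R) = col A x :: R' ∧
        ((R' = R) ∨ ∃ y, nx A x = some y ∧ R' = ins y R) := by
      rcases h : nx A x with _ | y
      · exact ⟨R, ins_none h, Or.inl rfl⟩
      · exact ⟨ins y R, ins_some h, Or.inr ⟨y, rfl, rfl⟩⟩
    rw [hR'] at h0 ⊢
    cases j with
    | zero =>
      rw [F_zero] at h0
      have := cntT_pos hxc (show x - 1 < x by omega)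
      omega
    | succ j =>
      obtain ⟨t, ht, e⟩ := F_ex j (col A x) R' (x-1)
      have hz : F j R' x = 0 := by
        by_cases h : x ≤ t
        · have := cnt_pos hxc (show x - 1 < x by omega) h; omega
        · rw [show t + 1 = x by omega] at e; omega
      have hcx : ∀ k t, t < x → cnt (col A x) k t = cnt A k t := by
        intro k t ht
        unfold cnt
        congr 1
        ext a
        simp only [Finset.mem_filter, mem_col]
        constructor
        · rintro ⟨h1 | h1, h2⟩
          · omega
          · exact ⟨h1.1, h2⟩
        · rintro ⟨h1, h2⟩
          refine ⟨Or.inr ⟨h1, Or.inr ?_⟩, h2⟩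
          intro h
          have := (nx_some.1 h).2.1
          omega
      obtain ⟨t, ht, e⟩ := F_ex j A R k
      rw [e]
      by_cases htx : t < x
      · have h1 := F_le (j := j) (A := col A x) (R := R') ht
        rw [hcx k t htx] at h1
        have : F j R' (t+1) ≤ F j R (t+1) := by
          rcases hins with rfl | ⟨y, hy, rfl⟩
          · exact le_refl _
          · have hxy := (nx_some.1 hy).2.1
            refine ih y j (hg.2 y hy) (by omega) ?_ (t+1) (by omega)
            have := F_anti (T := ins y R) (j := j) (show x ≤ y - 1 by omega)
            omega
        omega
      · have h1 := F_le (j := j) (A := col A x) (R := R') (show k ≤ x - 1 by omega)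
        rw [hcx k (x-1) (by omega), show x - 1 + 1 = x by omega, hz] at h1
        have := cnt_split A (show k ≤ x - 1 by omega) (show x - 1 ≤ t by omega)
        omega

noncomputable def kap (N : ℕ) (T : List (Finset ℕ)) (k : ℕ) : ℕ := ∑ j ∈ Finset.range N, F j T k

theorem enew_le (T : List (Finset ℕ)) : ∀ x, enew x T ≤ T.length := by
  induction T with
  | nil => intro x; simp [enew]
  | cons A R ih =>
    intro x
    rcases h : nx A x with _ | y
    · rw [enew_none h]; omega
    · rw [enew_some h]; have := ih y; simp; omega

theorem ins_len (T : List (Finset ℕ)) : ∀ x, (ins x T).length ≤ T.length + 1 := by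
  induction T with
  | nil => intro x; simp [ins]
  | cons A R ih =>
    intro x
    rcases h : nx A x with _ | y
    · rw [ins_none h]; simp
    · rw [ins_some h]; have := ih y; simp; omega

theorem Pc_len (w : List ℕ) : (Pc w).length ≤ w.length := by
  induction w with
  | nil => simp [Pc, insW]
  | cons x w ih =>
    have := ins_len (Pc w) x
    have e : Pc (x :: w) = ins x (Pc w) := rfl
    rw [e]; simp; omega

theorem kap_ins {T : List (Finset ℕ)} {x k N : ℕ} (hg : Good x T) (hk : k < x)
    (hN : enew x T < N) : kap N T k + 1 ≤ kap N (ins x T) k := by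
  unfold kap
  have : ∑ j ∈ Finset.range N, F j T k < ∑ j ∈ Finset.range N, F j (ins x T) k := by
    apply Finset.sum_lt_sum
    · intro j _; exact (ins_F12 T x j k hg).1 hk
    · refine ⟨enew x T, by simpa using hN, ?_⟩
      have := (ins_Fe T x hg).2 k hk
      omega
  omega

theorem Red.insW_mid {u w : List ℕ} {T : List (Finset ℕ)} (h : IsReducedWord (u ++ w ++ cw T)) :
    IsReducedWord (u ++ cw (insW w T)) := by
  have h1 := insW_red T w [] (by simpa using Red.right (u := u) (by simpa using h))
  refine Red.of_eq h ?_ ?_ ?_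
  · rw [append_assoc, toPerm_append, toPerm_append, h1.2.1]
  · rw [append_assoc, length_append, length_append, h1.2.2]
  · intro i hi
    simp only [mem_append] at hi
    rcases hi with hi | hi
    · exact h.1 i (by simp [hi])
    · exact h1.1.1 i (by simpa using hi)

theorem kap_lower (u v : List ℕ) (k N : ℕ) (h : IsReducedWord (u ++ v)) (hk : ∀ a ∈ u, k < a)
    (hN : (u ++ v).length ≤ N) : u.length ≤ kap N (Pc (u ++ v)) k := by
  induction u with
  | nil => simp
  | cons x u ih =>
    have i1 := ih (Red.tail h) (fun a ha => hk a (by simp [ha])) (by simp at hN ⊢; omega)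
    have hg : Good x (Pc (u ++ v)) := by
      apply Good_of_red
      exact Pc_red (u := [x]) h
    have := kap_ins (N := N) hg (hk x (by simp)) (by
      have := enew_le (Pc (u ++ v)) x
      have := Pc_len (u ++ v)
      simp at *; omega)
    have e : Pc (x :: u ++ v) = ins x (Pc (u ++ v)) := rfl
    rw [e]; simp; omega

theorem row_lemma (R : List ℕ) : ∀ (x : ℕ) (T : List (Finset ℕ)), (x :: R).Pairwise (· < ·) →
    IsReducedWord ((x :: R) ++ cw T) →
    (∀ j < (x :: R).length, 1 ≤ F j (insW (x :: R) T) (x-1)) ∧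
    (F (x :: R).length (insW (x :: R) T) (x-1) = 0 → ∀ k < x, ∀ N,
      kap N (insW (x :: R) T) k ≤ kap N T k + (x :: R).length) := by
  induction R with
  | nil =>
    intro x T hs hr
    have hx : 1 ≤ x := hr.1 x (by simp)
    have hg : Good x T := Good_of_red T x hr
    have hFe := ins_Fe T x hg
    have e0 : insW [x] T = ins x T := rfl
    rw [e0]
    have h1 : 1 ≤ F (enew x T) (ins x T) (x-1) := by
      have := hFe.2 (x-1) (by omega); omega
    constructor
    · intro j hj
      simp at hj; subst hj
      exact h1.trans (F_mono (by omega))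
    · intro h0 k hk N
      have he : enew x T = 0 := by
        by_contra hc
        have := F_mono (T := ins x T) (k := x-1) (show [x].length ≤ enew x T by simp; omega)
        omega
      have hj : ∀ j, F j (ins x T) k ≤ F j T k + if j = 0 then 1 else 0 := by
        intro j
        split_ifs with hj0
        · have := hFe.2 k hk
          rw [he] at this
          subst hj0; omega
        · refine ins_FU' T x j hg hx ?_ k hk
          have := F_mono (T := ins x T) (k := x-1) (show [x].length ≤ j by simp; omega)
          omega
      unfold kap
      refine (Finset.sum_le_sum (fun j _ => hj j)).trans ?_
      rw [Finset.sum_add_distrib, Finset.sum_ite_eq']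
      split_ifs <;> simp
  | cons x' R ih =>
    intro x T hs hr
    have hx : 1 ≤ x := hr.1 x (by simp)
    have hxx : x < x' := by simp at hs; exact hs.1.1
    obtain ⟨IA, IB⟩ := ih x' T (by simp at hs ⊢; exact hs.2) (Red.tail hr)
    set T1 := insW (x' :: R) T with hT1
    have hg : Good x T1 := by
      apply Good_of_red
      exact Red.insW_mid (u := [x]) hr
    have hFe := ins_Fe T1 x hg
    have e0 : insW (x :: x' :: R) T = ins x T1 := rfl
    rw [e0]
    have h1 : F (enew x T1) (ins x T1) (x-1) = F (enew x T1) T1 (x-1) + 1 := hFe.2 (x-1) (by omega)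
    have h2 : F (enew x T1) T1 (x-1) = 0 := by
      have := F_lip (ins x T1) (enew x T1) (x-1)
      rw [show x - 1 + 1 = x by omega, hFe.1] at this
      omega
    have he : (x' :: R).length ≤ enew x T1 := by
      by_contra hc
      have := IA (enew x T1) (by omega)
      have := F_anti (T := T1) (j := enew x T1) (show x - 1 ≤ x' - 1 by omega)
      omega
    constructor
    · intro j hj
      simp only [length_cons] at hj he
      have := F_mono (T := ins x T1) (k := x-1) (show j ≤ enew x T1 by omega)
      omega
    · intro h0 k hk N
      have he : enew x T1 = (x' :: R).length := by
        by_contra hc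
        have := F_mono (T := ins x T1) (k := x-1) (show (x :: x' :: R).length ≤ enew x T1 by
          simp at he hc ⊢; omega)
        omega
      have i2 := IB (by
        rw [he] at h2
        have := F_anti (T := T1) (j := (x' :: R).length) (show x - 1 ≤ x' - 1 by omega)
        omega) k (by omega) N
      have hj : ∀ j, F j (ins x T1) k ≤ F j T1 k + if j = enew x T1 then 1 else 0 := by
        intro j
        split_ifs with hj0
        · have := hFe.2 k hk
          subst hj0; omega
        · by_cases hlt : j < enew x T1
          · exact (ins_FU T1 x j hg hlt).1 k
          · refine ins_FU' T1 x j hg hx ?_ k hk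
            have := F_mono (T := ins x T1) (k := x-1) (show (x :: x' :: R).length ≤ j by
              simp at he ⊢; omega)
            omega
      have : kap N (ins x T1) k ≤ kap N T1 k + 1 := by
        unfold kap
        refine (Finset.sum_le_sum (fun j _ => hj j)).trans ?_
        rw [Finset.sum_add_distrib, Finset.sum_ite_eq']
        split_ifs <;> simp
      simp only [length_cons] at i2 ⊢
      omega

/-- first column after inserting a row whose head exceeds the first column. -/
theorem insW_head (R : List ℕ) : ∀ (x : ℕ) (T : List (Finset ℕ)), (x :: R).Pairwise (· < ·) →
    (∀ a ∈ T.getD 0 ∅, a < x) → (insW (x :: R) T).getD 0 ∅ = insert x (T.getD 0 ∅) := by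
  induction R with
  | nil =>
    intro x T _ h
    cases T with
    | nil => simp [insW, ins]
    | cons A T =>
      simp at h
      have hn : nx A x = none := nx_none.2 (fun a ha => (h a ha).le)
      have : insW [x] (A :: T) = ins x (A :: T) := rfl
      rw [this, ins_none hn, col_none (fun hx => lt_irrefl _ (h x hx)) hn]; simp
  | cons x' R ih =>
    intro x T hs h
    have hxx : x < x' := by simp at hs; exact hs.1.1
    have i1 := ih x' T (by simp at hs ⊢; exact hs.2) (fun a ha => (h a ha).trans hxx)
    have : insW (x :: x' :: R) T = ins x (insW (x' :: R) T) := rfl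
    rw [this]
    generalize insW (x' :: R) T = T1 at *
    cases T1 with
    | nil =>
      simp at i1
      exact absurd i1 (Finset.insert_ne_empty _ _).symm
    | cons A T1 =>
      simp only [getD_cons_zero] at i1
      generalize T.getD 0 ∅ = C at *
      have hn : nx A x = some x' := by
        rw [nx_some, i1]
        refine ⟨by simp, hxx, ?_⟩
        intro z hz hl
        rcases Finset.mem_insert.1 hz with rfl | hz
        · rfl
        · have := h z hz; omega
      have hxA : x ∉ A := by
        rw [i1]; intro hx
        rcases Finset.mem_insert.1 hx with h1 | h1
        · omega
        · exact lt_irrefl _ (h x h1)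
      rw [ins_some hn, getD_cons_zero, col_some hxA hn, i1, Finset.erase_insert]
      intro hx; have := h x' hx; omega

def addRow : List ℕ → List (Finset ℕ) → List (Finset ℕ)
  | [], T => T
  | a :: r, [] => {a} :: addRow r []
  | a :: r, C :: T => insert a C :: addRow r T

theorem addRow_getD (r : List ℕ) : ∀ (T : List (Finset ℕ)) (q a : ℕ),
    a ∈ (addRow r T).getD q ∅ ↔ a ∈ T.getD q ∅ ∨ (q < r.length ∧ r.getD q 0 = a) := by
  induction r with
  | nil => intro T q a; simp [addRow]
  | cons b r ih =>
    intro T q a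
    cases T with
    | nil =>
      cases q with
      | zero => simp [addRow]; exact eq_comm
      | succ q => simpa [addRow] using ih [] q a
    | cons C T =>
      cases q with
      | zero => simp [addRow]; constructor <;> (intro h; rcases h with h | h <;> simp [h])
      | succ q => simpa [addRow] using ih T q a

theorem ins_addRow (r : List ℕ) : ∀ (a : ℕ) (T : List (Finset ℕ)), (a :: r).Pairwise (· < ·) →
    (∀ q < (a :: r).length, ∀ b ∈ T.getD q ∅, b < (a :: r).getD q 0) →
    ins a (addRow r T) = addRow (a :: r) T := by
  induction r with
  | nil =>
    intro a T _ h
    cases T with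
    | nil => simp [addRow, ins]
    | cons C T =>
      have h := h 0 (by simp)
      simp at h
      have hn : nx C a = none := nx_none.2 (fun b hb => (h b hb).le)
      simp only [addRow]
      rw [ins_none hn, col_none (fun hx => lt_irrefl _ (h a hx)) hn]
  | cons b r ih =>
    intro a T hs h
    have hab : a < b := by simp at hs; exact hs.1.1
    have hs' : (b :: r).Pairwise (· < ·) := by simp at hs ⊢; exact hs.2
    cases T with
    | nil =>
      simp only [addRow]
      have hn : nx {b} a = some b := nx_some.2 ⟨by simp, hab, by simp⟩
      rw [ins_some hn, ih b [] hs' (by simp), col_some (by simp; omega) hn]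
      simp [addRow]
    | cons C T =>
      have h0 := h 0 (by simp)
      simp at h0
      have hn : nx (insert b C) a = some b := by
        rw [nx_some]
        refine ⟨by simp, hab, ?_⟩
        intro z hz hl
        rcases Finset.mem_insert.1 hz with rfl | hz
        · rfl
        · have := h0 z hz; omega
      simp only [addRow]
      have hb : b ∉ C := by
        intro hx
        have h1 := h 1 (by simp)
        have := h0 b hx; omega
      have ha : a ∉ insert b C := by
        intro hx
        rcases Finset.mem_insert.1 hx with h1 | h1
        · omega
        · exact lt_irrefl _ (h0 a h1)
      have hq : ∀ q < (b :: r).length, ∀ c ∈ T.getD q ∅, c < (b :: r).getD q 0 := by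
        intro q hq c hc
        have := h (q+1) (by simpa using hq) c (by simpa using hc)
        simpa using this
      rw [ins_some hn, ih b T hs' hq, col_some ha hn, Finset.erase_insert hb]

theorem insW_addRow (r : List ℕ) (T : List (Finset ℕ)) (hs : r.Pairwise (· < ·))
    (h : ∀ q < r.length, ∀ b ∈ T.getD q ∅, b < r.getD q 0) : insW r T = addRow r T := by
  induction r with
  | nil => rfl
  | cons a r ih =>
    rw [insW_cons, ih (by simp at hs; exact hs.2) ?_, ins_addRow r a T hs h]
    intro q hq b hb
    refine (h q (by simp; omega) b hb).trans ?_
    have h2 := List.pairwise_iff_getElem.1 hs q (q+1) (by simp; omega) (by simp; omega) (by omega)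
    rw [List.getD_eq_getElem _ _ (by simp; omega), List.getD_eq_getElem _ _ (by omega)]
    simpa using h2

def YP (lo hi : List ℕ) : Prop :=
  hi.length ≤ lo.length ∧ ∀ j < hi.length, lo.getD j 0 < hi.getD j 0

theorem wordOf_snoc (V : List (List ℕ)) (r : List ℕ) : wordOf (V ++ [r]) = r ++ wordOf V := by
  simp [wordOf]

theorem wordOf_append (V U : List (List ℕ)) : wordOf (V ++ U) = wordOf U ++ wordOf V := by
  simp [wordOf]

theorem Pc_young (V : List (List ℕ)) (hs : ∀ r ∈ V, r.Pairwise (· < ·)) (hY : V.Pairwise YP)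
    (q a : ℕ) : a ∈ (Pc (wordOf V)).getD q ∅ ↔ ∃ r ∈ V, q < r.length ∧ r.getD q 0 = a := by
  induction V using List.reverseRecOn generalizing q a with
  | nil => simp [wordOf, Pc, insW]
  | append_singleton V r ih =>
    have hY' := List.pairwise_append.1 hY
    have IH := ih (fun r hr => hs r (by simp [hr])) hY'.1
    rw [wordOf_snoc, Pc_append, insW_addRow r _ (hs r (by simp)), addRow_getD, IH]
    · constructor
      · rintro (⟨r', h1, h2⟩ | h)
        · exact ⟨r', by simp [h1], h2⟩
        · exact ⟨r, by simp, h⟩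
      · rintro ⟨r', h1, h2⟩
        simp at h1
        rcases h1 with h1 | rfl
        · exact Or.inl ⟨r', h1, h2⟩
        · exact Or.inr h2
    · intro q hq b hb
      obtain ⟨r', h1, h2, rfl⟩ := (IH q b).1 hb
      exact (hY'.2.2 r' h1 r (by simp)).2 q hq

abbrev Srt (l : List ℕ) : Prop := l.Pairwise (· < ·)

theorem srt_snoc {l : List ℕ} {a : ℕ} : Srt (l ++ [a]) ↔ Srt l ∧ ∀ b ∈ l, b < a := by
  simp [Srt, List.pairwise_append]

theorem srt_app {l m : List ℕ} : Srt (l ++ m) ↔ Srt l ∧ Srt m ∧ ∀ b ∈ l, ∀ a ∈ m, b < a := by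
  simp [Srt, List.pairwise_append]

theorem gd_lt {l m : List ℕ} {q : ℕ} (h : q < l.length) : (l ++ m).getD q 0 = l.getD q 0 :=
  List.getD_append _ _ _ _ h

theorem gd_eq (l : List ℕ) (a : ℕ) : (l ++ [a]).getD l.length 0 = a := by
  simp

theorem gd_mem {l : List ℕ} {q : ℕ} (h : q < l.length) : l.getD q 0 ∈ l := by
  rw [List.getD_eq_getElem _ _ h]; exact List.getElem_mem h

theorem srt_gd {l : List ℕ} (hs : Srt l) {i j : ℕ} (h : i < j) (hj : j < l.length) :
    l.getD i 0 < l.getD j 0 := by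
  rw [List.getD_eq_getElem _ _ hj, List.getD_eq_getElem _ _ (h.trans hj)]
  exact List.pairwise_iff_getElem.1 hs i j _ _ h

theorem srt_gd_le {l : List ℕ} (hs : Srt l) {i j : ℕ} (h : i ≤ j) (hj : j < l.length) :
    l.getD i 0 ≤ l.getD j 0 := by
  rcases h.eq_or_lt with rfl | h
  · exact le_rfl
  · exact (srt_gd hs h hj).le

theorem sub_gd {l m : List ℕ} (h : l <+ m) : Srt m → ∀ q < l.length, m.getD q 0 ≤ l.getD q 0 := by
  induction h with
  | slnil => simp
  | @cons l m a h ih =>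
    intro hs q hq
    have hs' : Srt m := (List.pairwise_cons.1 hs).2
    refine le_trans ?_ (ih hs' q hq)
    have hl := h.length_le
    have := srt_gd hs (i := q) (j := q + 1) (by omega) (by simp; omega)
    simp only [List.getD_cons_succ] at this
    exact this.le
  | @cons_cons l m a h ih =>
    intro hs q hq
    have hs' : Srt m := (List.pairwise_cons.1 hs).2
    cases q with
    | zero => simp
    | succ q => simpa using ih hs' q (by simpa using hq)

/-- slot-by-slot description of the lift of a pair of rows -/
inductive LP : List ℕ → List ℕ → List ℕ → List ℕ → Option ℕ → Prop
  | base (τ : List ℕ) : LP τ [] τ [] none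
  | fail {τ0 σ τ' σ' : List ℕ} {t s : ℕ} {f : Option ℕ} (h : LP (τ0 ++ [t]) σ τ' σ' f) (hts : t < s) :
      LP (τ0 ++ [t]) (σ ++ [s]) (τ' ++ [s]) σ' (some s)
  | mdec {τ σ τ' σ' : List ℕ} {v : ℕ} (h : LP τ σ τ' σ' (some v)) :
      LP (τ ++ [v+1]) (σ ++ [v+1]) (τ' ++ [v+1]) (σ' ++ [v]) (some (v+1))
  | mat {τ σ τ' σ' : List ℕ} {t s : ℕ} {f : Option ℕ} (h : LP τ σ τ' σ' f) (hts : s ≤ t)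
      (hf : ∀ v, f = some v → ¬ (t = v + 1 ∧ s = v + 1)) :
      LP (τ ++ [t]) (σ ++ [s]) (τ' ++ [t]) (σ' ++ [s]) none

def Dd : Option ℕ → List ℕ → List ℕ → List ℕ
  | some v, b :: β, d :: δ => if b = v + 1 ∧ d = v + 1 then v :: Dd (some (v+1)) β δ else d :: δ
  | _, _, δ => δ

theorem Dd_none (β δ) : Dd none β δ = δ := by cases β <;> cases δ <;> rfl
theorem Dd_nil (f δ) : Dd f [] δ = δ := by cases f <;> cases δ <;> rfl

theorem Dd_bc (x i : ℕ) (tb sb : List ℕ) :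
    Dd (some (x + i)) tb sb = decFirst (bCount2 x (i+1) tb sb) sb := by
  induction tb generalizing i sb with
  | nil => rw [Dd_nil]; cases sb <;> simp [bCount2, decFirst]
  | cons t tb ih =>
    cases sb with
    | nil => simp [Dd, bCount2, decFirst]
    | cons s sb =>
      simp only [Dd, bCount2]
      by_cases h : t = x + i + 1 ∧ s = x + i + 1
      · rw [if_pos h, if_pos (by omega), show x + i + 1 = x + (i+1) by omega, ih]
        simp [decFirst, h.2]
      · rw [if_neg h, if_neg (by omega)]; simp [decFirst]

theorem LP.block {tb sb : List ℕ} (hF : List.Forall₂ (fun t s => s ≤ t) tb sb) :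
    ∀ {τ σ τ' σ' : List ℕ} {f : Option ℕ}, LP τ σ τ' σ' f →
      ∃ f', LP (τ ++ tb) (σ ++ sb) (τ' ++ tb) (σ' ++ Dd f tb sb) f' := by
  induction hF with
  | nil => intro τ σ τ' σ' f h; exact ⟨f, by simpa [Dd_nil] using h⟩
  | @cons t s tb sb hts hF ih =>
    intro τ σ τ' σ' f h
    by_cases hc : ∃ v, f = some v ∧ t = v + 1 ∧ s = v + 1
    · obtain ⟨v, rfl, rfl, rfl⟩ := hc
      obtain ⟨f', h'⟩ := ih h.mdec
      exact ⟨f', by simpa [Dd] using h'⟩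
    · push Not at hc
      obtain ⟨f', h'⟩ := ih (h.mat hts (fun v hv hh => hc v hv hh.1 hh.2))
      refine ⟨f', ?_⟩
      have : Dd f (t :: tb) (s :: sb) = s :: sb := by
        cases f with
        | none => rfl
        | some v => simp only [Dd]; rw [if_neg]; rintro ⟨h1, h2⟩; exact hc v rfl h1 h2
      rw [this]
      simpa [Dd_none] using h'

theorem lf_nil_right (τ) : liftFailIdx τ [] = none := by simp [liftFailIdx]
theorem lf_nil_left (σ) : liftFailIdx [] σ = none := by simp [liftFailIdx]
theorem lf_cons (t s : ℕ) (τ σ) : liftFailIdx (t :: τ) (s :: σ) =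
    if t < s then some 0 else (liftFailIdx τ σ).map (· + 1) := by
  simp [liftFailIdx, List.findIdx?_cons]

theorem lf_none : ∀ (τ σ : List ℕ), liftFailIdx τ σ = none → σ.length ≤ τ.length →
    List.Forall₂ (fun t s => s ≤ t) (τ.take σ.length) σ
  | [], [], _, _ => by simp
  | [], s :: σ, _, h => by simp at h
  | t :: τ, [], _, _ => by simp
  | t :: τ, s :: σ, h, hl => by
    rw [lf_cons] at h
    split_ifs at h with h1
    simp at h
    simp
    exact ⟨by omega, lf_none τ σ h (by simpa using hl)⟩

theorem lf_some : ∀ (τ σ : List ℕ) (j : ℕ), liftFailIdx τ σ = some j →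
    ∃ t τr x σr, τ.drop j = t :: τr ∧ σ.drop j = x :: σr ∧ t < x ∧
      List.Forall₂ (fun t s => s ≤ t) (τ.take j) (σ.take j)
  | [], σ, j, h => by simp [lf_nil_left] at h
  | t :: τ, [], j, h => by simp [lf_nil_right] at h
  | t :: τ, s :: σ, j, h => by
    rw [lf_cons] at h
    split_ifs at h with h1
    · simp at h; subst h
      exact ⟨t, τ, s, σ, by simp, by simp, h1, by simp⟩
    · simp at h
      obtain ⟨j', h2, rfl⟩ := h
      obtain ⟨t', τr, x, σr, h3, h4, h5, h6⟩ := lf_some τ σ j' h2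
      exact ⟨t', τr, x, σr, by simpa, by simpa, h5, by simp; exact ⟨by omega, h6⟩⟩

theorem LP_aux : ∀ (n : ℕ) (τ σ : List ℕ), σ.length < n → liftOkAux n τ σ = true →
    ∃ f, LP τ.reverse σ.reverse (liftPairAuxR n τ σ).1.reverse (liftPairAuxR n τ σ).2.reverse f
  | 0, τ, σ, h, _ => by simp at h
  | n + 1, τ, σ, hn, h => by
    unfold liftOkAux at h
    unfold liftPairAuxR
    cases hl : liftFailIdx τ σ with
    | none =>
      rw [hl] at h; simp at h
      have hF := List.rel_reverse (lf_none τ σ hl h)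
      obtain ⟨f', h'⟩ := (LP.base (τ.drop σ.length).reverse).block hF
      refine ⟨f', ?_⟩
      rw [Dd_none, ← List.reverse_append, List.take_append_drop] at h'
      simpa using h'
    | some j =>
      rw [hl] at h; simp only at h
      obtain ⟨t, τr, x, σr, h3, h4, h5, h6⟩ := lf_some τ σ j hl
      have hσ : σ.drop (j+1) = σr := by
        rw [← List.drop_drop, h4]; rfl
      have hx : σ.getD j 0 = x := by
        have : σ[j]? = some x := by
          rw [← List.head?_drop, h4]; rfl
        simp [List.getD, this]
      have hlen : σr.length < n := by
        have := congrArg List.length h4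
        simp at this; omega
      obtain ⟨f, hf⟩ := LP_aux n _ _ (by rw [hσ]; exact hlen) h
      rw [hσ, h3] at hf
      simp only [List.reverse_cons] at hf
      obtain ⟨f', h'⟩ := (hf.fail h5).block (List.rel_reverse h6)
      refine ⟨f', ?_⟩
      have e1 : τ.reverse = τr.reverse ++ [t] ++ (τ.take j).reverse := by
        conv_lhs => rw [← List.take_append_drop j τ, h3]
        simp
      have e2 : σ.reverse = σr.reverse ++ [x] ++ (σ.take j).reverse := by
        conv_lhs => rw [← List.take_append_drop j σ, h4]
        simp
      rw [e1, e2]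
      simp only [hx, hσ, h3]
      have e3 : (if (σ.take j).reverse.headD 0 = x + 1 then
          bCount2 x 1 (τ.take j).reverse (σ.take j).reverse else 0) =
          bCount2 x 1 (τ.take j).reverse (σ.take j).reverse := by
        generalize (σ.take j).reverse = S
        generalize (τ.take j).reverse = U
        cases S with
        | nil => cases U <;> simp [bCount2]
        | cons s S =>
          cases U with
          | nil => simp [bCount2]
          | cons u U => simp [bCount2]; intro h h1 h2; omega
      have e4 := Dd_bc x 0 (τ.take j).reverse (σ.take j).reverse
      simp only [Nat.add_zero, Nat.zero_add] at e4
      rw [e4] at h'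
      rw [e3]
      simpa using h'

theorem LP_of_ok {τ σ : List ℕ} (h : liftOkAux (σ.length + 1) τ.reverse σ.reverse = true) :
    ∃ f, LP τ σ (liftPair τ σ).1 (liftPair τ σ).2 f := by
  obtain ⟨f, hf⟩ := LP_aux (σ.length + 1) τ.reverse σ.reverse (by simp) h
  refine ⟨f, ?_⟩
  simp only [liftPair, h, if_true]
  simpa using hf

theorem LP_of_ne {τ σ : List ℕ} (h : liftPair τ σ ≠ (τ, σ)) :
    ∃ f, LP τ σ (liftPair τ σ).1 (liftPair τ σ).2 f := by
  apply LP_of_ok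
  by_contra h1
  apply h
  simp [liftPair, h1]

theorem ok_nil (n) (τ) : liftOkAux n τ [] = true := by
  cases n <;> simp [liftOkAux, lf_nil_right]

theorem ok_match (n t s τ σ) (h : s ≤ t) :
    liftOkAux (n+1) (t :: τ) (s :: σ) = liftOkAux (n+1) τ σ := by
  simp only [liftOkAux, lf_cons, if_neg (not_lt.2 h)]
  cases liftFailIdx τ σ <;> simp

theorem ok_fail (n t s τ σ) (h : t < s) :
    liftOkAux (n+1) (t :: τ) (s :: σ) = liftOkAux n (t :: τ) σ := by
  simp [liftOkAux, lf_cons, h]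

theorem LP.nilr {τ σ τ' σ' f} (h : LP τ σ τ' σ' f) : σ = [] → τ' = τ ∧ σ' = [] ∧ f = none := by
  cases h <;> simp

theorem LP.nill {τ σ τ' σ' f} (h : LP τ σ τ' σ' f) : τ = [] → σ = [] := by
  cases h <;> simp

theorem LP.len {τ σ τ' σ' f} (h : LP τ σ τ' σ' f) :
    τ'.length + σ'.length = τ.length + σ.length ∧ τ.length ≤ τ'.length ∧ σ.length ≤ τ'.length := by
  induction h <;> simp at * <;> omega

theorem LP.eqlen {τ σ τ' σ' f} (h : LP τ σ τ' σ' f) :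
    τ'.length = τ.length → τ' = τ ∧ σ' = σ ∧ f = none := by
  induction h with
  | base => simp
  | fail h _ ih => intro hh; have := h.len; simp at *; omega
  | mdec h ih => intro hh; simp at hh; have := ih hh; simp at this
  | mat h _ _ ih => intro hh; simp at hh; have := ih hh; simp [this.1, this.2.1]

theorem LP.sub {τ σ τ' σ' f} (h : LP τ σ τ' σ' f) : τ <+ τ' := by
  induction h with
  | base => simp
  | fail h _ ih => exact ih.trans (List.sublist_append_left _ _)
  | mdec h ih => exact ih.append (List.Sublist.refl _)
  | mat h _ _ ih => exact ih.append (List.Sublist.refl _)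

theorem LP.mem {τ σ τ' σ' f} (h : LP τ σ τ' σ' f) : ∀ a ∈ τ', a ∈ τ ∨ a ∈ σ := by
  induction h with
  | base => simp
  | fail h _ ih =>
    intro a ha
    rcases List.mem_append.1 ha with ha | ha
    · rcases ih a ha with h | h <;> simp_all
    · simp_all
  | mdec h ih =>
    intro a ha
    rcases List.mem_append.1 ha with ha | ha
    · rcases ih a ha with h | h <;> simp_all
    · simp_all
  | mat h _ _ ih =>
    intro a ha
    rcases List.mem_append.1 ha with ha | ha
    · rcases ih a ha with h | h <;> simp_all
    · simp_all

theorem LP.lo {τ σ τ' σ' f} (h : LP τ σ τ' σ' f) : ∀ a ∈ σ', ∃ s ∈ σ, a ≤ s := by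
  induction h with
  | base => simp
  | fail h _ ih =>
    intro a ha
    obtain ⟨s, h1, h2⟩ := ih a ha
    exact ⟨s, by simp [h1], h2⟩
  | @mdec _ _ _ _ v h ih =>
    intro a ha
    rcases List.mem_append.1 ha with ha | ha
    · obtain ⟨s, h1, h2⟩ := ih a ha
      exact ⟨s, by simp [h1], h2⟩
    · simp at ha; exact ⟨v+1, by simp, by omega⟩
  | @mat _ _ _ _ t s _ h _ _ ih =>
    intro a ha
    rcases List.mem_append.1 ha with ha | ha
    · obtain ⟨s, h1, h2⟩ := ih a ha
      exact ⟨s, by simp [h1], h2⟩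
    · simp at ha; exact ⟨s, by simp, by omega⟩

theorem LP.flag {τ σ τ' σ' f} (h : LP τ σ τ' σ' f) : Srt σ → ∀ v, f = some v → ∀ a ∈ σ', a < v := by
  induction h with
  | base => simp
  | fail h _ ih =>
    intro hs v hv a ha
    simp at hv; subst hv
    obtain ⟨s, h1, h2⟩ := h.lo a ha
    have := (srt_snoc.1 hs).2 s h1
    omega
  | @mdec _ _ _ _ v h ih =>
    intro hs v' hv a ha
    simp at hv; subst hv
    rcases List.mem_append.1 ha with ha | ha
    · have := ih (srt_snoc.1 hs).1 v rfl a ha; omega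
    · simp at ha; omega
  | mat h _ _ ih => simp

theorem LP.srt {τ σ τ' σ' f} (h : LP τ σ τ' σ' f) : Srt τ → Srt σ → Srt τ' ∧ Srt σ' := by
  induction h with
  | base => intro h _; exact ⟨h, by simp [Srt]⟩
  | @fail τ0 _ _ _ t s _ h hts ih =>
    intro h1 h2
    obtain ⟨h3, h4⟩ := srt_snoc.1 h2
    obtain ⟨h5, h6⟩ := ih h1 h3
    refine ⟨srt_snoc.2 ⟨h5, fun b hb => ?_⟩, h6⟩
    rcases h.mem b hb with hb | hb
    · rcases List.mem_append.1 hb with hb | hb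
      · have := (srt_snoc.1 h1).2 b hb; omega
      · simp at hb; omega
    · exact h4 b hb
  | @mdec _ _ _ _ v h ih =>
    intro h1 h2
    obtain ⟨h3, h4⟩ := srt_snoc.1 h1
    obtain ⟨h5, h6⟩ := srt_snoc.1 h2
    obtain ⟨h7, h8⟩ := ih h3 h5
    refine ⟨srt_snoc.2 ⟨h7, fun b hb => ?_⟩, srt_snoc.2 ⟨h8, fun b hb => h.flag h5 v rfl b hb⟩⟩
    rcases h.mem b hb with hb | hb
    · exact h4 b hb
    · exact h6 b hb
  | @mat _ _ _ _ t s _ h hts _ ih =>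
    intro h1 h2
    obtain ⟨h3, h4⟩ := srt_snoc.1 h1
    obtain ⟨h5, h6⟩ := srt_snoc.1 h2
    obtain ⟨h7, h8⟩ := ih h3 h5
    refine ⟨srt_snoc.2 ⟨h7, fun b hb => ?_⟩, srt_snoc.2 ⟨h8, fun b hb => ?_⟩⟩
    · rcases h.mem b hb with hb | hb
      · exact h4 b hb
      · exact (h6 b hb).trans_le hts
    · obtain ⟨s', h1, h2⟩ := h.lo b hb
      exact h2.trans_lt (h6 s' h1)

theorem head_snoc {l : List ℕ} (h : l ≠ []) (m) : (l ++ m).head? = l.head? := by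
  cases l <;> simp_all

theorem LP.head {τ σ τ' σ' f} (h : LP τ σ τ' σ' f) : Srt τ →
    (∀ a ∈ τ.head?, ∀ b ∈ σ.head?, b < a) → τ'.head? = τ.head? ∧ σ'.head? = σ.head? := by
  induction h with
  | base => simp
  | @fail τ0 σ τ' σ' t s _ h hts ih =>
    intro h1 h2
    by_cases hσ : σ = []
    · subst hσ
      exfalso
      obtain ⟨a, ha⟩ : ∃ a, (τ0 ++ [t]).head? = some a := by cases τ0 <;> simp
      have := h2 a ha s (by simp)
      have : a ≤ t := by
        rcases τ0 with _ | ⟨x, τ0⟩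
        · simp at ha; omega
        · simp at ha; subst ha; have := (srt_snoc.1 h1).2 x (by simp); omega
      omega
    · rw [head_snoc hσ] at h2 ⊢
      have := ih h1 h2
      have hl := h.len
      have : τ' ≠ [] := by rintro rfl; simp at hl
      rw [head_snoc this]; assumption
  | @mdec τ σ τ' σ' v h ih =>
    intro h1 h2
    have hτ : τ ≠ [] := by
      intro e; have := h.nilr (h.nill e); simp at this
    have hσ : σ ≠ [] := by
      intro e; have := h.nilr e; simp at this
    have hl := h.len
    have ht : τ' ≠ [] := by
      intro e; subst e; simp at hl; simp_all
    rw [head_snoc hσ, head_snoc hτ] at h2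
    have := ih (srt_snoc.1 h1).1 h2
    have hs' : σ' ≠ [] := by
      rintro rfl; simp at this; exact hσ (by simpa using this.2.symm)
    rw [head_snoc hσ, head_snoc hτ, head_snoc ht, head_snoc hs']; exact this
  | @mat τ σ τ' σ' t s _ h hts _ ih =>
    intro h1 h2
    by_cases hσ : σ = []
    · obtain ⟨e1, e2, _⟩ := h.nilr hσ
      subst e1 e2 hσ; simp
    · have hτ : τ ≠ [] := fun e => hσ (h.nill e)
      have hl := h.len
      have ht : τ' ≠ [] := by
        intro e; subst e; simp at hl; simp_all
      rw [head_snoc hσ, head_snoc hτ] at h2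
      have := ih (srt_snoc.1 h1).1 h2
      have hs' : σ' ≠ [] := by
        rintro rfl; simp at this; exact hσ (by simpa using this.2.symm)
      rw [head_snoc hσ, head_snoc hτ, head_snoc ht, head_snoc hs']; exact this

/-! Young pairs -/

theorem YP.fail {τ0 σ : List ℕ} {t s : ℕ} (hY : YP (σ ++ [s]) (τ0 ++ [t])) (hts : t < s) :
    YP σ (τ0 ++ [t]) := by
  have h1 : (τ0 ++ [t]).length ≤ σ.length := by
    by_contra hc
    have hl := hY.1
    simp at hc hl
    have := hY.2 τ0.length (by simp)
    have e : τ0.length = σ.length := by omega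
    rw [gd_eq, e, gd_eq] at this; omega
  refine ⟨h1, fun j hj => ?_⟩
  have := hY.2 j hj
  rwa [gd_lt (by omega)] at this

theorem YP.mat {τ σ : List ℕ} {t s : ℕ} (hY : YP (σ ++ [s]) (τ ++ [t])) : YP σ τ := by
  have hl := hY.1
  simp at hl
  refine ⟨hl, fun j hj => ?_⟩
  have := hY.2 j (by simp; omega)
  rwa [gd_lt (by omega), gd_lt hj] at this

theorem LP.ylen {τ σ τ' σ' f} (h : LP τ σ τ' σ' f) : YP σ τ →
    τ'.length = σ.length ∧ σ'.length = τ.length := by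
  suffices YP σ τ → τ'.length = σ.length by
    intro hY; have := this hY; have := h.len; omega
  induction h with
  | base => intro hY; simpa using hY.1
  | fail h hts ih => intro hY; simp [ih (hY.fail hts)]
  | mdec h ih => intro hY; simp [ih hY.mat]
  | mat h _ _ ih => intro hY; simp [ih hY.mat]

theorem LP.yge {τ σ τ' σ' f} (h : LP τ σ τ' σ' f) : YP σ τ →
    ∀ q < σ.length, σ.getD q 0 ≤ τ'.getD q 0 := by
  have key : ∀ {σ τ' : List ℕ} {s t : ℕ}, τ'.length = σ.length → s ≤ t →
      (∀ q < σ.length, σ.getD q 0 ≤ τ'.getD q 0) → ∀ q < (σ ++ [s]).length,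
      (σ ++ [s]).getD q 0 ≤ (τ' ++ [t]).getD q 0 := by
    intro σ τ' s t hl hst ih q hq
    simp at hq
    rcases Nat.lt_or_ge q σ.length with h | h
    · rw [gd_lt h, gd_lt (by omega)]; exact ih q h
    · have : q = σ.length := by omega
      subst this
      rw [gd_eq, ← hl, gd_eq]; exact hst
  induction h with
  | base => simp
  | fail h hts ih =>
    intro hY
    exact key (h.ylen (hY.fail hts)).1 le_rfl (ih (hY.fail hts))
  | mdec h ih => intro hY; exact key (h.ylen hY.mat).1 le_rfl (ih hY.mat)
  | mat h hts _ ih => intro hY; exact key (h.ylen hY.mat).1 hts (ih hY.mat)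

theorem LP.yeq {τ σ τ' σ' f} (h : LP τ σ τ' σ' f) (k : ℕ) : YP σ τ → Srt σ → k < τ.length →
    k + 1 < σ.length → τ.getD k 0 < σ.getD (k+1) 0 → ∀ q ≤ k, τ'.getD q 0 = τ.getD q 0 := by
  have same : ∀ {τ σ τ' σ' : List ℕ} {f}, LP τ σ τ' σ' f → YP σ τ → τ.length = σ.length → τ' = τ := by
    intro τ σ τ' σ' f h hY hl
    exact (h.eqlen (by rw [(h.ylen hY).1, hl])).1
  have key : ∀ {τ σ τ' σ' : List ℕ} {f : Option ℕ} {t s : ℕ}, LP τ σ τ' σ' f → s ≤ t → 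
      (YP σ τ → Srt σ → k < τ.length →
      k + 1 < σ.length → τ.getD k 0 < σ.getD (k+1) 0 → ∀ q ≤ k, τ'.getD q 0 = τ.getD q 0) →
      YP (σ ++ [s]) (τ ++ [t]) → Srt (σ ++ [s]) → k < (τ ++ [t]).length →
      k + 1 < (σ ++ [s]).length → (τ ++ [t]).getD k 0 < (σ ++ [s]).getD (k+1) 0 →
      ∀ q ≤ k, (τ' ++ [t]).getD q 0 = (τ ++ [t]).getD q 0 := by
    intro τ σ τ' σ' f t s h hst ih hY hs h1 h2 h3 q hq
    have hl := (h.ylen hY.mat).1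
    have hY1 := hY.mat.1
    have h2' := h2
    simp at h1 h2
    rcases Nat.lt_or_ge k τ.length with hk | hk
    · rcases Nat.lt_or_ge (k+1) σ.length with hk2 | hk2
      · rw [gd_lt hk, gd_lt hk2] at h3
        rw [gd_lt (by omega), gd_lt (by omega)]
        exact ih hY.mat (srt_snoc.1 hs).1 hk hk2 h3 q hq
      · rw [same h hY.mat (by omega)]
    · have e : k = τ.length := by omega
      subst e
      rw [gd_eq] at h3
      have := srt_gd_le hs (i := τ.length + 1) (j := σ.length) (by omega) (by simp)
      rw [gd_eq] at this
      omega
  induction h with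
  | base => simp
  | @fail τ0 σ τ' σ' t s f h hts ih =>
    intro hY hs h1 h2 h3 q hq
    have hY' := hY.fail hts
    have hl := (h.ylen hY').1
    have hY1 := hY'.1
    have h2' := h2
    simp at h2
    rcases Nat.lt_or_ge (k+1) σ.length with hk2 | hk2
    · rw [gd_lt hk2] at h3
      rw [gd_lt (by omega)]
      exact ih hY' (srt_snoc.1 hs).1 h1 hk2 h3 q hq
    · rw [gd_lt (by omega), same h hY' (by omega)]
  | mdec h ih => exact key h le_rfl ih
  | mat h hts _ ih => exact key h hts ih

theorem ok_young (σ : List ℕ) : ∀ (τ : List ℕ) (n : ℕ), σ.length < n → Srt σ →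
    YP σ τ → (τ.length = σ.length ∨ ∃ k < τ.length, k + 1 < σ.length ∧ τ.getD k 0 < σ.getD (k+1) 0) →
    liftOkAux n τ.reverse σ.reverse = true := by
  induction σ using List.reverseRecOn with
  | nil => intros; simp [ok_nil]
  | append_singleton σ s ih =>
    intro τ n hn hs hY hH
    obtain ⟨n, rfl⟩ : ∃ m, n = m + 1 := ⟨n - 1, by simp at hn; omega⟩
    rcases List.eq_nil_or_concat τ with rfl | ⟨τ, t, rfl⟩
    · simp at hH
    · simp only [List.concat_eq_append] at *
      rw [List.reverse_append, List.reverse_append]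
      simp only [List.reverse_cons, List.reverse_nil, List.nil_append, List.singleton_append]
      have hl := hY.1
      simp at hl hn
      rcases le_or_gt s t with hst | hst
      · rw [ok_match _ _ _ _ _ hst]
        apply ih τ (n+1) (by omega) (srt_snoc.1 hs).1 hY.mat
        rcases hH with hH | ⟨k, h1, h2, h3⟩
        · left; simpa using hH
        · by_cases he : τ.length = σ.length
          · exact Or.inl he
          right
          simp at h1 h2
          rcases Nat.lt_or_ge k τ.length with hk | hk
          · have : k + 1 < σ.length := by omega
            rw [gd_lt hk, gd_lt this] at h3
            exact ⟨k, hk, this, h3⟩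
          · exfalso
            have e : k = τ.length := by omega
            subst e
            rw [gd_eq] at h3
            have := srt_gd_le hs (i := τ.length + 1) (j := σ.length) (by omega) (by simp)
            rw [gd_eq] at this
            omega
      · rw [ok_fail _ _ _ _ _ hst]
        have hY' := hY.fail hst
        have := ih (τ ++ [t]) n (by omega) (srt_snoc.1 hs).1 hY' ?_
        · simpa using this
        · by_cases he : (τ ++ [t]).length = σ.length
          · exact Or.inl he
          right
          rcases hH with hH | ⟨k, h1, h2, h3⟩
          · have := hY'.1; simp at *; omega
          · have hl' := hY'.1
            have : k + 1 < σ.length := by simp at *; omega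
            rw [gd_lt this] at h3
            exact ⟨k, h1, this, h3⟩

theorem LP.emb {τ2 σ2 τ2' σ2' f} (h : LP τ2 σ2 τ2' σ2' f) : ∀ τ : List ℕ, τ <+ σ2 → Srt σ2 →
    YP τ τ2 → ∀ q < τ2.length, τ.getD q 0 ≤ σ2'.getD q 0 := by
  have yp : ∀ {τ σ τ2 : List ℕ}, τ <+ σ → Srt σ → YP τ τ2 → YP σ τ2 := by
    intro τ σ τ2 h1 h2 h3
    refine ⟨h3.1.trans h1.length_le, fun j hj => ?_⟩
    exact (sub_gd h1 h2 j (hj.trans_le h3.1)).trans_lt (h3.2 j hj)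
  have key : ∀ {τ2 σ2 τ2' σ2' : List ℕ} {f : Option ℕ} {t s v : ℕ}, LP τ2 σ2 τ2' σ2' f → s ≤ t →
      (v = s ∨ (v + 1 = t)) →
      (∀ τ : List ℕ, τ <+ σ2 → Srt σ2 → YP τ τ2 → ∀ q < τ2.length, τ.getD q 0 ≤ σ2'.getD q 0) →
      ∀ τ : List ℕ, τ <+ σ2 ++ [s] → Srt (σ2 ++ [s]) → YP τ (τ2 ++ [t]) → ∀ q < (τ2 ++ [t]).length,
        τ.getD q 0 ≤ (σ2' ++ [v]).getD q 0 := by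
    intro τ2 σ2 τ2' σ2' f t s v h hst hv ih τ hτ hs hY q hq
    have hq0 := hq
    rcases List.eq_nil_or_concat τ with rfl | ⟨τ0, b, rfl⟩
    · have := hY.1; simp at this
    · simp only [List.concat_eq_append] at *
      have hsub : τ0 <+ σ2 := by
        have := List.Sublist.reverse hτ
        simp at this
        have := List.Sublist.tail this
        simp at this
        exact this
      have hYm := hY.mat
      have hl := h.ylen (yp hsub (srt_snoc.1 hs).1 hYm)
      simp at hq
      rcases Nat.lt_or_ge q τ2.length with hk | hk
      · rw [gd_lt (by have := hYm.1; omega), gd_lt (by omega)]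
        exact ih τ0 hsub (srt_snoc.1 hs).1 hYm q hk
      · have e : q = σ2'.length := by omega
        rw [e, gd_eq]
        rcases hv with rfl | rfl
        · have hm := hτ.subset (gd_mem (l := τ0 ++ [b]) (q := σ2'.length)
            (by have := hYm.1; simp; omega))
          rcases List.mem_append.1 hm with hm | hm
          · exact ((srt_snoc.1 hs).2 _ hm).le
          · simp only [List.mem_singleton] at hm; exact hm.le
        · have := hY.2 σ2'.length (by simp; omega)
          rw [hl.2, gd_eq] at this
          rw [hl.2]; omega
  induction h with
  | base => intro τ hτ _ hY q hq; have := hY.1; simp at hτ; subst hτ; simp at this; simp [this] at hq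
  | @fail τ0 σ τ' σ' t s f h hts ih =>
    intro τ hτ hs hY q hq
    obtain ⟨τa, τb, rfl, ha, hb⟩ := List.sublist_append_iff.1 hτ
    have hb' : τb = [] ∨ τb = [s] := by
      simpa using hb
    rcases hb' with rfl | rfl
    · rw [List.append_nil] at hY ⊢
      exact ih τa ha (srt_snoc.1 hs).1 hY q hq
    · have hY' := hY.fail hts
      rw [gd_lt (by have := hY'.1; omega)]
      exact ih τa ha (srt_snoc.1 hs).1 hY' q hq
  | mdec h ih => exact key h le_rfl (Or.inr rfl) ih
  | mat h hts _ ih => exact key h hts (Or.inl rfl) ih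

theorem slideK (G : List ℕ) {b d : ℕ} (hs : Srt (G ++ [d])) (hb : d < b) :
    K (b :: (G ++ [d])) (G ++ b :: [d]) := by
  induction G with
  | nil => exact K.refl _
  | cons g G ih =>
    have hs' : Srt (G ++ [d]) := (List.pairwise_cons.1 hs).2
    refine K.trans ?_ (by simpa using (ih hs').left [g])
    obtain ⟨n, R, e⟩ : ∃ n R, G ++ [d] = n :: R := by
      cases G <;> simp
    have h1 : g < n := (List.pairwise_cons.1 hs).1 n (by simp [e])
    have h2 : n < b := by
      have : n ∈ G ++ [d] := by simp [e]
      rcases List.mem_append.1 this with h | h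
      · exact ((srt_snoc.1 hs').2 n h).trans hb
      · simp at h; omega
    rw [List.cons_append, e]
    exact (K.r2 [] R h1 h2).symm

theorem slideEq (G : List ℕ) {v : ℕ} (hs : Srt (G ++ [v])) :
    K ((v+1) :: (G ++ [v, v+1])) (G ++ [v, v+1, v]) := by
  refine K.trans (w' := G ++ [v+1, v, v+1]) ?_ ?_
  · simpa using (slideK G hs (b := v+1) (by omega)).right [v+1]
  · simpa using (K.r3 G [] v).symm

theorem lastpred {G : List ℕ} {b : ℕ} (hs : Srt (G ++ [b])) (h : IsReducedWord (b :: (G ++ [b]))) :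
    ∃ G0 v, G = G0 ++ [v] ∧ b = v + 1 := by
  rcases List.eq_nil_or_concat G with rfl | ⟨G0, g, rfl⟩
  · exact (Red.not_aa h).elim
  · simp only [List.concat_eq_append] at *
    refine ⟨G0, g, rfl, ?_⟩
    have hg : g < b := (srt_snoc.1 hs).2 g (by simp)
    have hk := (slideK G0 (b := b) (srt_snoc.1 hs).1 hg).right [b]
    have := hk.red (by simpa using h)
    have h2 : IsReducedWord ([b, g, b]) := Red.right (u := G0) (by simpa using this)
    rcases Red.not_bgb h2 with h | h <;> omega

/-- moving a letter across a block -/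
theorem slideG {G : List ℕ} {b d : ℕ} (hs : Srt (G ++ [d])) (hdb : d ≤ b)
    (h : IsReducedWord (b :: (G ++ [d]))) :
    (d < b ∧ K (b :: (G ++ [d])) (G ++ [b, d])) ∨
    (∃ G0 v, G = G0 ++ [v] ∧ b = v + 1 ∧ d = v + 1 ∧ K (b :: (G ++ [d])) (G ++ [v+1, v])) := by
  rcases hdb.lt_or_eq with hlt | rfl
  · exact Or.inl ⟨hlt, slideK G hs hlt⟩
  · right
    obtain ⟨G0, v, rfl, rfl⟩ := lastpred hs h
    refine ⟨G0, v, rfl, rfl, rfl, ?_⟩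
    have := slideEq G0 (v := v) (srt_snoc.1 hs).1
    simpa using this

theorem R1 {Q G : List ℕ} {b d : ℕ} (hs : Srt (G ++ [d])) (hdb : d ≤ b)
    (h : IsReducedWord (Q ++ b :: (G ++ [d]))) : IsReducedWord (Q ++ G) := by
  rcases slideG hs hdb (Red.right h) with ⟨_, hk⟩ | ⟨_, v, _, _, _, hk⟩
  · exact Red.left (v := [b, d]) (by simpa using (hk.left Q).red h)
  · exact Red.left (v := [v+1, v]) (by simpa using (hk.left Q).red h)

inductive Dom : List ℕ → List ℕ → Prop
  | nil (δ) : Dom [] δ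
  | cons {b d : ℕ} {β δ : List ℕ} : d ≤ b → Dom β δ → Dom (b :: β) (d :: δ)

theorem Rm {β δ : List ℕ} (hD : Dom β δ) : ∀ {Q G : List ℕ}, Srt (G ++ δ) →
    IsReducedWord (Q ++ β ++ G ++ δ) → IsReducedWord (Q ++ G) := by
  induction hD with
  | nil δ => intro Q G hs h; exact Red.left (v := δ) (by simpa using h)
  | @cons b d β δ hdb hD ih =>
    intro Q G hs h
    have h1 := ih (Q := Q ++ [b]) (G := G ++ [d]) (by simpa using hs) (by simpa using h)
    refine R1 (b := b) (d := d) ?_ hdb (by simpa using h1)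
    have : Srt ((G ++ [d]) ++ δ) := by simpa using hs
    exact (srt_app.1 this).1

inductive RJ : List ℕ → List ℕ → Prop
  | nil (α) : RJ α []
  | snoc {α γ : List ℕ} {a c : ℕ} : RJ α γ → c ≤ a → RJ (α ++ [a]) (γ ++ [c])

theorem RJ.shift {α γ : List ℕ} (h : RJ α γ) : ∀ x, Srt γ → (∀ c ∈ γ, c < x) → RJ (α ++ [x]) γ := by
  induction h with
  | nil α => intros; exact RJ.nil _
  | @snoc α γ a c h hca ih =>
    intro x hs hx
    refine RJ.snoc (ih a (srt_snoc.1 hs).1 fun y hy => ?_) (hx c (by simp)).le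
    exact ((srt_snoc.1 hs).2 y hy).trans_le hca

theorem RJ_B {α γ : List ℕ} (h : RJ α γ) : ∀ x, Srt (α ++ [x]) → Srt γ → IsReducedWord (α ++ γ) →
    K (α ++ γ ++ [x]) (α ++ [x] ++ γ) := by
  induction h with
  | nil α => intro x _ _ _; simpa using K.refl _
  | @snoc α γ a c h hca ih =>
    intro x h1 h2 h3
    have h4 := srt_snoc.1 h1
    have hax : a < x := h4.2 a (by simp)
    have hr : IsReducedWord (α ++ γ) := R1 (b := a) (d := c) h2 hca (by simpa using h3)
    have k1 := ih a h4.1 (srt_snoc.1 h2).1 hr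
    have hr2 : IsReducedWord (α ++ γ ++ [a, c]) := by
      have := (k1.symm.right [c]).red (by simpa using h3)
      simpa using this
    have hne : c < a := by
      rcases hca.lt_or_eq with h | rfl
      · exact h
      · exact (Red.not_aa (Red.right hr2)).elim
    have e1 : K (α ++ [a] ++ γ ++ [c, x]) (α ++ γ ++ [a] ++ [c, x]) := k1.symm.right _
    have e2 : K (α ++ γ ++ [a] ++ [c, x]) (α ++ γ ++ [a, x, c]) := by
      simpa using K.r1 (α ++ γ) [] hne hax
    have e3 : K (α ++ γ ++ [a, x, c]) (α ++ [a] ++ γ ++ [x, c]) := by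
      simpa using k1.right [x, c]
    have e4 : K (γ ++ [x, c]) (x :: (γ ++ [c])) := by
      simpa using (slideK γ (b := x) h2 (by omega)).symm
    have e5 := e4.left (α ++ [a])
    simpa using e1.trans (e2.trans (e3.trans (by simpa using e5)))

theorem LP_T {β δ : List ℕ} (hD : Dom β δ) : ∀ {P G0 P' G' : List ℕ} {g : ℕ} {fl : Option ℕ},
    K (P ++ (G0 ++ [g])) (P' ++ G') → Srt (G0 ++ [g] ++ δ) → Srt G' →
    ((fl = some g ∧ ∀ a ∈ G', a < g) ∨ (fl = none ∧ ∃ G1, G' = G1 ++ [g])) →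
    IsReducedWord (P ++ β ++ (G0 ++ [g]) ++ δ) →
    K (P ++ β ++ (G0 ++ [g]) ++ δ) (P' ++ β ++ G' ++ Dd fl β δ) := by
  induction hD with
  | nil δ =>
    intro P G0 P' G' g fl hk _ _ _ _
    rw [Dd_nil]; simpa using hk.right δ
  | @cons b d β δ hdb hD ih =>
    intro P G0 P' G' g fl hk hs hs' hm hr
    have hsd : Srt ((G0 ++ [g]) ++ [d]) := by
      have : Srt (G0 ++ [g] ++ [d] ++ δ) := by simpa using hs
      exact (srt_app.1 this).1
    have hgd : g < d := (srt_snoc.1 hsd).2 g (by simp)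
    have hr2 : IsReducedWord ((P ++ [b]) ++ (G0 ++ [g] ++ [d])) :=
      Rm hD (by simpa using hs) (by simpa using hr)
    have hr3 : IsReducedWord (b :: (G0 ++ [g] ++ [d])) := Red.right (u := P) (by simpa using hr2)
    have G'd : ∀ a ∈ G', a < d := by
      intro a ha
      rcases hm with ⟨_, h⟩ | ⟨_, G1, rfl⟩
      · exact (h a ha).trans hgd
      · rcases List.mem_append.1 ha with h | h
        · exact ((srt_snoc.1 hs').2 a h).trans hgd
        · simp at h; omega
    rcases slideG hsd hdb hr3 with ⟨hlt, k⟩ | ⟨G2, v, e, rfl, rfl, k⟩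
    · have hDd : Dd fl (b :: β) (d :: δ) = d :: δ := by
        cases fl with
        | none => rfl
        | some v => simp only [Dd]; rw [if_neg]; omega
      have kk : K ((P ++ [b]) ++ ((G0 ++ [g]) ++ [d])) ((P' ++ [b]) ++ (G' ++ [d])) := by
        have a1 : K (P ++ [b] ++ ((G0 ++ [g]) ++ [d])) (P ++ (G0 ++ [g]) ++ [b, d]) := by
          simpa using k.left P
        have a2 := hk.right [b, d]
        have a3 : K (P' ++ G' ++ [b, d]) (P' ++ [b] ++ (G' ++ [d])) := by
          simpa using ((slideK G' (b := b) (srt_snoc.2 ⟨hs', G'd⟩) hlt).left P').symm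
        exact a1.trans (a2.trans a3)
      have := ih (fl := none) kk (by simpa using hs) (srt_snoc.2 ⟨hs', G'd⟩) (Or.inr ⟨rfl, G', rfl⟩)
        (by simpa using hr)
      rw [Dd_none] at this
      rw [hDd]
      simpa using this
    · have ⟨e1, e2⟩ := List.append_inj' e rfl
      simp at e2; subst e1 e2
      have a1 : K (P ++ [g+1] ++ ((G0 ++ [g]) ++ [g+1])) (P ++ (G0 ++ [g]) ++ [g+1, g]) := by
        simpa using k.left P
      have a2 := hk.right [g+1, g]
      rcases hm with ⟨rfl, hG⟩ | ⟨rfl, G1, rfl⟩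
      · have hsg := srt_snoc.2 ⟨hs', hG⟩
        have a3 : K (P' ++ G' ++ [g+1, g]) (P' ++ [g+1] ++ (G' ++ [g])) := by
          simpa using ((slideK G' (b := g+1) hsg (by omega)).left P').symm
        have := ih (fl := some (g+1)) (a1.trans (a2.trans a3)) (by simpa using hs) hsg
          (Or.inl ⟨rfl, ?_⟩) (by simpa using hr)
        · simpa [Dd] using this
        · intro a ha
          rcases List.mem_append.1 ha with h | h
          · have := hG a h; omega
          · simp at h; omega
      · have a3 : K (P' ++ (G1 ++ [g]) ++ [g+1, g]) (P' ++ [g+1] ++ ((G1 ++ [g]) ++ [g+1])) := by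
          have := slideEq G1 hs'
          simpa using (this.left P').symm
        have := ih (fl := none) (a1.trans (a2.trans a3)) (by simpa using hs)
          (srt_snoc.2 ⟨hs', G'd⟩) (Or.inr ⟨rfl, _, rfl⟩) (by simpa using hr)
        rw [Dd_none] at this
        rw [Dd_none]
        simpa using this

theorem Dom_shift {β δ : List ℕ} (hD : Dom β δ) : ∀ s, Srt (s :: δ) → Dom β (s :: δ) := by
  induction hD with
  | nil => intros; exact Dom.nil _
  | @cons b d β δ hdb hD ih =>
    intro s hs
    have := List.pairwise_cons.1 hs
    exact Dom.cons ((this.1 d (by simp)).le.trans hdb) (ih d this.2)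

theorem LP.K2 {τ σ τ' σ' f} (h : LP τ σ τ' σ' f) : 
    (Srt τ → Srt σ → RJ τ' σ') ∧ ∀ β δ, Dom β δ → Srt (τ ++ β) → Srt (σ ++ δ) →
    IsReducedWord (τ ++ β ++ σ ++ δ) → K (τ ++ β ++ σ ++ δ) (τ' ++ β ++ σ' ++ Dd f β δ) := by
  induction h with
  | base τ =>
    refine ⟨fun _ _ => RJ.nil _, fun β δ _ _ _ _ => ?_⟩
    rw [Dd_none]; exact K.refl _
  | @fail τ0 σ τ' σ' t s f h hts ih =>
    have rj : Srt (τ0 ++ [t]) → Srt (σ ++ [s]) → RJ (τ' ++ [s]) σ' := by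
      intro h1 h2
      have h3 := srt_snoc.1 h2
      refine (ih.1 h1 h3.1).shift s (h.srt h1 h3.1).2 ?_
      intro c hc
      obtain ⟨u, hu, hle⟩ := h.lo c hc
      exact hle.trans_lt (h3.2 u hu)
    refine ⟨rj, ?_⟩
    intro β δ hD h1 h2 hr
    have hτ : Srt (τ0 ++ [t]) := (srt_app.1 h1).1
    have h2' : Srt (σ ++ [s]) := (srt_app.1 h2).1
    have hsδ : Srt (s :: δ) := by
      have : Srt (σ ++ s :: δ) := by simpa using h2
      exact (srt_app.1 this).2.1
    have k1 := ih.2 β (s :: δ) (Dom_shift hD s hsδ) h1 (by simpa using h2) (by simpa using hr)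
    have e1 : Dd f β (s :: δ) = s :: δ := by
      cases f with
      | none => rw [Dd_none]
      | some v =>
        cases hD with
        | nil => rw [Dd_nil]
        | @cons b d β δ hdb hD =>
          simp only [Dd]; rw [if_neg]
          have := (List.pairwise_cons.1 hsδ).1 d (by simp)
          omega
    rw [e1] at k1
    have hss := h.srt hτ (srt_snoc.1 h2').1
    have hs's : ∀ c ∈ σ', c < s := by
      intro c hc
      obtain ⟨u, hu, hle⟩ := h.lo c hc
      exact hle.trans_lt ((srt_snoc.1 h2').2 u hu)
    have hs2 : Srt (σ' ++ [s] ++ δ) := by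
      rw [srt_app]
      refine ⟨srt_snoc.2 ⟨hss.2, hs's⟩, (List.pairwise_cons.1 hsδ).2, ?_⟩
      intro a ha d hd
      have := (List.pairwise_cons.1 hsδ).1 d hd
      rcases List.mem_append.1 ha with h | h
      · exact (hs's a h).trans this
      · simp at h; omega
    have hr1 : IsReducedWord (τ' ++ β ++ (σ' ++ [s]) ++ δ) := by
      have := k1.red (by simpa using hr)
      simpa using this
    have hr2 : IsReducedWord (τ' ++ (σ' ++ [s])) := Rm hD hs2 hr1
    have hτs : Srt (τ' ++ [s]) := ((h.fail hts).srt hτ h2').1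
    have kB := RJ_B (ih.1 hτ (srt_snoc.1 h2').1) s hτs hss.2
      (Red.left (v := [s]) (by simpa using hr2))
    have kT := LP_T hD (P := τ') (G0 := σ') (g := s) (P' := τ' ++ [s]) (G' := σ') (fl := some s)
      (by simpa using kB) hs2 hss.2 (Or.inl ⟨rfl, hs's⟩) hr1
    refine K.trans (by simpa using k1) ?_
    simpa using kT
  | @mdec τ σ τ' σ' v h ih =>
    refine ⟨fun h1 h2 => RJ.snoc (ih.1 (srt_snoc.1 h1).1 (srt_snoc.1 h2).1) (by omega), ?_⟩
    intro β δ hD h1 h2 hr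
    have := ih.2 ((v+1) :: β) ((v+1) :: δ) (Dom.cons le_rfl hD) (by simpa using h1)
      (by simpa using h2) (by simpa using hr)
    simpa [Dd] using this
  | @mat τ σ τ' σ' t s f h hst hf ih =>
    refine ⟨fun h1 h2 => RJ.snoc (ih.1 (srt_snoc.1 h1).1 (srt_snoc.1 h2).1) hst, ?_⟩
    intro β δ hD h1 h2 hr
    have := ih.2 (t :: β) (s :: δ) (Dom.cons hst hD) (by simpa using h1)
      (by simpa using h2) (by simpa using hr)
    have e1 : Dd f (t :: β) (s :: δ) = s :: δ := by
      cases f with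
      | none => rw [Dd_none]
      | some v => simp only [Dd]; rw [if_neg (hf v rfl)]
    rw [e1] at this
    rw [Dd_none]
    simpa using this

theorem LP.K {τ σ τ' σ' f} (h : LP τ σ τ' σ' f) (h1 : Srt τ) (h2 : Srt σ)
    (hr : IsReducedWord (τ ++ σ)) : K (τ ++ σ) (τ' ++ σ') := by
  have := h.K2.2 [] [] (Dom.nil _) (by simpa using h1) (by simpa using h2) (by simpa using hr)
  simpa [Dd_nil] using this

theorem LP.claim {τ σ τ' σ' f} (h : LP τ σ τ' σ' f) : ∀ v σ0, σ = σ0 ++ [v] → (∀ t ∈ τ, t ≤ v) →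
    τ.length < σ.length → Srt τ → Srt σ → IsReducedWord (τ ++ σ) → f = some v := by
  induction h with
  | base => intro v σ0 h; simp at h
  | fail h _ ih =>
    intro v σ0 h
    have := (List.append_inj' h rfl).2
    simp at this; intros; simp [this]
  | mdec h ih =>
    intro v σ0 h
    have := (List.append_inj' h rfl).2
    simp at this; intros; simp [this]
  | @mat τ σ τ' σ' t s f h hst hf ih =>
    intro v σ0 he ht hl hs1 hs2 hr
    have := (List.append_inj' he rfl).2
    simp at this; subst this
    have : t = s := le_antisymm (ht t (by simp)) hst
    subst this
    obtain ⟨G0, w, rfl, rfl⟩ := lastpred hs2 (Red.right (u := τ) (by simpa using hr))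
    exfalso
    refine hf w (ih w G0 rfl ?_ (by simpa using hl) (srt_snoc.1 hs1).1 (srt_snoc.1 hs2).1
      (R1 hs2 le_rfl (by simpa using hr))) ⟨rfl, rfl⟩
    intro a ha
    have := (srt_snoc.1 hs1).2 a ha; omega

theorem LP.ylt {τ σ τ' σ' f} (h : LP τ σ τ' σ' f) : YP σ τ → Srt τ → Srt σ →
    IsReducedWord (τ ++ σ) → ∀ q < τ.length, σ'.getD q 0 < τ.getD q 0 := by
  induction h with
  | base => intro hY _ _ _ q hq; have := hY.1; simp at this; simp [this] at hq
  | fail h hts ih =>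
    intro hY h1 h2 hr
    exact ih (hY.fail hts) h1 (srt_snoc.1 h2).1 (Red.left (v := [_]) (by simpa using hr))
  | @mdec τ σ τ' σ' v h ih =>
    intro hY h1 h2 hr q hq
    have hl := h.ylen hY.mat
    simp at hq
    rcases Nat.lt_or_ge q τ.length with hk | hk
    · rw [gd_lt (by omega), gd_lt hk]
      exact ih hY.mat (srt_snoc.1 h1).1 (srt_snoc.1 h2).1 (R1 h2 le_rfl (by simpa using hr)) q hk
    · have e : q = τ.length := by omega
      subst e
      rw [gd_eq, ← hl.2, gd_eq]; omega
  | @mat τ σ τ' σ' t s f h hst hf ih =>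
    intro hY h1 h2 hr q hq
    have hl := h.ylen hY.mat
    have hr' := R1 h2 hst (by simpa using hr)
    simp at hq
    rcases Nat.lt_or_ge q τ.length with hk | hk
    · rw [gd_lt (by omega), gd_lt hk]
      exact ih hY.mat (srt_snoc.1 h1).1 (srt_snoc.1 h2).1 hr' q hk
    · have e : q = τ.length := by omega
      subst e
      rw [gd_eq, ← hl.2, gd_eq]
      rcases hst.lt_or_eq with hlt | rfl
      · exact hlt
      exfalso
      obtain ⟨G0, w, rfl, rfl⟩ := lastpred h2 (Red.right (u := τ) (by simpa using hr))
      refine hf w (h.claim w G0 rfl ?_ ?_ (srt_snoc.1 h1).1 (srt_snoc.1 h2).1 hr') ⟨rfl, rfl⟩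
      · intro a ha
        have := (srt_snoc.1 h1).2 a ha; omega
      · have h4 := hY.mat.1
        rcases h4.lt_or_eq with h4 | h4
        · exact h4
        · have := hY.2 τ.length (by simp)
          rw [gd_eq, h4, gd_eq] at this; omega

theorem liftAt_app (k : ℕ) : ∀ (X Y : List (List ℕ)), k < X.length →
    liftAt k (X ++ Y) = liftAt k X ++ Y := by
  induction k with
  | zero => intro X Y _; simp [liftAt]
  | succ k ih =>
    intro X Y h
    cases k with
    | zero =>
      match X, h with
      | a :: b :: X, _ => simp [liftAt]
    | succ k =>
      match X, h with
      | a :: X, h => simp only [List.cons_append, liftAt]; rw [ih X Y (by simpa using h)]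

theorem liftAt_pair (A : List (List ℕ)) (σ τ R) : liftAt (A.length + 1) (A ++ σ :: τ :: R) =
    A ++ (liftPair τ σ).2 :: (liftPair τ σ).1 :: R := by
  induction A with
  | nil => simp [liftAt]
  | cons a A ih => simp only [List.length_cons, List.cons_append, liftAt]; rw [ih]

theorem liftAt_big (k : ℕ) : ∀ (X : List (List ℕ)), X.length ≤ k → liftAt k X = X := by
  induction k with
  | zero => intro X _; simp [liftAt]
  | succ k ih =>
    intro X h
    cases k with
    | zero =>
      match X, h with
      | [], _ => rfl
      | [a], _ => rfl
    | succ k =>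
      match X, h with
      | [], _ => rfl
      | a :: X, h => simp only [liftAt]; rw [ih X (by simpa using h)]

theorem liftAt_ne {k : ℕ} {T : List (List ℕ)} (h : liftAt k T ≠ T) :
    ∃ A σ τ R τ' σ' f, T = A ++ σ :: τ :: R ∧ k = A.length + 1 ∧ LP τ σ τ' σ' f ∧
      liftAt k T = A ++ σ' :: τ' :: R ∧ τ.length < τ'.length := by
  have h1 : k < T.length := by
    by_contra hc; exact h (liftAt_big k T (by omega))
  have h0 : k ≠ 0 := by rintro rfl; exact h (by simp [liftAt])
  obtain ⟨m, rfl⟩ : ∃ m, k = m + 1 := ⟨k - 1, by omega⟩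
  obtain ⟨σ, τ, R, e⟩ : ∃ σ τ R, T.drop m = σ :: τ :: R := by
    match hd : T.drop m with
    | [] => have := congrArg List.length hd; simp at this; omega
    | [a] => have := congrArg List.length hd; simp at this; omega
    | a :: b :: R => exact ⟨a, b, R, rfl⟩
  have eT : T = T.take m ++ σ :: τ :: R := by rw [← e, List.take_append_drop]
  have em : m = (T.take m).length := by simp; omega
  have e2 := liftAt_pair (T.take m) σ τ R
  rw [← em, ← eT] at e2
  have hne : liftPair τ σ ≠ (τ, σ) := by
    intro hc
    rw [hc] at e2
    exact h (e2.trans eT.symm)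
  obtain ⟨f, hf⟩ := LP_of_ne hne
  refine ⟨T.take m, σ, τ, R, _, _, f, eT, by rw [← em], hf, e2, ?_⟩
  have := hf.len
  rcases this.2.1.lt_or_eq with h | h
  · exact h
  · have := hf.eqlen h.symm
    exact (hne (Prod.ext this.1 this.2.1)).elim

abbrev hd (r : List ℕ) : ℕ := r.headD 0

structure Wf (T : List (List ℕ)) : Prop where
  ne : ∀ r ∈ T, r ≠ []
  srt : ∀ r ∈ T, Srt r
  inc : (T.map hd).Pairwise (· < ·)
  red : IsReducedWord (wordOf T)

theorem Wf.left {X Y : List (List ℕ)} (h : Wf (X ++ Y)) : Wf X := by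
  refine ⟨fun r hr => h.ne r (by simp [hr]), fun r hr => h.srt r (by simp [hr]), ?_, ?_⟩
  · have := h.inc; rw [List.map_append] at this
    exact (List.pairwise_append.1 this).1
  · have := h.red; rw [wordOf_append] at this; exact Red.right this

theorem wordOf_pair (A : List (List ℕ)) (σ τ R) : wordOf (A ++ σ :: τ :: R) =
    wordOf R ++ (τ ++ σ) ++ wordOf A := by
  simp [wordOf]

theorem head_hd {l m : List ℕ} (h : l.head? = m.head?) : hd l = hd m := by
  simp [hd, List.headD_eq_head?_getD, h]

structure PreL (T T' : List (List ℕ)) : Prop where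
  wf : Wf T'
  k : K (wordOf T) (wordOf T')
  h : T'.map hd = T.map hd

theorem PreL.len {T T'} (h : PreL T T') : T'.length = T.length := by
  have := congrArg List.length h.h; simpa using this

theorem LP.pre {A R : List (List ℕ)} {σ τ τ' σ' : List ℕ} {f} (h : LP τ σ τ' σ' f)
    (w : Wf (A ++ σ :: τ :: R)) : PreL (A ++ σ :: τ :: R) (A ++ σ' :: τ' :: R) := by
  have hτ := w.srt τ (by simp)
  have hσ := w.srt σ (by simp)
  have hτn := w.ne τ (by simp)
  have hσn := w.ne σ (by simp)
  have hr := w.red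
  rw [wordOf_pair] at hr
  have hk := h.K hτ hσ (Red.factor hr)
  have hhd : hd σ < hd τ := by
    have := w.inc
    rw [List.map_append] at this
    have := (List.pairwise_append.1 this).2.1
    simp only [List.map_cons, List.pairwise_cons] at this
    exact this.1 _ (by simp)
  have hH := h.head hτ (by
    intro a ha b hb
    cases τ with
    | nil => simp at ha
    | cons x τ =>
      cases σ with
      | nil => simp at hb
      | cons y σ => simp at ha hb hhd; omega)
  have hs := h.srt hτ hσ
  have hh : (A ++ σ' :: τ' :: R).map hd = (A ++ σ :: τ :: R).map hd := by
    simp only [List.map_append, List.map_cons, head_hd hH.1, head_hd hH.2]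
  have hK : EG.K (wordOf (A ++ σ :: τ :: R)) (wordOf (A ++ σ' :: τ' :: R)) := by
    rw [wordOf_pair, wordOf_pair]; exact hk.append _ _
  have hτn' : τ' ≠ [] := by rintro rfl; exact hτn (by simpa using hH.1.symm)
  have hσn' : σ' ≠ [] := by rintro rfl; exact hσn (by simpa using hH.2.symm)
  refine ⟨⟨?_, ?_, ?_, hK.red w.red⟩, hK, hh⟩
  · intro r hr
    simp at hr
    rcases hr with hr | rfl | rfl | hr
    · exact w.ne r (by simp [hr])
    · exact hσn'
    · exact hτn'
    · exact w.ne r (by simp [hr])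
  · intro r hr
    simp at hr
    rcases hr with hr | rfl | rfl | hr
    · exact w.srt r (by simp [hr])
    · exact hs.2
    · exact hs.1
    · exact w.srt r (by simp [hr])
  · rw [hh]; exact w.inc

theorem PreL.refl {T} (w : Wf T) : PreL T T := ⟨w, K.refl _, rfl⟩

theorem liftAt_pre (k : ℕ) {T : List (List ℕ)} (w : Wf T) : PreL T (liftAt k T) := by
  by_cases h : liftAt k T = T
  · rw [h]; exact PreL.refl w
  · obtain ⟨A, σ, τ, R, τ', σ', f, rfl, rfl, hf, e, _⟩ := liftAt_ne h
    rw [e]; exact hf.pre w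

def seqF (i n : ℕ) (T : List (List ℕ)) : List (List ℕ) :=
  (List.range' i n).foldl (fun t k => liftAt k t) T

theorem seqF_zero (i T) : seqF i 0 T = T := rfl
theorem seqF_succ (i n T) : seqF i (n+1) T = liftAt (i+n) (seqF i n T) := by
  simp [seqF, List.range'_1_concat]
theorem seqF_succ' (i n T) : seqF i (n+1) T = seqF (i+1) n (liftAt i T) := by
  simp [seqF, List.range'_succ]

theorem seqF_pre (i n : ℕ) {T : List (List ℕ)} (w : Wf T) : PreL T (seqF i n T) := by
  induction n with
  | zero => exact PreL.refl w
  | succ n ih =>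
    rw [seqF_succ]
    have h2 := liftAt_pre (i+n) ih.wf
    exact ⟨h2.wf, ih.k.trans h2.k, h2.h.trans ih.h⟩

theorem seqF_app (i n : ℕ) {X Y : List (List ℕ)} (w : Wf X) (h : i + n ≤ X.length) :
    seqF i n (X ++ Y) = seqF i n X ++ Y := by
  induction n with
  | zero => rfl
  | succ n ih =>
    rw [seqF_succ, seqF_succ, ih (by omega), liftAt_app]
    rw [(seqF_pre i n w).len]; omega

def Faith (i n : ℕ) (T : List (List ℕ)) : Prop :=
  ∀ k < n, liftAt (i+k) (seqF i k T) ≠ seqF i k T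

theorem faith_iff (n : ℕ) : ∀ (i : ℕ) (T : List (List ℕ)),
    faithfulAux n i T = true ↔ 0 < n ∧ Faith i n T := by
  induction n with
  | zero => intro i T; simp [faithfulAux]
  | succ n ih =>
    intro i T
    simp only [faithfulAux]
    by_cases h : liftAt i T = T
    · simp only [h, if_true]
      simp only [Bool.false_eq_true, false_iff]
      rintro ⟨_, h1⟩
      exact h1 0 (by omega) h
    · rw [if_neg h]
      by_cases hn : n = 0
      · subst hn
        simp only [if_true, true_iff]
        refine ⟨by omega, fun k hk => ?_⟩
        have : k = 0 := by omega
        subst this; exact h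
      · rw [if_neg hn, ih]
        constructor
        · rintro ⟨_, h1⟩
          refine ⟨by omega, fun k hk => ?_⟩
          cases k with
          | zero => exact h
          | succ k =>
            have := h1 k (by omega)
            rw [seqF_succ', show i + (k+1) = i + 1 + k by omega]; exact this
        · rintro ⟨_, h1⟩
          refine ⟨by omega, fun k hk => ?_⟩
          have := h1 (k+1) (by omega)
          rwa [seqF_succ', show i + (k+1) = i + 1 + k by omega] at this

theorem faithSeq_iff (i j : ℕ) (T : List (List ℕ)) :
    faithfulSeq i j T = true ↔ i ≤ j ∧ Faith i (j + 1 - i) T := by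
  unfold faithfulSeq
  split_ifs with h
  · rw [faith_iff]; simp [h]
  · simp [h]

theorem Faith.app {i n : ℕ} {X Y : List (List ℕ)} (w : Wf X) (h : i + n ≤ X.length) :
    Faith i n (X ++ Y) ↔ Faith i n X := by
  unfold Faith
  constructor
  · intro h1 k hk
    have := h1 k hk
    rw [seqF_app _ _ w (by omega), liftAt_app _ _ _ (by rw [(seqF_pre i k w).len]; omega)] at this
    intro hc; exact this (by rw [hc])
  · intro h1 k hk
    rw [seqF_app _ _ w (by omega), liftAt_app _ _ _ (by rw [(seqF_pre i k w).len]; omega)]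
    intro hc
    exact h1 k hk (List.append_cancel_right hc)

/-- the length of a row is bounded through `F` -/
theorem row_F {X : List (List ℕ)} {r : List ℕ} (w : Wf (X ++ [r])) :
    ∀ j < r.length, 1 ≤ F j (Pc (wordOf (X ++ [r]))) (hd r - 1) := by
  have hr := w.red
  have hs := w.srt r (by simp)
  rw [wordOf_snoc] at hr ⊢
  cases r with
  | nil => simp
  | cons x R =>
    have := (row_lemma R x (Pc (wordOf X)) hs (Pc_red hr)).1
    rw [Pc_append]
    simpa using this

def FinR (X : List (List ℕ)) (r : List ℕ) : Prop :=
  F r.length (Pc (wordOf (X ++ [r]))) (hd r - 1) = 0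

def Fins (V U : List (List ℕ)) : Prop := ∀ X r Y, U = X ++ r :: Y → FinR (V ++ X) r

theorem Pc_pre {T T' : List (List ℕ)} (w : Wf T) (h : PreL T T') : Pc (wordOf T') = Pc (wordOf T) :=
  (Pc_K h.k w.red).symm

theorem noHigh {V U : List (List ℕ)} (w : Wf (V ++ U)) (hF : Fins V U) {i j : ℕ}
    (hj : V.length ≤ j) : faithfulSeq i j (V ++ U) = false := by
  rw [Bool.eq_false_iff]
  intro hc
  rw [faithSeq_iff] at hc
  obtain ⟨hij, hc⟩ := hc
  have hl := hc (j - i) (by omega)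
  rw [show i + (j - i) = j by omega] at hl
  have hp := seqF_pre i (j - i) w
  have hjl : j < (V ++ U).length := by
    by_contra h
    exact hl (liftAt_big _ _ (by rw [hp.len]; omega))
  obtain ⟨X, r, Y, hU, hX⟩ : ∃ X r Y, U = X ++ r :: Y ∧ X.length = j - V.length := by
    simp at hjl
    refine ⟨U.take (j - V.length), U[j - V.length], U.drop (j - V.length + 1), ?_, ?_⟩
    · simp
    · simp; omega
  have hfin := hF X r Y hU
  have eT : V ++ U = ((V ++ X) ++ [r]) ++ Y := by simp [hU]
  rw [eT] at w hl
  have w1 := w.left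
  have w0 := w1.left
  have hlen : (V ++ X).length = j := by simp; omega
  rw [seqF_app _ _ w1 (by simp; omega), seqF_app _ _ w0 (by omega),
    liftAt_app _ _ _ (by simp [(seqF_pre i (j-i) w0).len]; omega)] at hl
  have hl' : liftAt j (seqF i (j-i) (V ++ X) ++ [r]) ≠ seqF i (j-i) (V ++ X) ++ [r] := by
    intro h; exact hl (by rw [h])
  have p1 : PreL (V ++ X ++ [r]) (seqF i (j-i) (V ++ X) ++ [r]) := by
    rw [← seqF_app _ _ w0 (by omega)]; exact seqF_pre _ _ w1
  have p2 := liftAt_pre j p1.wf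
  obtain ⟨A, σ, τ, R, τ', σ', f, e1, e2, hf, e3, hlt⟩ := liftAt_ne hl'
  have hR : R = [] := by
    have := congrArg List.length e1
    have h3 := (seqF_pre i (j-i) w0).len
    simp at this h3 hlen
    rw [← List.length_eq_zero_iff]; omega
  subst hR
  have e4 : seqF i (j-i) (V ++ X) ++ [r] = (A ++ [σ]) ++ [τ] := by rw [e1]; simp
  have hr : r = τ := by
    have := (List.append_inj' e4 rfl).2
    simpa using this
  subst hr
  rw [e3] at p2
  have e5 : A ++ [σ', τ'] = (A ++ [σ']) ++ [τ'] := by simp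
  rw [e5] at p2
  have hh : hd τ' = hd r := by
    have := p2.h
    simp only [List.map_append] at this
    simpa using (List.append_inj' this rfl).2
  have h1 := row_F p2.wf r.length hlt
  rw [Pc_pre p1.wf p2, Pc_pre w1 p1, hh] at h1
  unfold FinR at hfin
  omega

theorem maxP (P : ℕ → Prop) (N s0 : ℕ) (h0 : P s0) (hN : s0 < N) :
    ∃ s, s0 ≤ s ∧ s < N ∧ P s ∧ ∀ q, s < q → q < N → ¬ P q := by
  classical
  refine ⟨Nat.findGreatest P (N-1), Nat.le_findGreatest (by omega) h0, ?_,
    Nat.findGreatest_spec (m := s0) (by omega) h0, ?_⟩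
  · have := Nat.findGreatest_le (P := P) (N-1); omega
  · intro q h1 h2; exact Nat.findGreatest_is_greatest h1 (by omega)

def Q : List (List ℕ) → ℕ → ℕ → Prop
  | [], _, _ => True
  | τ :: Cr, s, B => s < τ.length ∧ τ.getD s 0 < B ∧
      (Q Cr s B ∨ ∃ s', s' < s ∧ ∃ B', B' ≤ τ.getD (s'+1) 0 ∧ Q Cr s' B')

theorem mkQ (a : ℕ → ℕ) (N : ℕ) (hinc : ∀ q, q + 1 < N → a q < a (q+1)) :
    ∀ (Cr Bs : List (List ℕ)) (top : List ℕ), (Bs ++ (Cr ++ [top])).Pairwise YP →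
    (∀ q < N, ∃ r ∈ Bs ++ (Cr ++ [top]), q < r.length ∧ r.getD q 0 = a q) →
    (∀ r ∈ Cr ++ [top], r.length < N) → 0 < top.length → top.getD 0 0 = a 0 →
    ∃ s, s + 1 < N ∧ (∃ r ∈ Cr ++ [top], s < r.length ∧ r.getD s 0 = a s) ∧
      (∀ q, s < q → q < N → ∀ r ∈ Cr ++ [top], ¬ (q < r.length ∧ r.getD q 0 = a q)) ∧
      Q (Cr ++ [top]) s (a (s+1)) := by
  intro Cr
  induction Cr with
  | nil =>
    intro Bs top hp hch hl ht0 hta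
    have hl := hl top (by simp)
    obtain ⟨s, h1, h2, h3, h4⟩ := maxP (fun q => q < top.length ∧ top.getD q 0 = a q) N 0
      ⟨ht0, hta⟩ (by omega)
    refine ⟨s, by omega, ⟨top, by simp, h3⟩, ?_, ?_⟩
    · intro q hq hq2 r hr; simp at hr; subst hr; exact h4 q hq hq2
    · refine ⟨h3.1, ?_, Or.inl trivial⟩
      have := hinc s (by omega)
      omega
  | cons τ Cr ih =>
    intro Bs top hp hch hl ht0 hta
    have e : Bs ++ (τ :: Cr ++ [top]) = (Bs ++ [τ]) ++ (Cr ++ [top]) := by simp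
    obtain ⟨s', i1, ⟨ρ, hρ, i2, i3⟩, i4, i5⟩ := ih (Bs ++ [τ]) top (e ▸ hp) (e ▸ hch)
      (fun r hr => hl r (by simp at hr ⊢; tauto)) ht0 hta
    have hτl := hl τ (by simp)
    have hp1 := (List.pairwise_append.1 hp)
    have hτρ : YP τ ρ := by
      have := hp1.2.1
      simp only [List.cons_append, List.pairwise_cons] at this
      exact this.1 ρ hρ
    by_cases hq : ∃ q, s' < q ∧ q < N ∧ q < τ.length ∧ τ.getD q 0 = a q
    · obtain ⟨q0, hq0, hq1, hq2⟩ := hq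
      obtain ⟨s, h1, h2, h3, h4⟩ := maxP (fun q => q < τ.length ∧ τ.getD q 0 = a q) N q0 hq2 hq1
      refine ⟨s, by omega, ⟨τ, by simp, h3⟩, ?_, ?_⟩
      · intro q h5 h6 r hr
        simp only [List.cons_append, List.mem_cons] at hr
        rcases hr with rfl | hr
        · exact h4 q h5 h6
        · exact i4 q (by omega) h6 r hr
      · refine ⟨h3.1, ?_, Or.inr ⟨s', by omega, a (s'+1), ?_, i5⟩⟩
        · have := hinc s (by omega)
          omega
        · obtain ⟨r, hr, hr1, hr2⟩ := hch (s'+1) i1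
          have hn : r ∉ Cr ++ [top] := fun h => i4 (s'+1) (by omega) i1 r h ⟨hr1, hr2⟩
          simp only [List.cons_append, List.mem_append, List.mem_cons] at hr
          rcases hr with hr | hr | hr
          · have := (hp1.2.2 r hr τ (by simp)).2 (s'+1) (by omega)
            omega
          · subst hr; omega
          · exact absurd (by simpa using hr) hn
    · refine ⟨s', i1, ⟨ρ, by simp at hρ ⊢; tauto, i2, i3⟩, ?_, ?_⟩
      · intro q h5 h6 r hr
        simp only [List.cons_append, List.mem_cons] at hr
        rcases hr with rfl | hr
        · intro h7; exact hq ⟨q, h5, h6, h7⟩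
        · exact i4 q (by omega) h6 r hr
      · have h7 := hτρ.1
        have h8 := hτρ.2 s' i2
        have := hinc s' (by omega)
        exact ⟨by omega, by omega, Or.inl i5⟩

theorem LiftCh : ∀ (Cr A : List (List ℕ)) (σ ω : List ℕ) (s B : ℕ), Q Cr s B →
    B ≤ σ.getD (s+1) 0 → s + 1 < σ.length → (∀ r ∈ Cr, r.length < σ.length) →
    (σ :: Cr).Pairwise YP → Wf (A ++ σ :: Cr) → ω <+ σ → (∀ r ∈ Cr, YP ω r) →
    (∀ r ∈ A, YP r ω) → A.Pairwise YP →
    Faith (A.length+1) Cr.length (A ++ σ :: Cr) ∧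
    ∃ A' τ, seqF (A.length+1) Cr.length (A ++ σ :: Cr) = A' ++ [τ] ∧ τ.length = σ.length ∧
      A'.Pairwise YP := by
  intro Cr
  induction Cr with
  | nil =>
    intro A σ ω s B _ _ _ _ _ _ _ _ _ hA
    exact ⟨fun k hk => by simp at hk, A, σ, rfl, rfl, hA⟩
  | cons τ Cr ih =>
    intro A σ ω s B hQ hB hs hl hp w hω hωC hAω hA
    obtain ⟨q1, q2, q3⟩ := hQ
    have hστ : YP σ τ := (List.pairwise_cons.1 hp).1 τ (by simp)
    have hpC := (List.pairwise_cons.1 hp).2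
    have sσ := w.srt σ (by simp)
    have sτ := w.srt τ (by simp)
    have hτσ := hl τ (by simp)
    have hok := ok_young σ τ (σ.length+1) (by omega) sσ hστ (Or.inr ⟨s, q1, hs, by omega⟩)
    obtain ⟨f, hf⟩ := LP_of_ok hok
    have hla := liftAt_pair A σ τ Cr
    generalize (liftPair τ σ).1 = τ' at hf hla
    generalize (liftPair τ σ).2 = σ' at hf hla
    have hr : IsReducedWord (τ ++ σ) := by
      have := w.red; rw [wordOf_pair] at this; exact Red.factor this
    have hlen := hf.ylen hστ
    have hsr := hf.srt sτ sσ
    have hge := hf.yge hστ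
    have heq := hf.yeq s hστ sσ q1 hs (by omega)
    have hlt := hf.ylt hστ sτ sσ hr
    have hle := sub_gd hf.sub hsr.1
    have hemb := hf.emb ω hω sσ (hωC τ (by simp))
    have hw := (hf.pre w).wf
    have hωτ := hωC τ (by simp)
    have e : A ++ σ' :: τ' :: Cr = (A ++ [σ']) ++ τ' :: Cr := by simp
    have key : ∃ s' B', Q Cr s' B' ∧ B' ≤ τ'.getD (s'+1) 0 ∧ s' + 1 < τ'.length := by
      rcases q3 with q3 | ⟨s', h1, B', h2, h3⟩
      · refine ⟨s, B, q3, ?_, by omega⟩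
        have := hge (s+1) hs; omega
      · refine ⟨s', B', h3, ?_, by omega⟩
        rw [heq (s'+1) (by omega)]; exact h2
    obtain ⟨s', B', k1, k2, k3⟩ := key
    have hih := ih (A ++ [σ']) τ' τ s' B' k1 k2 k3
      (fun r hr => by have := hl r (by simp [hr]); omega)
      (by
        refine List.pairwise_cons.2 ⟨?_, (List.pairwise_cons.1 hpC).2⟩
        intro r hr
        have h1 := (List.pairwise_cons.1 hpC).1 r hr
        refine ⟨by have := h1.1; omega, fun j hj => ?_⟩
        have h2 := h1.2 j hj
        have := hle j (by have := h1.1; omega)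
        omega)
      (e ▸ hw) hf.sub (List.pairwise_cons.1 hpC).1
      (by
        intro r hr
        simp at hr
        rcases hr with hr | rfl
        · have h1 := hAω r hr
          refine ⟨h1.1.trans' hωτ.1, fun j hj => ?_⟩
          exact (h1.2 j (by have := hωτ.1; omega)).trans (hωτ.2 j hj)
        · exact ⟨by omega, hlt⟩)
      (by
        rw [List.pairwise_append]
        refine ⟨hA, by simp, ?_⟩
        intro r hr b hb
        simp at hb; subst hb
        have h1 := hAω r hr
        refine ⟨by have := h1.1; have := hωτ.1; omega, fun j hj => ?_⟩
        have := h1.2 j (by have := hωτ.1; omega)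
        have := hemb j (by omega)
        omega)
    have hne : liftAt (A.length+1) (A ++ σ :: τ :: Cr) ≠ A ++ σ :: τ :: Cr := by
      rw [hla]; intro h
      have := List.append_cancel_left h
      simp only [List.cons.injEq] at this
      have := congrArg List.length this.2.1
      omega
    have hl2 : (A ++ [σ']).length + 1 = A.length + 1 + 1 := by simp
    rw [hl2, ← e, ← hla] at hih
    refine ⟨?_, ?_⟩
    · intro k hk
      cases k with
      | zero => exact hne
      | succ k =>
        have := hih.1 k (by simp at hk; omega)
        rw [seqF_succ', show A.length + 1 + (k+1) = A.length + 1 + 1 + k by omega]; exact this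
    · obtain ⟨A', t, h1, h2, h3⟩ := hih.2
      refine ⟨A', t, ?_, by omega, h3⟩
      rw [List.length_cons, seqF_succ']; exact h1

theorem GrowTop : ∀ (C A : List (List ℕ)) (σ : List ℕ),
    Faith (A.length+1) C.length (A ++ σ :: C) →
    ∃ A' τ, seqF (A.length+1) C.length (A ++ σ :: C) = A' ++ [τ] ∧ σ.length ≤ τ.length ∧
      (∀ C0 r, C = C0 ++ [r] → r.length < τ.length) := by
  intro C
  induction C with
  | nil =>
    intro A σ _
    exact ⟨A, σ, rfl, le_rfl, by simp⟩
  | cons τ C ih =>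
    intro A σ hF
    have h0 := hF 0 (by simp)
    simp only [Nat.add_zero, seqF_zero] at h0
    obtain ⟨A1, σ1, τ1, R1, τ', σ', f, e1, e2, hf, e3, hlt⟩ := liftAt_ne h0
    obtain ⟨rfl, e4⟩ := List.append_inj e1 (by omega)
    simp only [List.cons.injEq] at e4
    obtain ⟨rfl, rfl, rfl⟩ := e4
    have hl2 : (A ++ [σ']).length + 1 = A.length + 1 + 1 := by simp
    have e : A ++ σ' :: τ' :: C = (A ++ [σ']) ++ τ' :: C := by simp
    obtain ⟨A', t, h1, h2, h3⟩ := ih (A ++ [σ']) τ' (by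
      rw [hl2, ← e, ← e3]
      intro k hk
      have := hF (k+1) (by simp; omega)
      rwa [seqF_succ', show A.length + 1 + (k+1) = A.length + 1 + 1 + k by omega] at this)
    rw [hl2, ← e, ← e3, ← seqF_succ'] at h1
    have := hf.len
    refine ⟨A', t, h1, by omega, ?_⟩
    intro C0 r hC
    cases C0 with
    | nil =>
      simp at hC
      obtain ⟨rfl, rfl⟩ := hC
      omega
    | cons c C0 =>
      simp at hC
      exact h3 C0 r hC.2

theorem lastP {P : List ℕ → Prop} (V : List (List ℕ)) (h : ∃ r ∈ V, P r) :
    ∃ Bs σ Cr, V = Bs ++ σ :: Cr ∧ P σ ∧ ∀ r ∈ Cr, ¬ P r := by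
  induction V with
  | nil => simp at h
  | cons v V ih =>
    by_cases hV : ∃ r ∈ V, P r
    · obtain ⟨Bs, σ, Cr, rfl, h1, h2⟩ := ih hV
      exact ⟨v :: Bs, σ, Cr, rfl, h1, h2⟩
    · refine ⟨[], v, V, rfl, ?_, fun r hr hp => hV ⟨r, hr, hp⟩⟩
      obtain ⟨r, hr, hp⟩ := h
      simp at hr
      rcases hr with rfl | hr
      · exact hp
      · exact absurd ⟨r, hr, hp⟩ hV

theorem hd_getD (r : List ℕ) : r.getD 0 0 = hd r := by cases r <;> rfl

theorem hd_pos {V : List (List ℕ)} {r : List ℕ} (w : Wf V) (hr : r ∈ V) : 1 ≤ hd r := by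
  have hn := w.ne r hr
  apply w.red.1
  unfold wordOf
  simp only [List.mem_flatten, List.mem_reverse]
  refine ⟨r, hr, ?_⟩
  cases r with
  | nil => exact absurd rfl hn
  | cons a l => simp [hd]

theorem FA {V V0 : List (List ℕ)} {r : List ℕ} {N : ℕ} (hV : V = V0 ++ [r]) (w : Wf V)
    (hp : V.Pairwise YP) (hN : r.length < N)
    (hF : 1 ≤ F (N-1) (Pc (wordOf V)) (hd r - 1)) :
    ∃ Bs σ Cr, V = Bs ++ σ :: Cr ∧ Cr ≠ [] ∧ N ≤ σ.length ∧
      Faith (Bs.length+1) Cr.length V ∧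
      ∃ A' τ, seqF (Bs.length+1) Cr.length V = A' ++ [τ] ∧ τ.length = σ.length ∧
        A'.Pairwise YP := by
  obtain ⟨a, a0, a1, a2⟩ := F_chain _ _ _ hF
  have hrV : r ∈ V := by simp [hV]
  have hcol := Pc_young V w.srt hp
  have hch : ∀ q < N, ∃ r ∈ V, q < r.length ∧ r.getD q 0 = a q :=
    fun q hq => (hcol q (a q)).1 (a1 q (by omega))
  have hpos := hd_pos w hrV
  have hrl : 0 < r.length := by have := w.ne r hrV; exact List.length_pos_iff.2 this
  have ha0 : r.getD 0 0 = a 0 := by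
    rw [nx_some] at a0
    have := a0.2.2 (hd r) ((hcol 0 _).2 ⟨r, hrV, hrl, hd_getD r⟩) (by omega)
    rw [hd_getD]; omega
  obtain ⟨ρ, hρ, hρl, _⟩ := hch (N-1) (by omega)
  obtain ⟨Bs, σ, Cr, e, hσ, hCr⟩ := lastP (P := fun r => N ≤ r.length) V ⟨ρ, hρ, by omega⟩
  have hCne : Cr ≠ [] := by
    rintro rfl
    rw [e] at hV
    have := (List.append_inj' hV rfl).2
    simp at this; subst this; omega
  obtain ⟨C0, t, rfl⟩ : ∃ C0 t, Cr = C0 ++ [t] :=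
    ⟨Cr.dropLast, Cr.getLast hCne, (List.dropLast_append_getLast hCne).symm⟩
  have ht : t = r := by
    rw [e, show Bs ++ σ :: (C0 ++ [t]) = (Bs ++ σ :: C0) ++ [t] by simp] at hV
    have := (List.append_inj' hV rfl).2
    simpa using this
  subst ht
  have e' : V = (Bs ++ [σ]) ++ (C0 ++ [t]) := by rw [e]; simp
  obtain ⟨s, s1, ⟨ρ1, _⟩, s3, s4⟩ := mkQ a N (fun q hq => a2 q (by omega)) C0 (Bs ++ [σ]) t
    (e' ▸ hp) (e' ▸ hch) (fun r hr => by have := hCr r hr; omega) hrl ha0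
  have hp1 := hp
  rw [e, List.pairwise_append] at hp1
  have hB : a (s+1) ≤ σ.getD (s+1) 0 := by
    obtain ⟨b, hb, hb1, hb2⟩ := hch (s+1) s1
    have hn : b ∉ C0 ++ [t] := fun h => s3 (s+1) (by omega) s1 b h ⟨hb1, hb2⟩
    rw [e] at hb
    simp only [List.mem_append, List.mem_cons] at hb
    rcases hb with hb | hb | hb
    · have := (hp1.2.2 b hb σ (by simp)).2 (s+1) (by omega)
      omega
    · subst hb; omega
    · exact absurd (by simpa using hb) hn
  have := LiftCh (C0 ++ [t]) Bs σ σ s (a (s+1)) s4 hB (by omega)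
    (fun r hr => by have := hCr r hr; omega) hp1.2.1 (e ▸ w) (List.Sublist.refl _)
    (List.pairwise_cons.1 hp1.2.1).1 (fun b hb => hp1.2.2 b hb σ (by simp)) hp1.1
  rw [← e] at this
  exact ⟨Bs, σ, _, e, hCne, hσ, this⟩

theorem findSome_top {α : Type*} (g : ℕ → Option α) (m : ℕ) : ∀ n, m ≤ n → (∀ j, m ≤ j → g j = none) →
    (List.range n).reverse.findSome? g = (List.range m).reverse.findSome? g := by
  intro n hn hg
  induction n, hn using Nat.le_induction with
  | base => rfl
  | succ n hn ih =>
    rw [List.range_succ, List.reverse_append]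
    simp [hg n hn, ih]

theorem yp_len {V : List (List ℕ)} (hp : V.Pairwise YP) {A B C D : List (List ℕ)} {x y : List ℕ}
    (h1 : V = A ++ x :: B) (h2 : V = C ++ y :: D) (hl : A.length ≤ C.length) :
    y.length ≤ x.length := by
  rcases Nat.eq_or_lt_of_le hl with hl | hl
  · have := List.append_inj (h1.symm.trans h2) hl
    simp at this; rw [this.2.1]
  · subst h1
    have h3 : y ∈ B := by
      have e := h2
      rw [List.append_eq_append_iff] at e
      rcases e with ⟨as, rfl, e⟩ | ⟨bs, rfl, e⟩
      · cases as with
        | nil => simp at hl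
        | cons a as => simp at e; rw [e.2]; simp
      · simp at hl
    have := (List.pairwise_append.1 hp).2.1
    exact ((List.pairwise_cons.1 this).1 y h3).1

theorem row_le {V A : List (List ℕ)} {τ : List ℕ} {f c : ℕ} (w : Wf V) (h : PreL V (A ++ [τ]))
    (hc : hd τ = c) (hf : F f (Pc (wordOf V)) (c - 1) = 0) : τ.length ≤ f := by
  by_contra hlt
  have := row_F h.wf f (by omega)
  rw [Pc_pre w h, hc] at this
  omega

theorem hd_top {V0 A : List (List ℕ)} {r τ : List ℕ} (h : PreL (V0 ++ [r]) (A ++ [τ])) :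
    hd τ = hd r := by
  have := h.h
  simp only [List.map_append] at this
  simpa using (List.append_inj' this rfl).2

theorem main (m : ℕ) : ∀ (fuel : ℕ) (V U : List (List ℕ)), V.length = m → m + 1 ≤ fuel →
    Wf (V ++ U) → V.Pairwise YP → Fins V U →
    Wf (liftCanonAux fuel (V ++ U)) ∧ Fins [] (liftCanonAux fuel (V ++ U)) := by
  induction m with
  | zero =>
    intro fuel V U hV hf w _ hF
    rw [List.length_eq_zero_iff] at hV
    subst hV
    obtain ⟨fuel, rfl⟩ : ∃ k, fuel = k + 1 := ⟨fuel - 1, by omega⟩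
    have : findMove ([] ++ U) = none := by
      unfold findMove
      rw [findSome_top _ 0 _ (by omega)]
      · rfl
      · intro j _
        simp only [Option.map_eq_none_iff, List.find?_eq_none]
        intro i _
        rw [noHigh w hF (by simp)]; simp
    simp only [liftCanonAux, this]
    exact ⟨w, hF⟩
  | succ m ih =>
    intro fuel V U hV hf w hp hF
    obtain ⟨V0, r, e⟩ : ∃ V0 r, V = V0 ++ [r] := by
      have hn : V ≠ [] := by rintro rfl; simp at hV
      exact ⟨V.dropLast, V.getLast hn, (List.dropLast_append_getLast hn).symm⟩
    have wV := w.left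
    have hl0 : V0.length = m := by rw [e] at hV; simpa using hV
    have hg : ∀ j, m + 1 ≤ j → ((List.range' 1 j).find? (fun i => faithfulSeq i j (V ++ U))).map
        (fun i => (i, j)) = none := by
      intro j hj
      simp only [Option.map_eq_none_iff, List.find?_eq_none]
      intro i _
      rw [noHigh w hF (by omega)]; simp
    have hfm : findMove (V ++ U) = (List.range (m+1)).reverse.findSome? (fun j =>
        ((List.range' 1 j).find? (fun i => faithfulSeq i j (V ++ U))).map (fun i => (i, j))) := by
      unfold findMove
      exact findSome_top _ (m+1) _ (by simp; omega) hg
    have FAf : ∀ Bs σ Cr, V = Bs ++ σ :: Cr → Cr ≠ [] → Faith (Bs.length+1) Cr.length V →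
        faithfulSeq (Bs.length+1) m (V ++ U) = true := by
      intro Bs σ Cr e1 hC h1
      have h2 := congrArg List.length e1
      have h3 := List.length_pos_iff.2 hC
      simp at h2
      rw [faithSeq_iff]
      refine ⟨by omega, ?_⟩
      rw [Faith.app wV (by omega), show m + 1 - (Bs.length+1) = Cr.length by omega]
      exact h1
    rcases hfi : (List.range' 1 m).find? (fun i => faithfulSeq i m (V ++ U)) with _ | i
    · have hnone := hfi
      simp only [List.find?_eq_none] at hnone
      have hfin : FinR V0 r := by
        by_contra hc
        unfold FinR at hc
        rw [← e] at hc
        obtain ⟨Bs, σ, Cr, e1, hC, _, h1, _⟩ := FA (N := r.length+1) e wV hp (by omega)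
          (Nat.one_le_iff_ne_zero.2 hc)
        have h2 := congrArg List.length e1
        have h3 := List.length_pos_iff.2 hC
        simp at h2
        exact hnone (Bs.length+1) (by simp; omega) (FAf Bs σ Cr e1 hC h1)
      have e2 : V ++ U = V0 ++ r :: U := by rw [e]; simp
      rw [e2]
      refine ih fuel V0 (r :: U) hl0 (by omega) (e2 ▸ w) ?_ ?_
      · rw [e] at hp; exact (List.pairwise_append.1 hp).1
      · intro X r' Y hX
        cases X with
        | nil =>
          simp at hX
          rw [← hX.1]; simpa using hfin
        | cons x X =>
          simp at hX
          have := hF X r' Y hX.2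
          rw [e] at this
          simpa [hX.1] using this
    · obtain ⟨fuel, rfl⟩ : ∃ k, fuel = k + 1 := ⟨fuel - 1, by omega⟩
      have hmove : findMove (V ++ U) = some (i, m) := by
        rw [hfm, List.range_succ, List.reverse_append]
        simp [hfi]
      rw [List.find?_range'_eq_some] at hfi
      obtain ⟨f1, f2, f3⟩ := hfi
      simp at f2
      rw [faithSeq_iff] at f1
      have hFi := (Faith.app wV (by omega)).1 f1.2
      -- the least vanishing index
      have hex : ∃ f, F f (Pc (wordOf V)) (hd r - 1) = 0 := ⟨_, F_short _ _ _ le_rfl⟩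
      classical
      obtain ⟨f, hf0, hfm1⟩ : ∃ f, F f (Pc (wordOf V)) (hd r - 1) = 0 ∧
          ∀ k < f, 1 ≤ F k (Pc (wordOf V)) (hd r - 1) :=
        ⟨Nat.find hex, Nat.find_spec hex, fun k hk => by have := Nat.find_min hex hk; omega⟩
      have hne := hFi 0 (by omega)
      simp only [Nat.add_zero, seqF_zero] at hne
      obtain ⟨A1, σ1, τ1, R, τ', σ', ff, e1, ei, hLP, e3, hlt⟩ := liftAt_ne hne
      have hl1 := congrArg List.length e1
      simp at hl1
      have hn1 : m + 1 - i = (τ1 :: R).length := by simp; omega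
      have hFi' := hFi
      rw [hn1, ei, e1] at hFi'
      obtain ⟨A', τ, g1, g2, g3⟩ := GrowTop _ _ _ hFi'
      have hpre := seqF_pre (A1.length+1) (τ1 :: R).length wV
      rw [e1] at hpre
      rw [g1, ← e1] at hpre
      have hrτ : r.length < τ.length := by
        have hn : τ1 :: R ≠ [] := by simp
        refine g3 (τ1 :: R).dropLast r ?_
        have hh := List.dropLast_append_getLast hn
        have h5 : (τ1 :: R).getLast hn = r := by
          have : (A1 ++ σ1 :: (τ1 :: R).dropLast) ++ [(τ1 :: R).getLast hn] = V0 ++ [r] := by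
            rw [← e, e1, List.append_assoc, List.cons_append, hh]
          simpa using (List.append_inj' this rfl).2
        rw [h5] at hh; exact hh.symm
      have hτf : τ.length ≤ f := row_le wV hpre (hd_top (e ▸ hpre)) hf0
      obtain ⟨Bs, σs, Cr, e4, hC, hσs, h1, A2, τ2, h2, h3, h4⟩ := FA (N := f) e wV hp (by omega)
        (hfm1 (f-1) (by omega))
      have hpre2 := seqF_pre (Bs.length+1) Cr.length wV
      rw [h2] at hpre2
      have hτ2f : τ2.length ≤ f := row_le wV hpre2 (hd_top (e ▸ hpre2)) hf0
      have hl4 := congrArg List.length e4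
      simp at hl4
      have hii : i = Bs.length + 1 := by
        rcases Nat.lt_trichotomy i (Bs.length+1) with hi | hi | hi
        · exfalso
          have h6 := yp_len hp (A := A1 ++ [σ1]) (x := τ1) (B := R) (by rw [e1]; simp) e4
            (by simp; omega)
          have hy : YP σ1 τ1 := by
            rw [e1] at hp
            exact (List.pairwise_cons.1 (List.pairwise_append.1 hp).2.1).1 τ1 (by simp)
          have := hLP.ylen hy
          omega
        · exact hi
        · have := f3 (Bs.length+1) (by omega) hi
          rw [FAf Bs σs Cr e4 hC h1] at this
          simp at this
      have hn2 : m + 1 - i = Cr.length := by omega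
      have hs : ∀ W, Wf (V ++ W) → seqF i (m+1-i) (V ++ W) = A2 ++ τ2 :: W := by
        intro W hW
        rw [seqF_app _ _ wV (by omega), hn2, hii, h2]; simp
      have hlA : A2.length = m := by
        have := hpre2.len
        simp at this; omega
      simp only [liftCanonAux, hmove]
      have hseq : liftSeq i m (V ++ U) = A2 ++ τ2 :: U := hs U w
      rw [hseq]
      have hpU := seqF_pre i (m+1-i) w
      rw [hs U w] at hpU
      refine ih fuel A2 (τ2 :: U) hlA (by omega) hpU.wf h4 ?_
      intro X r' Y hX
      cases X with
      | nil =>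
        simp at hX
        rw [← hX.1]
        unfold FinR
        simp only [List.append_nil]
        rw [Pc_pre wV hpre2, hd_top (e ▸ hpre2), show τ2.length = f by omega]
        exact hf0
      | cons x X =>
        simp at hX
        obtain ⟨rfl, hX⟩ := hX
        have h7 := hF X r' Y hX
        have w7 : Wf (V ++ (X ++ [r'])) := by
          rw [hX, show V ++ (X ++ r' :: Y) = (V ++ (X ++ [r'])) ++ Y by simp] at w
          exact w.left
        have h8 := seqF_pre i (m+1-i) w7
        rw [hs _ w7] at h8
        have h9 := Pc_pre w7 h8
        unfold FinR at h7 ⊢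
        rw [show A2 ++ τ2 :: X ++ [r'] = A2 ++ τ2 :: (X ++ [r']) by simp, h9]
        simpa using h7

theorem runs_ok : ∀ l : List ℕ, (∀ r ∈ runs l, r ≠ [] ∧ Srt r) ∧ (runs l).flatten = l := by
  intro l
  induction l with
  | nil => simp [runs, splitWhen]
  | cons a l ih =>
    cases l with
    | nil => simp [runs, splitWhen]
    | cons b l =>
      have e : runs (a :: b :: l) = match runs (b :: l) with
        | r :: rs => if decide (b ≤ a) then [a] :: r :: rs else (a :: r) :: rs
        | [] => [[a]] := rfl
      rw [e]
      generalize runs (b :: l) = R at ih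
      rcases R with _ | ⟨r, rs⟩
      · simp at ih
      · obtain ⟨h1, h2⟩ := ih
        have hr := h1 r (by simp)
        obtain ⟨b', r', rfl⟩ := List.exists_cons_of_ne_nil hr.1
        have hb : b' = b := by simp at h2; exact h2.1
        subst hb
        dsimp only
        split_ifs with hc
        · refine ⟨?_, ?_⟩
          · intro x hx
            rw [List.mem_cons] at hx
            rcases hx with rfl | hx
            · simp
            · exact h1 x hx
          · rw [List.flatten_cons, h2]; rfl
        · simp at hc
          refine ⟨?_, ?_⟩
          · intro x hx
            rw [List.mem_cons] at hx
            rcases hx with rfl | hx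
            · refine ⟨by simp, List.pairwise_cons.2 ⟨?_, hr.2⟩⟩
              intro y hy
              rw [List.mem_cons] at hy
              rcases hy with rfl | hy
              · exact hc
              · exact hc.trans ((List.pairwise_cons.1 hr.2).1 y hy)
            · exact h1 x (by simp [hx])
          · rw [List.flatten_cons] at h2 ⊢
            rw [List.cons_append, h2]

theorem runs_cons (w : List ℕ) : ∀ r : List ℕ, r ≠ [] → Srt r →
    (∀ b w', w = b :: w' → b ≤ hd r) → runs (r ++ w) = r :: runs w := by
  intro r
  induction r with
  | nil => simp
  | cons a r ih =>
    intro _ hs hb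
    cases r with
    | nil =>
      cases w with
      | nil => rfl
      | cons b w =>
        have e : runs (a :: b :: w) = match runs (b :: w) with
          | r :: rs => if decide (b ≤ a) then [a] :: r :: rs else (a :: r) :: rs
          | [] => [[a]] := rfl
        have h1 := (runs_ok (b :: w)).2
        rw [List.singleton_append, e]
        generalize runs (b :: w) = R at h1
        rcases R with _ | ⟨r, rs⟩
        · simp at h1
        · have := hb b w rfl
          simp [hd] at this
          simp [this]
    | cons b r =>
      have e : runs (a :: b :: (r ++ w)) = match runs (b :: (r ++ w)) with
        | r :: rs => if decide (b ≤ a) then [a] :: r :: rs else (a :: r) :: rs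
        | [] => [[a]] := rfl
      have hab : a < b := (List.pairwise_cons.1 hs).1 b (by simp)
      have hi := ih (by simp) (List.pairwise_cons.1 hs).2 (by
        intro c w' h; have := hb c w' h; simp [hd] at this ⊢; omega)
      rw [List.cons_append] at hi
      rw [List.cons_append, List.cons_append, e, hi]
      simp [hab]

theorem runs_wordOf (T : List (List ℕ)) (w : Wf T) : runs (wordOf T) = T.reverse := by
  induction T using List.reverseRecOn with
  | nil => rfl
  | append_singleton X r ih =>
    rw [wordOf_snoc, runs_cons _ r (w.ne r (by simp)) (w.srt r (by simp)), ih w.left]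
    · simp
    · intro b w' hb
      have hb' : b ∈ (wordOf X).head? := by rw [hb]; simp
      induction X using List.reverseRecOn with
      | nil => simp [wordOf] at hb
      | append_singleton X x _ =>
        rw [wordOf_snoc] at hb
        have hx := w.ne x (by simp)
        obtain ⟨c, x', rfl⟩ := List.exists_cons_of_ne_nil hx
        simp at hb
        have := w.inc
        rw [List.map_append, List.pairwise_append] at this
        have := this.2.2 (hd (c :: x')) (by simp) (hd r) (by simp)
        simp [hd] at this ⊢
        omega

def hatR : Option ℤ → List ℤ → List ℤ
  | _, [] => []
  | none, r :: L => r :: hatR (some r) L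
  | some p, r :: L => min r (p - 1) :: hatR (some (min r (p-1))) L

theorem hatR_foldl (f : List ℤ × Option ℤ → ℤ → List ℤ × Option ℤ)
    (h1 : ∀ acc r, f (acc, none) r = (acc ++ [r], some r))
    (h2 : ∀ acc p r, f (acc, some p) r = (acc ++ [min r (p-1)], some (min r (p-1)))) :
    ∀ (L : List ℤ) (acc : List ℤ) (p : Option ℤ), (L.foldl f (acc, p)).1 = acc ++ hatR p L := by
  intro L
  induction L with
  | nil => intro acc p; simp [hatR]
  | cons r L ih =>
    intro acc p
    cases p with
    | none => rw [List.foldl_cons, h1, ih]; simp [hatR]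
    | some p => rw [List.foldl_cons, h2, ih]; simp [hatR]

theorem hatMins_eq (L : List ℤ) : hatMins L = hatR none L := by
  unfold hatMins
  rw [hatR_foldl _ (fun _ _ => rfl) (fun _ _ _ => rfl)]
  simp

theorem hatR_len (L : List ℤ) : ∀ p, (hatR p L).length = L.length := by
  induction L with
  | nil => intro p; simp [hatR]
  | cons r L ih => intro p; cases p <;> simp [hatR, ih]

theorem hatR_lt (L : List ℤ) : ∀ p, ∀ x ∈ hatR (some p) L, x < p := by
  induction L with
  | nil => intro p; simp [hatR]
  | cons r L ih =>
    intro p x hx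
    simp only [hatR, List.mem_cons] at hx
    rcases hx with rfl | hx
    · have := min_le_right r (p-1); omega
    · have := ih _ x hx
      have := min_le_right r (p-1); omega

theorem hatR_pw (L : List ℤ) : ∀ p, (hatR p L).Pairwise (· > ·) := by
  induction L with
  | nil => intro p; simp [hatR]
  | cons r L ih =>
    intro p
    cases p <;> simp only [hatR, List.pairwise_cons] <;> exact ⟨hatR_lt _ _, ih _⟩

theorem hatR_id (L : List ℤ) : ∀ p : Option ℤ, L.Pairwise (· > ·) → (∀ q ∈ p, ∀ x ∈ L, x < q) →
    hatR p L = L := by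
  induction L with
  | nil => intro p _ _; simp [hatR]
  | cons r L ih =>
    intro p h hp
    have h1 := ih (some r) (List.pairwise_cons.1 h).2 (by
      intro q hq x hx; simp at hq; subst hq; exact (List.pairwise_cons.1 h).1 x hx)
    cases p with
    | none => simp [hatR, h1]
    | some p =>
      have := hp p (by simp) r (by simp)
      have e : min r (p-1) = r := min_eq_left (by omega)
      simp [hatR, e, h1]

def SS (k : ℤ) (Z : List (ℤ × ℕ)) : ℕ := (Z.map (fun q => if q.1 ≤ k then q.2 else 0)).sum
def UU (k : ℤ) (Z : List (ℤ × ℕ)) : ℕ := (Z.map (fun q => if k < q.1 then q.2 else 0)).sum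

theorem SS_UU (k : ℤ) (Z : List (ℤ × ℕ)) : SS k Z + UU k Z = (Z.map Prod.snd).sum := by
  induction Z with
  | nil => simp [SS, UU]
  | cons q Z ih =>
    simp only [SS, UU, List.map_cons, List.sum_cons] at ih ⊢
    split_ifs <;> omega

theorem UU_zero (k : ℤ) (Z : List (ℤ × ℕ)) (h : ∀ q ∈ Z, q.1 ≤ k) : UU k Z = 0 := by
  induction Z with
  | nil => rfl
  | cons q Z ih =>
    have h1 := h q (by simp)
    have h2 := ih (fun x hx => h x (by simp [hx]))
    simp only [UU, List.map_cons, List.sum_cons] at h2 ⊢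
    rw [h2, if_neg (by omega)]

def gv (Z : List (ℤ × ℕ)) (p : ℕ) : ℕ :=
  match Z.find? (fun q => decide (q.1 = (p : ℤ) + 1)) with
    | some q => q.2
    | none => 0

theorem gv_sum (Z : List (ℤ × ℕ)) (hp : (Z.map Prod.fst).Pairwise (· > ·)) (hpos : ∀ q ∈ Z, 1 ≤ q.1)
    (m : ℕ) : ∑ p ∈ Finset.range m, gv Z p = SS m Z := by
  induction Z with
  | nil => simp [gv, SS]
  | cons q Z ih =>
    rw [List.map_cons, List.pairwise_cons] at hp
    have h1 := ih hp.2 (fun x hx => hpos x (by simp [hx]))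
    have e : ∀ p, gv (q :: Z) p = (if q.1 = (p:ℤ)+1 then q.2 else 0) + gv Z p := by
      intro p
      by_cases hq : q.1 = (p:ℤ) + 1
      · have hz : gv Z p = 0 := by
          unfold gv
          rw [List.find?_eq_none.2]
          intro x hx
          have := hp.1 x.1 (List.mem_map_of_mem hx)
          simp; omega
        rw [hz, if_pos hq]
        simp [gv, hq]
      · rw [if_neg hq]
        simp [gv, hq]
    simp only [e, Finset.sum_add_distrib, h1]
    simp only [SS, List.map_cons, List.sum_cons]
    congr 1
    have hq1 := hpos q (by simp)
    have e2 : ∀ p : ℕ, (q.1 = (p:ℤ)+1) ↔ (p = (q.1 - 1).toNat) := by intro p; omega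
    simp only [e2]
    rw [Finset.sum_ite_eq' ]
    simp only [Finset.mem_range]
    congr 1
    simp only [eq_iff_iff]; omega

def Zof (ρ : List ℕ) : List (ℤ × ℕ) :=
  (hatMins ((runs ρ).map (fun r => ((r.headD 0 : ℕ) : ℤ)))).zip ((runs ρ).map List.length)

theorem range_take_sum (g : ℕ → ℕ) (n k : ℕ) :
    (((List.range n).map g).take k).sum = ∑ p ∈ Finset.range (min k n), g p := by
  rw [← List.map_take, List.take_range]
  generalize min k n = m
  induction m with
  | zero => simp
  | succ m ih => rw [List.range_succ, Finset.sum_range_succ]; simp [ih]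

theorem des_take {ρ e : List ℕ} (h : desWord ρ = some e) (k : ℕ) : (e.take k).sum = SS k (Zof ρ) := by
  unfold desWord desFromBlocks at h
  unfold Zof
  generalize hlens : (runs ρ).map List.length = lens at h ⊢
  generalize hmins : (runs ρ).map (fun r => ((r.headD 0 : ℕ) : ℤ)) = mins at h ⊢
  have hl : lens.length = mins.length := by rw [← hlens, ← hmins]; simp
  dsimp only at h
  rw [hatMins_eq] at h ⊢
  have hl2 := hatR_len mins none
  have hpw := hatR_pw mins none
  generalize hatR none mins = hs at h hl2 hpw ⊢
  split_ifs at h with h1 h2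
  · simp at h; subst h; subst h1; simp [SS]
  · simp at h; subst h
    obtain ⟨x, hs', rfl⟩ := List.exists_cons_of_ne_nil h1
    have hfst : ((x :: hs').zip lens).map Prod.fst = x :: hs' := by
      rw [List.map_fst_zip]; omega
    have hmem : ∀ q ∈ (x :: hs').zip lens, q.1 ∈ x :: hs' := by
      intro q hq; rw [← hfst]; exact List.mem_map_of_mem hq
    have hlast : ∀ y ∈ x :: hs', (x :: hs').getLastD 0 ≤ y := by
      intro y hy
      have hne : x :: hs' ≠ [] := by simp
      have e1 : (x :: hs').getLastD 0 = (x :: hs').getLast hne := by simp [List.getLastD_eq_getLast?, List.getLast?_eq_getLast_of_ne_nil hne]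
      rw [e1]
      have h3 := List.dropLast_append_getLast hne
      rw [← h3] at hpw hy
      rw [List.mem_append, List.mem_singleton] at hy
      rcases hy with hy | hy
      · exact ((List.pairwise_append.1 hpw).2.2 y hy _ (by simp)).le
      · rw [hy]
    have hpos : ∀ q ∈ (x :: hs').zip lens, 1 ≤ q.1 := by
      intro q hq; have := hlast _ (hmem q hq); omega
    have hle : ∀ q ∈ (x :: hs').zip lens, q.1 ≤ x := by
      intro q hq
      have := hmem q hq
      rw [List.mem_cons] at this
      rcases this with h | h
      · omega
      · exact ((List.pairwise_cons.1 hpw).1 _ h).le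
    have e2 : buildWeakComp (x :: hs') lens =
      (List.range x.toNat).map (gv ((x :: hs').zip lens)) := by
      unfold buildWeakComp
      have hb : ∀ l : List ℕ, (do let a ← l; pure (a : ℤ) : List ℤ) = l.map (fun a : ℕ => (a : ℤ)) := by
        intro l
        induction l with
        | nil => rfl
        | cons a l ih =>
          rw [List.map_cons, ← ih]; rfl
      rw [hb, List.map_map]
      apply List.map_congr_left
      intro p _
      rfl
    rw [e2, range_take_sum, gv_sum _ (by rw [hfst]; exact hpw) hpos]
    unfold SS
    congr 1
    apply List.map_congr_left
    intro q hq
    have := hpos q hq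
    have := hle q hq
    congr 1
    simp only [eq_iff_iff]
    have : ((min k x.toNat : ℕ) : ℤ) = min (k:ℤ) x := by
      rw [Nat.cast_min, Int.toNat_of_nonneg (by omega)]
    omega

theorem Z_total (ρ : List ℕ) : ((Zof ρ).map Prod.snd).sum = ρ.length := by
  unfold Zof
  rw [List.map_snd_zip]
  · conv_rhs => rw [← (runs_ok ρ).2, List.length_flatten]
  · rw [hatMins_eq, hatR_len]; simp

theorem split_UU (k : ℤ) : ∀ (R : List (List ℕ)) (p : Option ℤ), ∃ R1 R2, R = R1 ++ R2 ∧
    UU k ((hatR p (R.map (fun r => ((r.headD 0 : ℕ) : ℤ)))).zip (R.map List.length)) =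
      R1.flatten.length ∧ ∀ r ∈ R1, k < hd r := by
  intro R
  induction R with
  | nil => intro p; exact ⟨[], [], rfl, by simp [hatR, UU], by simp⟩
  | cons r R ih =>
    intro p
    obtain ⟨v, hv, e⟩ : ∃ v, v ≤ (hd r : ℤ) ∧ hatR p ((r :: R).map (fun r => ((r.headD 0 : ℕ) : ℤ)))
        = v :: hatR (some v) (R.map (fun r => ((r.headD 0 : ℕ) : ℤ))) := by
      cases p with
      | none => exact ⟨_, le_rfl, rfl⟩
      | some p => exact ⟨_, min_le_left _ _, rfl⟩
    rw [e, List.map_cons, List.zip_cons_cons]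
    by_cases hk : k < v
    · obtain ⟨R1, R2, h1, h2, h3⟩ := ih (some v)
      refine ⟨r :: R1, R2, by rw [h1]; rfl, ?_, ?_⟩
      · unfold UU at h2 ⊢
        rw [List.map_cons, List.sum_cons, h2]
        simp [hk]
      · intro x hx
        rw [List.mem_cons] at hx
        rcases hx with rfl | hx
        · omega
        · exact h3 x hx
    · refine ⟨[], r :: R, rfl, ?_, by simp⟩
      rw [UU_zero]; rfl
      intro q hq
      rw [List.mem_cons] at hq
      rcases hq with rfl | hq
      · simp; omega
      · have := hatR_lt _ _ _ (List.of_mem_zip (show (q.1, q.2) ∈ _ from hq)).1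
        omega

theorem upper {σ : List ℕ} (h : IsReducedWord σ) (k N : ℕ) (hN : σ.length ≤ N) :
    UU k (Zof σ) ≤ kap N (Pc σ) k := by
  unfold Zof
  rw [hatMins_eq]
  obtain ⟨R1, R2, h1, h2, h3⟩ := split_UU k (runs σ) none
  rw [h2]
  have e : σ = R1.flatten ++ R2.flatten := by
    rw [← List.flatten_append, ← h1, (runs_ok σ).2]
  rw [e] at h hN ⊢
  refine kap_lower _ _ k N h ?_ hN
  intro a ha
  rw [List.mem_flatten] at ha
  obtain ⟨r, hr, ha⟩ := ha
  have h4 := h3 r hr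
  have h5 := ((runs_ok σ).1 r (by rw [h1]; simp [hr])).2
  cases r with
  | nil => simp at ha
  | cons b r =>
    simp [hd] at h4
    rw [List.mem_cons] at ha
    rcases ha with rfl | ha
    · exact h4
    · exact h4.trans ((List.pairwise_cons.1 h5).1 a ha)

theorem Zof_wordOf {T : List (List ℕ)} (w : Wf T) :
    Zof (wordOf T) = T.reverse.map (fun r => ((hd r : ℤ), r.length)) := by
  unfold Zof
  rw [hatMins_eq, runs_wordOf T w, hatR_id]
  · rw [List.zip_map']
  · have := w.inc
    rw [List.pairwise_map] at this ⊢
    rw [List.pairwise_reverse]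
    refine this.imp ?_
    intro a b h
    simp only [hd] at h
    exact_mod_cast h
  · simp

theorem col0 {T : List (List ℕ)} (w : Wf T) :
    ∀ a, a ∈ (Pc (wordOf T)).getD 0 ∅ ↔ ∃ r ∈ T, hd r = a := by
  induction T using List.reverseRecOn with
  | nil => intro a; simp [wordOf, Pc, insW]
  | append_singleton X r ih =>
    have ih := ih w.left
    intro a
    obtain ⟨x, R, rfl⟩ := List.exists_cons_of_ne_nil (w.ne r (by simp))
    have hinc := w.inc
    rw [List.map_append, List.pairwise_append] at hinc
    rw [wordOf_snoc, Pc_append, insW_head R x _ (w.srt _ (by simp))]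
    · rw [Finset.mem_insert, ih]
      simp only [List.mem_append, List.mem_singleton]
      constructor
      · rintro (rfl | ⟨r, hr, rfl⟩)
        · exact ⟨a :: R, Or.inr rfl, rfl⟩
        · exact ⟨r, Or.inl hr, rfl⟩
      · rintro ⟨r, hr | rfl, rfl⟩
        · exact Or.inr ⟨r, hr, rfl⟩
        · exact Or.inl rfl
    · intro b hb
      obtain ⟨r, hr, rfl⟩ := (ih b).1 hb
      exact hinc.2.2 _ (List.mem_map_of_mem hr) (hd (x :: R)) (by simp)

theorem lower {T : List (List ℕ)} (w : Wf T) (hF : Fins [] T) (k N : ℕ) :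
    kap N (Pc (wordOf T)) k ≤ UU k (T.reverse.map (fun r => ((hd r : ℤ), r.length))) := by
  induction T using List.reverseRecOn with
  | nil => simp [wordOf, Pc, insW, kap, F_nil]
  | append_singleton X r ih =>
    obtain ⟨x, R, rfl⟩ := List.exists_cons_of_ne_nil (w.ne r (by simp))
    have ih := ih w.left (fun Y s Z h => hF Y s (Z ++ [x :: R]) (by rw [h]; simp))
    have hinc := w.inc
    rw [List.map_append, List.pairwise_append] at hinc
    by_cases hk : k < x
    · have h1 := hF X (x :: R) [] rfl
      have hr := w.red
      unfold FinR at h1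
      rw [List.nil_append, wordOf_snoc, Pc_append] at h1
      rw [wordOf_snoc] at hr ⊢
      have h2 := (row_lemma R x (Pc (wordOf X)) (w.srt _ (by simp)) (Pc_red hr)).2 h1 k hk N
      rw [Pc_append]
      refine h2.trans ?_
      rw [List.reverse_append, List.map_append]
      unfold UU at ih ⊢
      simp only [List.reverse_cons, List.reverse_nil, List.nil_append, List.map_cons, List.map_nil,
        List.map_append, List.sum_append, List.sum_cons, List.sum_nil]
      rw [if_pos (by simp [hd]; exact hk)]
      simp only [List.length_cons] at *
      omega
    · have h0 : kap N (Pc (wordOf (X ++ [x :: R]))) k = 0 := by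
        unfold kap
        apply Finset.sum_eq_zero
        intro j _
        have hc := col0 w
        generalize Pc (wordOf (X ++ [x :: R])) = P at hc
        cases P with
        | nil => exact F_nil _ _
        | cons A P =>
          have := F_le_cntT A P j k
          rw [cntT_zero] at this
          · omega
          · intro a ha
            obtain ⟨r, hr, rfl⟩ := (hc a).1 (by simpa using ha)
            rw [List.mem_append, List.mem_singleton] at hr
            rcases hr with hr | rfl
            · have := hinc.2.2 _ (List.mem_map_of_mem hr) (hd (x :: R)) (by simp)
              simp [hd] at this ⊢; omega
            · simp [hd]; omega
      omega

theorem final_yam {T : List (List ℕ)} (w : Wf T) (hF : Fins [] T) : IsYam (wordOf T) := by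
  refine ⟨w.red, ?_⟩
  have hd' : ∃ d, desWord (wordOf T) = some d := by
    unfold desWord desFromBlocks
    rw [hatMins_eq, runs_wordOf T w, hatR_id]
    · dsimp only
      split_ifs with h1 h2
      · exact ⟨_, rfl⟩
      · exfalso
        have : (T.reverse.map (fun r => ((r.headD 0 : ℕ) : ℤ))).getLastD 0 ∈
            T.reverse.map (fun r => ((r.headD 0 : ℕ) : ℤ)) := by
          rw [List.getLastD_eq_getLast?, List.getLast?_eq_getLast_of_ne_nil h1]
          exact List.getLast_mem h1
        rw [List.mem_map] at this
        obtain ⟨r, hr, e⟩ := this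
        rw [← e] at h2
        have := hd_pos w (List.mem_reverse.1 hr)
        unfold hd at this
        omega
      · exact ⟨_, rfl⟩
    · have := w.inc
      rw [List.pairwise_map] at this ⊢
      rw [List.pairwise_reverse]
      refine this.imp ?_
      intro a b h
      simp only [hd] at h
      exact_mod_cast h
    · simp
  obtain ⟨d, hd⟩ := hd'
  refine ⟨d, hd, ?_⟩
  intro σ e hc he k
  have hK := hc.toK w.red
  rw [des_take hd, des_take he]
  have h1 := SS_UU k (Zof σ)
  have h2 := SS_UU k (Zof (wordOf T))
  rw [Z_total] at h1 h2
  have h3 := hK.inv.2.1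
  have h4 := upper (hK.red w.red) k σ.length le_rfl
  rw [← Pc_K hK w.red] at h4
  have h5 := lower w hF k σ.length
  rw [← Zof_wordOf w] at h5
  omega

theorem YP_trans {a b c : List ℕ} (h1 : YP a b) (h2 : YP b c) : YP a c :=
  ⟨h2.1.trans h1.1, fun j hj => (h1.2 j (by have := h2.1; omega)).trans (h2.2 j hj)⟩

instance : Trans YP YP YP := ⟨YP_trans⟩

theorem start_wf {ρ : List ℕ} (h : IsReducedWord ρ) (hinc : IsIncreasingYoungRows (rowsOf ρ)) :
    Wf (rowsOf ρ) ∧ (rowsOf ρ).Pairwise YP := by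
  have hp : (rowsOf ρ).Pairwise YP := List.isChain_iff_pairwise.1 hinc.2
  have hok := runs_ok ρ
  have hne : ∀ r ∈ rowsOf ρ, r ≠ [] := fun r hr => (hok.1 r (by simpa [rowsOf] using hr)).1
  refine ⟨⟨hne, fun r hr => (hok.1 r (by simpa [rowsOf] using hr)).2, ?_, ?_⟩, hp⟩
  · rw [List.pairwise_map]
    refine hp.imp_of_mem ?_
    intro a b ha hb hab
    have := hab.2 0 (List.length_pos_iff.2 (hne b hb))
    rwa [hd_getD, hd_getD] at this
  · have : wordOf (rowsOf ρ) = ρ := by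
      unfold wordOf rowsOf; rw [List.reverse_reverse]; exact hok.2
    rw [this]; exact h

theorem lift_fin (ρ : List ℕ) (h : IsReducedWord ρ)
    (hinc : IsIncreasingYoungRows (rowsOf ρ)) : IsYam (liftWord ρ) := by
  obtain ⟨w, hp⟩ := start_wf h hinc
  unfold liftWord liftCanon
  generalize rowsOf ρ = V at *
  have hfl : V.length ≤ V.flatten.length := by
    have hn := w.ne
    clear * - hn
    induction V with
    | nil => simp
    | cons v V ih =>
      have := List.length_pos_iff.2 (hn v (by simp))
      have := ih (fun r hr => hn r (by simp [hr]))
      rw [List.flatten_cons, List.length_append, List.length_cons]; omega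
  have hm := main V.length (V.flatten.length * V.length + 1) V [] rfl
    (by
      have : V.length ≤ V.flatten.length * V.length := by
        rcases Nat.eq_zero_or_pos V.length with h0 | h0
        · omega
        · exact Nat.le_mul_of_pos_left _ (by omega)
      omega)
    (by simpa using w) hp (by intro X r Y h; simp at h)
  rw [List.append_nil] at hm
  exact final_yam hm.1 hm.2

/-- For `ρ` a reduced word whose descent tableau `𝔻(ρ)` is an
increasing Young tableau, the reduced word `lift(ρ)` obtained by the canonical
lifting algorithm is Yamanouchi. -/
theorem lift_is_yamanouchi (ρ : List ℕ) (h : IsReducedWord ρ)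
    (hinc : IsIncreasingYoungRows (rowsOf ρ)) :
    IsYam (liftWord ρ) :=
  lift_fin ρ h hinc

end EG
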